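/- Let G be a finite group of odd order and let p be an odd prime with p ≡ 2 (mod 3) such that (p-1)/2 is odd. If acd_{ℚ(ζ_p)}(G) < 3p²/(p²+2), then G is p-nilpotent. -/

import Mathlib

/-!
Let `I` be the set of irreducible characters of `G` with values in `ℚ(ζ_p)`, where `|G|` is odd.

*Counting.* Choose `m` congruent to `1 + p` modulo the `p`-part of `p |G|` and to `-1` modulo its
`p'`-part. A parity argument based on the involution `g ↦ g ^ s`, `s` a suitable power of `m`, shows
that `χ ∈ I` if and only if `χ (g ^ m) = χ g` for all `g` (`irrK_fix`, `irrK_of_fix`). By column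
orthogonality `|I|` equals the number `rcl` of classes of `p`-elements `g` that are conjugate to
`g ^ (1 + p)` (`card_irrK`). The linear members of `I` are the homomorphisms `G → μ_p`; their number
is `lin` (`card_lin`). All irreducible degrees are odd (`irr_deg`), and `rcl / lin` does not increase
under quotients (`ratio`).

*Degree three.* If `I` contains a character of degree `3`, pass to the quotient where it is faithful.
As `3 < p`, a Sylow `p`-subgroup `P` is elementary abelian and `N(P) / C(P)` has order `3`. Since
`p ≡ 2` modulo `3`, the fixed points of this action have index at least `p²` in `P`, and counting
orbits gives `(p² + 2) lin ≤ 3 rcl` (`deg_three_case`).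

*No degree three.* If `G` is not `p`-nilpotent, then `2 lin ≤ rcl` (`claimC`), by induction on `|G|`.
The normalizer of a characteristic subgroup `WW P` of `P`, of Glauberman–Solomon type, controls
`p`-fusion (`fc`). This rests on the `p`-stability of groups of odd order (`pstable`), which comes
from the Baer–Suzuki theorem and an analysis of groups generated by two quadratic elements (`quad`).
If the normalizer is proper, induction applies to it. Otherwise `WW P` contains a minimal normal
subgroup `V` of `G`; either the inductive hypothesis for `G / V` suffices, or `V` has a complement
(`exists_complement`) and every rational class of the complement gives two of `G` (`rcl_double`).

*Conclusion.* In the first case all nonlinear degrees in `I` are at least `3`, in the second at least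
`5`; either way the average is at least `3p² / (p² + 2)` (`acd_bound`).
-/

/-- The set of irreducible complex characters of `G`. -/
noncomputable def Irr (G : Type) [Group G] : Set (G → ℂ) :=
  {χ | ∃ V : FDRep ℂ G, CategoryTheory.Simple V ∧ χ = FDRep.character V}

/-- A group `G` has a normal `p`-complement: a normal subgroup of order coprime
to `p` whose index is a power of `p`. -/
def HasNormalPComplement (G : Type) [Group G] (p : ℕ) : Prop :=
  ∃ N : Subgroup G, N.Normal ∧ Nat.Coprime (Nat.card N) p ∧ ∃ n : ℕ, N.index = p ^ n

/-- The irreducible complex characters of `G` all of whose values lie in `k`. -/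
noncomputable def IrrK (G : Type) [Group G] (k : Subfield ℂ) : Set (G → ℂ) :=
  {χ ∈ Irr G | ∀ g, χ g ∈ k}

/-- The average of the degrees of the `k`-valued irreducible characters of `G`. -/
noncomputable def acdK (G : Type) [Group G] (k : Subfield ℂ) : ℝ :=
  (∑ᶠ χ ∈ IrrK G k, (χ 1).re) / (Nat.card (IrrK G k))

/-- The subfield `ℚ(ζ_p)` of `ℂ` generated by the `p`-th roots of unity. -/
noncomputable def Qzeta (p : ℕ) : Subfield ℂ :=
  Subfield.closure {z : ℂ | z ^ p = 1}

/-! ### `O_p(G)` and the Baer–Suzuki theorem -/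

namespace Acd
open Subgroup
open scoped Pointwise

/-- The largest normal `p`-subgroup `O_p(G)`, as the intersection of all Sylow `p`-subgroups. -/
def pCore (p : ℕ) (G : Type) [Group G] : Subgroup G := ⨅ P : Sylow p G, (P : Subgroup G)

section
variable {G : Type} [Group G] {p : ℕ}

lemma mem_sylow_conj (P : Sylow p G) (g x : G) : x ∈ (g • P : Sylow p G) ↔ g⁻¹ * x * g ∈ P := by
  rw [Sylow.smul_def]
  change x ∈ (MulAut.conj g • (P : Subgroup G)) ↔ _
  rw [Subgroup.mem_pointwise_smul_iff_inv_smul_mem]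
  simp only [← map_inv, MulAut.smul_def, MulAut.conj_apply, inv_inv]
  rfl

instance pCore_normal : (pCore p G).Normal := by
  constructor
  intro n hn g
  simp only [pCore, Subgroup.mem_iInf] at hn ⊢
  intro P
  have := (mem_sylow_conj P g⁻¹ n).1 (hn _)
  simp only [inv_inv] at this
  exact this

lemma pCore_le (P : Sylow p G) : pCore p G ≤ P := iInf_le _ P

lemma pCore_isPGroup : IsPGroup p (pCore p G) := by
  obtain ⟨P⟩ : Nonempty (Sylow p G) := inferInstance
  exact P.2.to_le (pCore_le P)

variable [Finite G]

lemma mem_norm_iff {H : Subgroup G} {a : G} :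
    a ∈ normalizer (H : Set G) ↔ ∀ h ∈ H, a * h * a⁻¹ ∈ H :=
  ⟨fun ha h hh => (mem_normalizer_iff.1 ha h).1 hh, fun h => mem_normalizer_fintype h⟩

variable [Fact p.Prime]

lemma le_pCore {N : Subgroup G} [hN : N.Normal] (h : IsPGroup p N) : N ≤ pCore p G := by
  refine le_iInf fun P => ?_
  obtain ⟨Q, hQ⟩ := h.exists_le_sylow
  obtain ⟨g, rfl⟩ := MulAction.exists_smul_eq G Q P
  intro x hx
  refine (mem_sylow_conj Q g x).2 ?_
  have := hQ (hN.conj_mem x hx g⁻¹)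
  simp only [inv_inv] at this
  exact this

/-- Let `C` be closed under conjugation and let `D ⊆ P` be such that `⟨D⟩ ∩ C = D`, where `P` is a
`p`-group. If `D` misses part of `P ∩ C`, then some element of `P ∩ C` outside `D` normalizes `D`,
because normalizers grow in `P`. -/
lemma exists_normalizing {P : Subgroup G} (hP : IsPGroup p P) {C : Set G}
    (hC : ∀ x ∈ C, ∀ g, g * x * g⁻¹ ∈ C) {D : Set G} (hDP : D ⊆ P)
    (hD : (closure D : Set G) ∩ C = D) (hne : ¬ ((P : Set G) ∩ C ⊆ D)) :
    ∃ a ∈ P, a ∈ C ∧ a ∉ D ∧ ∀ d ∈ D, a * d * a⁻¹ ∈ D := by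
  -- `E` maximal among subgroups of `P` meeting `C` in `D`
  have hfin : {E : Subgroup G | E ≤ P ∧ (E : Set G) ∩ C = D}.Finite := Set.toFinite _
  obtain ⟨E, ⟨hE1, hE2⟩, hEmax⟩ := hfin.exists_maximal ⟨closure D, (closure_le P).2 hDP, hD⟩
  have hEP : E < P := lt_of_le_of_ne hE1 (by rintro rfl; exact hne hE2.le)
  have hnil : Group.IsNilpotent P := hP.isNilpotent
  have hlt := Group.normalizerCondition_of_isNilpotent (G := P) (E.subgroupOf P)
    (lt_top_iff_ne_top.2 (by rw [Ne, subgroupOf_eq_top]; exact hEP.not_ge))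
  obtain ⟨n, hn, hnE⟩ := SetLike.exists_of_lt hlt
  set E2 := (normalizer (E.subgroupOf P : Set P)).map P.subtype with hE2d
  have hnorm : ∀ a ∈ E2, a ∈ P ∧ ∀ x ∈ E, a * x * a⁻¹ ∈ E := by
    rintro _ ⟨a, ha, rfl⟩
    refine ⟨a.2, fun x hx => ?_⟩
    have := (mem_normalizer_iff.1 ha ⟨x, hE1 hx⟩).1 (by simpa [mem_subgroupOf] using hx)
    simpa [mem_subgroupOf] using this
  have hEE2 : E ≤ E2 := by
    intro x hx
    exact ⟨⟨x, hE1 hx⟩, le_normalizer (by simpa [mem_subgroupOf] using hx), rfl⟩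
  have hne2 : ¬ (((E2 : Set G)) ∩ C = D) := by
    intro h
    have := hEmax (y := E2) ⟨fun a ha => (hnorm a ha).1, h⟩ hEE2
    exact hnE (by simpa [mem_subgroupOf] using this ⟨n, hn, rfl⟩)
  have hsub : D ⊆ (E2 : Set G) ∩ C := by
    rw [← hE2]; exact Set.inter_subset_inter_left _ hEE2
  obtain ⟨a, ⟨ha, haC⟩, haD⟩ := Set.not_subset.1 (fun h => hne2 (h.antisymm hsub))
  refine ⟨a, (hnorm a ha).1, haC, haD, fun d hd => ?_⟩
  rw [← hE2] at hd ⊢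
  exact ⟨(hnorm a ha).2 d hd.1, hC d hd.2 a⟩

/-- The Baer–Suzuki theorem: `x ∈ O_p(G)` as soon as `x` generates a `p`-group together with each of
its conjugates. -/
theorem baer_suzuki (x : G) (h : ∀ g : G, IsPGroup p (closure {x, g * x * g⁻¹})) :
    x ∈ pCore p G := by
  classical
  set C : Set G := {y | ∃ g, g * x * g⁻¹ = y} with hCd
  have hC : ∀ x ∈ C, ∀ g, g * x * g⁻¹ ∈ C := by
    rintro _ ⟨k, rfl⟩ g
    exact ⟨g * k, by group⟩
  have hxC : x ∈ C := ⟨1, by simp⟩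
  have hpair : ∀ a ∈ C, ∀ b ∈ C, IsPGroup p (closure {a, b}) := by
    rintro _ ⟨g, rfl⟩ _ ⟨k, rfl⟩
    have h1 := (h (g⁻¹ * k)).map (MulAut.conj g).toMonoidHom
    rw [MonoidHom.map_closure, Set.image_pair] at h1
    convert h1 using 4 <;> simp [mul_assoc]
  by_cases hall : ∀ P Q : Sylow p G, (P : Set G) ∩ C = (Q : Set G) ∩ C
  · obtain ⟨P, hP⟩ := (IsPGroup.to_le (hpair x hxC x hxC) (by simp) :
      IsPGroup p (closure {x})).exists_le_sylow
    simp only [pCore, Subgroup.mem_iInf]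
    intro Q
    have : x ∈ (P : Set G) ∩ C := ⟨hP (subset_closure rfl), hxC⟩
    rw [hall P Q] at this
    exact this.1
  exfalso
  push Not at hall
  obtain ⟨P0, Q0, h0⟩ := hall
  have hfin : {PQ : Sylow p G × Sylow p G | (PQ.1 : Set G) ∩ C ≠ (PQ.2 : Set G) ∩ C}.Finite :=
    Set.toFinite _
  obtain ⟨⟨P, Q⟩, hPQ, hmax⟩ := hfin.exists_maximalFor
    (fun PQ => ((PQ.1 : Set G) ∩ (PQ.2 : Set G) ∩ C).ncard) _ ⟨⟨P0, Q0⟩, h0⟩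
  simp only [Set.mem_ofPred_eq] at hPQ hmax
  have hcard : ∀ P Q : Sylow p G, ((P : Set G) ∩ C).ncard = ((Q : Set G) ∩ C).ncard := by
    intro P Q
    obtain ⟨g, rfl⟩ := MulAction.exists_smul_eq G P Q
    rw [← Set.ncard_image_of_injective _ (MulAut.conj g).injective]
    congr 1
    ext y
    constructor
    · rintro ⟨z, ⟨hz, hzC⟩, rfl⟩
      refine ⟨(mem_sylow_conj P g _).2 ?_, by simpa using hC z hzC g⟩
      simpa [mul_assoc] using hz
    · rintro ⟨hy, hyC⟩
      refine ⟨g⁻¹ * y * g, ⟨(mem_sylow_conj P g _).1 hy, by simpa using hC y hyC g⁻¹⟩, by simp [mul_assoc]⟩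
  set D : Set G := (P : Set G) ∩ (Q : Set G) ∩ C with hDd
  have hDcl : (closure D : Set G) ∩ C = D := by
    apply Set.Subset.antisymm
    · rintro y ⟨hy, hyC⟩
      have h1 : closure D ≤ (P : Subgroup G) ⊓ Q :=
        (closure_le _).2 (fun z (hz : z ∈ D) => mem_inf.2 ⟨hz.1.1, hz.1.2⟩)
      have h2 := h1 hy
      exact ⟨⟨h2.1, h2.2⟩, hyC⟩
    · intro y hy
      exact ⟨subset_closure hy, hy.2⟩
  have key : ∀ P Q : Sylow p G, (P : Set G) ∩ C ≠ (Q : Set G) ∩ C →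
      ¬ ((P : Set G) ∩ C ⊆ (P : Set G) ∩ (Q : Set G) ∩ C) := by
    intro P Q hPQ hsub
    apply hPQ
    exact Set.eq_of_subset_of_ncard_le (fun y (hy : y ∈ (P : Set G) ∩ C) => ⟨(hsub hy).1.2, hy.2⟩)
      (hcard _ _).ge
  obtain ⟨a, haP, haC, haD, hanorm⟩ := exists_normalizing P.2 hC
    (fun z hz => hz.1.1) hDcl (key P Q hPQ)
  have hDQ : ¬ ((Q : Set G) ∩ C ⊆ D) := by
    have := key Q P hPQ.symm
    rwa [Set.inter_comm (Q : Set G) P] at this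
  obtain ⟨b, hbQ, hbC, hbD, hbnorm⟩ := exists_normalizing Q.2 hC
    (fun z hz => hz.1.2) hDcl hDQ
  have hDP : IsPGroup p (closure D) := P.2.to_le ((closure_le _).2 (fun z hz => hz.1.1))
  have hinv : ∀ a : G, (∀ d ∈ D, a * d * a⁻¹ ∈ D) → a ∈ normalizer (closure D : Set G) := by
    intro a ha
    have hle : closure D ≤ (closure D).comap (MulAut.conj a).toMonoidHom := by
      rw [closure_le]
      intro d hd
      exact subset_closure (by simpa using ha d hd)
    exact mem_normalizer_fintype fun d hd => by simpa using hle hd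
  have hpg : IsPGroup p (closure {a, b} ⊔ closure D : Subgroup G) := by
    refine (hpair a haC b hbC).to_sup_of_normal_right' hDP ?_
    rw [closure_le]
    rintro y (rfl | rfl)
    · exact hinv _ hanorm
    · exact hinv _ hbnorm
  obtain ⟨R, hR⟩ := hpg.exists_le_sylow
  have haR : a ∈ R := hR (mem_sup_left (subset_closure (by simp)))
  have hbR : b ∈ R := hR (mem_sup_left (subset_closure (by simp)))
  have hDR : ∀ d ∈ D, d ∈ R := fun d hd => hR (mem_sup_right (subset_closure hd))
  have step : ∀ (P' : Sylow p G) (c : G), c ∈ P' → c ∈ C → c ∉ D → c ∈ R → (∀ d ∈ D, d ∈ P') →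
      (P' : Set G) ∩ C = (R : Set G) ∩ C := by
    intro P' c hcP hcC hcD hcR hDP'
    by_contra hne
    have h1 : D ⊂ (P' : Set G) ∩ (R : Set G) ∩ C := by
      refine ⟨fun d hd => ⟨⟨hDP' d hd, hDR d hd⟩, hd.2⟩, fun hsub => hcD (hsub ⟨⟨hcP, hcR⟩, hcC⟩)⟩
    have h2 := Set.ncard_lt_ncard h1
    have h3 := @hmax ⟨P', R⟩ hne h2.le
    exact absurd h2 (not_lt.2 h3)
  apply hPQ
  rw [step P a haP haC haD haR (fun d hd => hd.1.1), step Q b hbQ hbC hbD hbR (fun d hd => hd.1.2)]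
end
end Acd

/-! ### Quadratic action: the irreducible linear case -/

namespace Acd
open Subgroup
open scoped Pointwise

lemma odd_fixedPoints {β : Type} [Finite β] (h : β → β) (hh : ∀ x, h (h x) = x)
    (ho : Odd (Nat.card β)) : Odd (Nat.card (Function.fixedPoints h)) := by
  classical
  have := Fintype.ofFinite β
  let h' : Function.End β := h
  have h1 : h' ^ 2 ^ 1 = 1 := by
    rw [pow_one, pow_two]; funext x; exact hh x
  have : Fact (Nat.Prime 2) := ⟨Nat.prime_two⟩
  have := Equiv.Perm.card_fixedPoints_modEq (p := 2) (n := 1) h1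
  rw [← Nat.card_eq_fintype_card, ← Nat.card_eq_fintype_card] at this
  have h2 : Nat.card β % 2 = Nat.card (Function.fixedPoints h) % 2 := this
  rw [Nat.odd_iff] at ho ⊢
  omega

/-- Two commuting involutive permutations of a set of odd size have a common fixed point. -/
lemma exists_common_fixed {α : Type} [Finite α] (f g : Equiv.Perm α) (hf : f * f = 1)
    (hg : g * g = 1) (hfg : f * g = g * f) (hodd : Odd (Nat.card α)) :
    ∃ x, f x = x ∧ g x = x := by
  have hff : ∀ x, f (f x) = x := fun x => by rw [← Equiv.Perm.mul_apply, hf]; rfl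
  have hgg : ∀ x, g (g x) = x := fun x => by rw [← Equiv.Perm.mul_apply, hg]; rfl
  have hc : ∀ x, f (g x) = g (f x) := fun x => by
    rw [← Equiv.Perm.mul_apply, hfg]; rfl
  have h1 := odd_fixedPoints f hff hodd
  let g' : Function.fixedPoints f → Function.fixedPoints f := fun x =>
    ⟨g x, by
      have h3 : f x = x := x.2
      change f (g x) = g x
      rw [hc, h3]⟩
  have h2 := odd_fixedPoints g' (fun x => Subtype.ext (hgg x)) h1
  obtain ⟨⟨x, hx⟩⟩ := (Nat.card_pos_iff.1 h2.pos).1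
  exact ⟨x, x.2, congrArg Subtype.val hx⟩

section
variable {E : Type} [AddCommGroup E] [Finite E] {p : ℕ} [hp : Fact p.Prime]

/-- Two elements `1 + a` and `1 + b` with `a² = b² = 0` and `c = ab + ba` invertible cannot generate
a group `Γ` of odd order acting irreducibly. Indeed `δ = (ab - ba)c⁻¹` and `w = a + b` satisfy
`δ² = 1`, `w² = c`, and conjugation by them induces commuting involutions on the set of Sylow
`p`-subgroups of `Γ`, which has odd size. The vectors fixed by a common fixed point of these
involutions form a nonzero subspace invariant under `δ` and `w`, hence under `2a = (1 + δ)w` and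
`2b = (1 - δ)w`; it is therefore everything, and that Sylow subgroup is trivial although `1 + a`
has order `p`. -/
lemma quad_lin_aux (a b : AddMonoid.End E) (X Y : (AddMonoid.End E)ˣ) (hX : (X : AddMonoid.End E) = 1 + a)
    (hY : (Y : AddMonoid.End E) = 1 + b) (ha : a * a = 0) (hb : b * b = 0) (hp2 : p ≠ 2)
    (hE : ∀ v : E, p • v = 0) [Nontrivial E]
    (hfin : Finite (closure {X, Y})) (hodd : Odd (Nat.card (closure {X, Y})))
    (hirr : ∀ U : AddSubgroup E, (∀ u ∈ U, a u ∈ U) → (∀ u ∈ U, b u ∈ U) → U = ⊥ ∨ U = ⊤)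
    (c : (AddMonoid.End E)ˣ) (hc : (c : AddMonoid.End E) = a * b + b * a) : False := by
  classical
  set d : AddMonoid.End E := ((c⁻¹ : (AddMonoid.End E)ˣ) : AddMonoid.End E) with hd
  have hcd : (a * b + b * a) * d = 1 := by rw [← hc, hd]; simp
  have hdc : d * (a * b + b * a) = 1 := by rw [← hc, hd]; simp
  have hca : Commute (c : AddMonoid.End E) a := by
    rw [hc, Commute, SemiconjBy, add_mul, mul_add, mul_assoc b, ha, ← mul_assoc a a, ha]; simp [mul_assoc]
  have hcb : Commute (c : AddMonoid.End E) b := by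
    rw [hc, Commute, SemiconjBy, add_mul, mul_add, mul_assoc a, hb, ← mul_assoc b b, hb]; simp [mul_assoc]
  have hda : d * a = a * d := (Commute.units_inv_left hca).eq
  have hdb : d * b = b * d := (Commute.units_inv_left hcb).eq
  set δ0 : AddMonoid.End E := (a * b - b * a) * d with hδ0
  set w0 : AddMonoid.End E := a + b with hw0
  have haba : a * b * a = (a * b + b * a) * a := by rw [add_mul, mul_assoc b, ha]; simp
  have hδδ : δ0 * δ0 = 1 := by
    have h1 : δ0 * δ0 = (a * b - b * a) * (a * b - b * a) * (d * d) := by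
      have : d * (a * b - b * a) = (a * b - b * a) * d := by
        rw [mul_sub, sub_mul, ← mul_assoc d, hda, mul_assoc a, hdb, ← mul_assoc d b, hdb, mul_assoc b d, hda]
        simp [mul_assoc]
      rw [hδ0, mul_assoc _ d, ← mul_assoc d, this]; simp [mul_assoc]
    have h2 : (a * b - b * a) * (a * b - b * a) = (a * b + b * a) * (a * b + b * a) := by
      have e1 : a * b * (b * a) = 0 := by rw [mul_assoc, ← mul_assoc b, hb]; simp
      have e2 : b * a * (a * b) = 0 := by rw [mul_assoc, ← mul_assoc a, ha]; simp
      simp only [mul_sub, sub_mul, mul_add, add_mul, e1, e2]; abel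
    rw [h1, h2, mul_assoc, ← mul_assoc _ d d, hcd, one_mul, hcd]
  have hww : w0 * w0 = c := by
    rw [hc, hw0]; simp only [mul_add, add_mul, ha, hb]; abel
  have hδa : δ0 * a = - (a * δ0) := by
    rw [hδ0, mul_assoc, hda, ← mul_assoc, sub_mul, mul_assoc b, ha, ← mul_assoc a, mul_sub,
      ← mul_assoc a a, ha]
    simp [mul_assoc]
  have hδb : δ0 * b = - (b * δ0) := by
    rw [hδ0, mul_assoc, hdb, ← mul_assoc, sub_mul, mul_assoc a, hb, ← mul_assoc b, mul_sub,
      ← mul_assoc b b, hb]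
    simp [mul_assoc]
  have hwa : w0 * a = b * w0 := by rw [hw0]; simp [mul_add, add_mul, ha, hb]
  have hwb : w0 * b = a * w0 := by rw [hw0]; simp [mul_add, add_mul, ha, hb]
  have hδw : δ0 * w0 = - (w0 * δ0) := by rw [hw0, mul_add, hδa, hδb, add_mul]; abel
  have hwd : w0 * d = d * w0 := by rw [hw0, add_mul, mul_add, hda, hdb]
  have hwdw : w0 * (w0 * d) = 1 := by rw [← mul_assoc, hww, hd]; simp
  have hwdw' : w0 * d * w0 = 1 := by rw [hwd, mul_assoc, hww, hd]; simp
  let δ : (AddMonoid.End E)ˣ := ⟨δ0, δ0, hδδ, hδδ⟩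
  let w : (AddMonoid.End E)ˣ := ⟨w0, w0 * d, hwdw, hwdw'⟩
  have hXi : ((X⁻¹ : (AddMonoid.End E)ˣ) : AddMonoid.End E) = 1 - a :=
    Units.inv_eq_of_mul_eq_one_right (by rw [hX]; simp [mul_sub, add_mul, ha])
  have hYi : ((Y⁻¹ : (AddMonoid.End E)ˣ) : AddMonoid.End E) = 1 - b :=
    Units.inv_eq_of_mul_eq_one_right (by rw [hY]; simp [mul_sub, add_mul, hb])
  have hδX : δ * X * δ⁻¹ = X⁻¹ := by
    rw [mul_inv_eq_iff_eq_mul]; ext1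
    rw [Units.val_mul, Units.val_mul, hXi, hX]; change δ0 * _ = _ * δ0
    rw [mul_add, hδa, sub_mul]; simp [sub_eq_add_neg]
  have hδY : δ * Y * δ⁻¹ = Y⁻¹ := by
    rw [mul_inv_eq_iff_eq_mul]; ext1
    rw [Units.val_mul, Units.val_mul, hYi, hY]; change δ0 * _ = _ * δ0
    rw [mul_add, hδb, sub_mul]; simp [sub_eq_add_neg]
  have hwX : w * X * w⁻¹ = Y := by
    rw [mul_inv_eq_iff_eq_mul]; ext1
    rw [Units.val_mul, Units.val_mul, hY, hX]; change w0 * _ = _ * w0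
    rw [mul_add, hwa, add_mul (1 : AddMonoid.End E) b, one_mul, mul_one]
  have hwY : w * Y * w⁻¹ = X := by
    rw [mul_inv_eq_iff_eq_mul]; ext1
    rw [Units.val_mul, Units.val_mul, hY, hX]; change w0 * _ = _ * w0
    rw [mul_add, hwb, add_mul (1 : AddMonoid.End E) a, one_mul, mul_one]
  set Γ := closure {X, Y} with hΓ
  have hXΓ : X ∈ Γ := subset_closure (by simp)
  have hYΓ : Y ∈ Γ := subset_closure (by simp)
  have key : ∀ u : (AddMonoid.End E)ˣ, u * X * u⁻¹ ∈ Γ → u * Y * u⁻¹ ∈ Γ →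
      ∀ g ∈ Γ, u * g * u⁻¹ ∈ Γ := by
    intro u h1 h2
    have : Γ ≤ Γ.comap (MulAut.conj u).toMonoidHom := by
      rw [hΓ, closure_le]
      rintro x (rfl | rfl)
      · exact h1
      · exact h2
    intro g hg; exact this hg
  have hδn : δ ∈ normalizer (Γ : Set (AddMonoid.End E)ˣ) := by
    have h := key δ (by rw [hδX]; exact Γ.inv_mem hXΓ) (by rw [hδY]; exact Γ.inv_mem hYΓ)
    rw [mem_normalizer_iff]
    refine fun g => ⟨h g, fun hg => ?_⟩
    have h3 : δ⁻¹ = δ := rfl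
    have := h _ hg
    rw [h3] at this
    have h4 : δ * δ = 1 := Units.ext hδδ
    have h5 : δ * (δ * g * δ) * δ = (δ * δ) * g * (δ * δ) := by group
    rw [h5, h4] at this; simpa using this
  have hcΓ : ∀ g ∈ Γ, g * c = c * g := by
    intro g hg
    have : Γ ≤ Subgroup.centralizer {c} := by
      rw [hΓ, closure_le]
      rintro x (rfl | rfl)
      · refine Subgroup.mem_centralizer_singleton_iff.2 (Units.ext ?_)
        rw [Units.val_mul, Units.val_mul, hX, mul_add, add_mul, hca.eq]; simp
      · refine Subgroup.mem_centralizer_singleton_iff.2 (Units.ext ?_)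
        rw [Units.val_mul, Units.val_mul, hY, mul_add, add_mul, hcb.eq]; simp
    exact (Subgroup.mem_centralizer_singleton_iff.1 (this hg))
  have hw2 : w * w = c := Units.ext hww
  have hwn : w ∈ normalizer (Γ : Set (AddMonoid.End E)ˣ) := by
    have h := key w (by rw [hwX]; exact hYΓ) (by rw [hwY]; exact hXΓ)
    rw [mem_normalizer_iff]
    refine fun g => ⟨h g, fun hg => ?_⟩
    have := h _ hg
    have h5 : w * (w * g * w⁻¹) * w⁻¹ = (w * w) * g * (w * w)⁻¹ := by group
    rw [h5, hw2] at this
    have h6 := hcΓ _ this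
    have h7 : c * g * c⁻¹ = g := by
      have : c * (c * g * c⁻¹) = c * g := by rw [← h6]; group
      exact mul_left_cancel this
    rwa [h7] at this
  let φ := Subgroup.normalizerMonoidHom Γ
  have hφ : ∀ (u) (hu : u ∈ normalizer (Γ : Set (AddMonoid.End E)ˣ)) (g : Γ),
      ((φ ⟨u, hu⟩ g : Γ) : (AddMonoid.End E)ˣ) = u * g * u⁻¹ := fun u hu g => rfl
  have hδδ' : φ ⟨δ, hδn⟩ * φ ⟨δ, hδn⟩ = 1 := by
    ext1 g; apply Subtype.ext
    rw [MulAut.mul_apply, hφ, hφ]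
    have h4 : δ * δ = 1 := Units.ext hδδ
    have h5 : δ * (δ * g * δ⁻¹) * δ⁻¹ = (δ * δ) * g * (δ * δ)⁻¹ := by group
    rw [h5, h4]; simp
  have hww' : φ ⟨w, hwn⟩ * φ ⟨w, hwn⟩ = 1 := by
    ext1 g; apply Subtype.ext
    rw [MulAut.mul_apply, hφ, hφ]
    have h5 : w * (w * g * w⁻¹) * w⁻¹ = (w * w) * g * (w * w)⁻¹ := by group
    rw [h5, hw2, ← hcΓ _ g.2]; simp
  have hδw' : φ ⟨δ, hδn⟩ * φ ⟨w, hwn⟩ = φ ⟨w, hwn⟩ * φ ⟨δ, hδn⟩ := by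
    ext1 g; apply Subtype.ext
    rw [MulAut.mul_apply, MulAut.mul_apply, hφ, hφ, hφ, hφ]
    have h4 : δ * w = - (w * δ) := Units.ext hδw
    have h5 : δ * (w * g * w⁻¹) * δ⁻¹ = (δ * w) * g * (δ * w)⁻¹ := by group
    have h6 : w * (δ * g * δ⁻¹) * w⁻¹ = (w * δ) * g * (w * δ)⁻¹ := by group
    rw [h5, h4, h6]; simp
  have hsyl : Odd (Nat.card (Sylow p Γ)) := by
    obtain ⟨P⟩ : Nonempty (Sylow p Γ) := inferInstance
    exact Odd.of_dvd_nat hodd ((Sylow.card_dvd_index P).trans P.1.index_dvd_card)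
  obtain ⟨P0, hP1, hP2⟩ := exists_common_fixed
    (MulAction.toPermHom (MulAut Γ) (Sylow p Γ) (φ ⟨δ, hδn⟩))
    (MulAction.toPermHom (MulAut Γ) (Sylow p Γ) (φ ⟨w, hwn⟩))
    (by rw [← map_mul, hδδ', map_one]) (by rw [← map_mul, hww', map_one])
    (by rw [← map_mul, hδw', map_mul]) hsyl
  have hfix : ∀ σ : MulAut Γ, MulAction.toPermHom (MulAut Γ) (Sylow p Γ) σ P0 = P0 →
      ∀ q ∈ P0, σ q ∈ P0 := by
    intro σ hσ q hq
    have : σ q ∈ σ • P0 := by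
      change σ q ∈ σ • (P0 : Subgroup Γ)
      exact Subgroup.smul_mem_pointwise_smul q σ _ hq
    have h2 : σ • P0 = P0 := hσ
    rwa [h2] at this
  have hPδ := hfix _ hP1
  have hPw := hfix _ hP2
  let F0 : AddSubgroup E :=
    { carrier := {v | ∀ q ∈ P0, ((q : (AddMonoid.End E)ˣ) : AddMonoid.End E) v = v}
      zero_mem' := fun q _ => map_zero _
      add_mem' := fun {x y} hx hy q hq => by rw [map_add, hx q hq, hy q hq]
      neg_mem' := fun {x} hx q hq => by rw [map_neg, hx q hq] }
  have hF0 : F0 ≠ ⊥ := by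
    intro hbot
    letI : MulAction P0 E :=
      { smul := fun q v => ((q : (AddMonoid.End E)ˣ) : AddMonoid.End E) v
        one_smul := fun v => rfl
        mul_smul := fun q r v => rfl }
    have h1 := P0.2.card_modEq_card_fixedPoints E
    have h2 : p ∣ Nat.card E := by
      obtain ⟨v, hv⟩ := exists_ne (0 : E)
      rw [← addOrderOf_eq_prime (hE v) hv]
      exact addOrderOf_dvd_natCard v
    have h3 : p ∣ Nat.card (MulAction.fixedPoints P0 E) :=
      (Nat.modEq_zero_iff_dvd.1 (h1.symm.trans (Nat.modEq_zero_iff_dvd.2 h2)))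
    have h4 : Subsingleton (MulAction.fixedPoints P0 E) := by
      refine ⟨fun x y => Subtype.ext ?_⟩
      have : ∀ x : MulAction.fixedPoints P0 E, (x : E) ∈ F0 := fun x q hq => x.2 ⟨q, hq⟩
      have hx := this x
      have hy := this y
      rw [hbot, AddSubgroup.mem_bot] at hx hy
      rw [hx, hy]
    have h5 : Nat.card (MulAction.fixedPoints P0 E) ≤ 1 := Finite.card_le_one_iff_subsingleton.2 h4
    have h6 : 0 < Nat.card (MulAction.fixedPoints P0 E) := by
      have : Nonempty (MulAction.fixedPoints P0 E) := ⟨⟨0, fun q => map_zero _⟩⟩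
      exact Nat.card_pos
    have := Nat.le_of_dvd h6 h3
    have := hp.out.two_le
    omega
  have hFδ : ∀ v ∈ F0, δ0 v ∈ F0 := by
    intro v hv q hq
    have h1 := hv _ (hPδ q hq)
    rw [hφ] at h1
    have h3 : δ * q * δ⁻¹ = δ⁻¹ * q * δ := rfl
    rw [h3] at h1
    have h4 : ((δ * (δ⁻¹ * q * δ) : (AddMonoid.End E)ˣ) : AddMonoid.End E) v = δ0 v :=
      congrArg δ0 h1
    rw [← mul_assoc, ← mul_assoc, mul_inv_cancel, one_mul] at h4
    exact h4
  have hFw : ∀ v ∈ F0, w0 v ∈ F0 := by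
    intro v hv q hq
    have h1 := hv _ (hPw q hq)
    rw [hφ] at h1
    -- `w q w⁻¹` fixes `v`; use `w q w⁻¹ = w⁻¹ q w`
    have h3 : w * q * w⁻¹ = w⁻¹ * q * w := by
      have h5 : w * q * w⁻¹ = w⁻¹ * ((w * w) * q) * w⁻¹ := by group
      rw [h5, hw2, ← hcΓ _ (q : Γ).2, ← hw2]; group
    rw [h3] at h1
    have h4 : ((w * (w⁻¹ * q * w) : (AddMonoid.End E)ˣ) : AddMonoid.End E) v = w0 v :=
      congrArg w0 h1
    rw [← mul_assoc, ← mul_assoc, mul_inv_cancel, one_mul] at h4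
    exact h4
  have h2a : (1 + δ0) * w0 = a + a := by
    have e1 : δ0 * w0 = a - b := by
      rw [hδ0, mul_assoc, ← hwd, ← mul_assoc, hw0]
      have : (a * b - b * a) * (a + b) = (a - b) * (a * b + b * a) := by
        have e1 : a * (a * b) = 0 := by rw [← mul_assoc, ha]; simp
        have e2 : b * (b * a) = 0 := by rw [← mul_assoc, hb]; simp
        simp only [mul_add, sub_mul, mul_assoc, ha, hb, e1, e2, mul_zero]; abel
      rw [this, mul_assoc, hcd, mul_one]
    rw [add_mul, e1, one_mul, hw0]; abel
  have h2b : (1 - δ0) * w0 = b + b := by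
    have : (1 - δ0) * w0 = (w0 + w0) - (1 + δ0) * w0 := by simp only [sub_mul, add_mul, one_mul]; abel
    rw [this, h2a, hw0]; abel
  have hhalf : ∀ v : E, v + v ∈ F0 → v ∈ F0 := by
    intro v hv
    obtain ⟨k, hk⟩ := hp.out.odd_of_ne_two hp2
    have h1 : (k + 1) • (v + v) = v := by
      rw [← two_nsmul, ← mul_nsmul', show (k+1) * 2 = p + 1 by omega, add_nsmul, hE]; simp
    rw [← h1]; exact F0.nsmul_mem hv _
  have hFa : ∀ v ∈ F0, a v ∈ F0 := by
    intro v hv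
    apply hhalf
    have : a v + a v = w0 v + δ0 (w0 v) := by
      have := DFunLike.congr_fun h2a v
      rw [add_mul, one_mul] at this
      exact this.symm
    rw [this]; exact F0.add_mem (hFw v hv) (hFδ _ (hFw v hv))
  have hFb : ∀ v ∈ F0, b v ∈ F0 := by
    intro v hv
    apply hhalf
    have : b v + b v = w0 v - δ0 (w0 v) := by
      have := DFunLike.congr_fun h2b v
      rw [sub_mul, one_mul] at this
      exact this.symm
    rw [this]; exact F0.sub_mem (hFw v hv) (hFδ _ (hFw v hv))
  have hFtop : F0 = ⊤ := (hirr F0 hFa hFb).resolve_left hF0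
  have hPbot : (P0 : Subgroup Γ) = ⊥ := by
    rw [eq_bot_iff]
    intro q hq
    rw [Subgroup.mem_bot]
    apply Subtype.ext; apply Units.ext; apply DFunLike.ext
    intro v
    have : v ∈ F0 := hFtop ▸ AddSubgroup.mem_top v
    exact this q hq
  have hXp : X ^ p = 1 := by
    have : ∀ n : ℕ, ((X ^ n : (AddMonoid.End E)ˣ) : AddMonoid.End E) = 1 + n • a := by
      intro n
      induction n with
      | zero => simp
      | succ n ih =>
        rw [pow_succ, Units.val_mul, ih, hX, mul_add, mul_one, add_mul, smul_mul_assoc, ha,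
          succ_nsmul, one_mul, nsmul_zero, add_zero, add_assoc]
    ext1
    rw [this]
    have : p • a = 0 := by
      apply DFunLike.ext; intro v; exact hE (a v)
    rw [this]; simp
  have hX1 : X = 1 := by
    by_contra hne
    have h1 : orderOf X = p := orderOf_eq_prime hXp hne
    have h2 : p ∣ Nat.card Γ := by
      rw [← h1]; exact Subgroup.orderOf_dvd_natCard _ hXΓ
    exact P0.ne_bot_of_dvd_card h2 hPbot
  have ha0 : a = 0 := by
    rw [hX1] at hX; simpa using hX
  rw [ha0] at hcd
  rw [zero_mul, mul_zero, add_zero, zero_mul] at hcd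
  obtain ⟨v, hv⟩ := exists_ne (0 : E)
  exact hv (DFunLike.congr_fun hcd v).symm

/-- In an irreducible elementary abelian `p`-group, two quadratic elements generating a group of odd
order act trivially: `ab + ba` commutes with `a` and `b`, so it is zero or invertible, and the
invertible case is excluded by `quad_lin_aux`. -/
lemma quad_lin (a b : AddMonoid.End E) (X Y : (AddMonoid.End E)ˣ) (hX : (X : AddMonoid.End E) = 1 + a)
    (hY : (Y : AddMonoid.End E) = 1 + b) (ha : a * a = 0) (hb : b * b = 0) (hp2 : p ≠ 2)
    (hE : ∀ v : E, p • v = 0)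
    (hfin : Finite (closure {X, Y})) (hodd : Odd (Nat.card (closure {X, Y})))
    (hirr : ∀ U : AddSubgroup E, (∀ u ∈ U, a u ∈ U) → (∀ u ∈ U, b u ∈ U) → U = ⊥ ∨ U = ⊤) :
    a = 0 ∧ b = 0 := by
  rcases subsingleton_or_nontrivial E with hs | hn
  · exact ⟨DFunLike.ext _ _ fun v => Subsingleton.elim _ _,
      DFunLike.ext _ _ fun v => Subsingleton.elim _ _⟩
  have ha' : ∀ v, a (a v) = 0 := fun v => DFunLike.congr_fun ha v
  have hb' : ∀ v, b (b v) = 0 := fun v => DFunLike.congr_fun hb v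
  set c0 : AddMonoid.End E := a * b + b * a with hc0
  have hc0' : ∀ v, c0 v = a (b v) + b (a v) := fun v => rfl
  rcases hirr (AddMonoidHom.ker c0)
    (fun u hu => by
      replace hu : a (b u) + b (a u) = 0 := hu
      change a (b (a u)) + b (a (a u)) = 0
      rw [ha', map_zero, add_zero]
      have h := congrArg a hu
      rwa [map_add, ha', zero_add, map_zero] at h)
    (fun u hu => by
      replace hu : a (b u) + b (a u) = 0 := hu
      change a (b (b u)) + b (a (b u)) = 0
      rw [hb', map_zero, zero_add]
      have h := congrArg b hu
      rwa [map_add, hb', add_zero, map_zero] at h) with hk | hk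
  · exfalso
    have hinj : Function.Injective c0 := (AddMonoidHom.ker_eq_bot_iff c0).1 hk
    let e := AddEquiv.ofBijective c0 (Finite.injective_iff_bijective.1 hinj)
    let c : (AddMonoid.End E)ˣ := ⟨c0, e.symm.toAddMonoidHom,
      DFunLike.ext _ _ fun v => e.apply_symm_apply v, DFunLike.ext _ _ fun v => e.symm_apply_apply v⟩
    exact quad_lin_aux a b X Y hX hY ha hb hp2 hE hfin hodd hirr c rfl
  · have hz : ∀ v, a (b v) + b (a v) = 0 := fun v => by
      have : v ∈ AddMonoidHom.ker c0 := hk ▸ AddSubgroup.mem_top v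
      exact this
    have aux : ∀ f : AddMonoid.End E, (∀ v, f (f v) = 0) →
        (AddMonoidHom.ker f = ⊥ ∨ AddMonoidHom.ker f = ⊤) → f = 0 := by
      intro f hf h
      have h2 : AddMonoidHom.ker f = ⊤ := by
        refine h.resolve_left fun hbot => ?_
        have hinj : Function.Injective f := (AddMonoidHom.ker_eq_bot_iff f).1 hbot
        obtain ⟨v, hv⟩ := exists_ne (0 : E)
        exact hv (hinj (hinj (by rw [hf, map_zero, map_zero])))
      refine DFunLike.ext _ _ fun v => ?_
      have : v ∈ AddMonoidHom.ker f := h2 ▸ AddSubgroup.mem_top v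
      exact this
    refine ⟨aux a ha' (hirr _ ?_ ?_), aux b hb' (hirr _ ?_ ?_)⟩
    · exact fun u _ => ha' u
    · intro u hu
      have h := hz u
      have hu' : a u = 0 := hu
      rw [hu', map_zero, add_zero] at h
      exact h
    · intro u hu
      have h := hz u
      have hu' : b u = 0 := hu
      rw [hu', map_zero, zero_add] at h
      exact h
    · exact fun u _ => hb' u
end
end Acd

/-! ### Quadratic action on `p`-groups and `p`-stability -/

namespace Acd
open Subgroup
open scoped Pointwise

section
variable {p : ℕ} [hp : Fact p.Prime]

lemma closure_pred {Γ : Type} [Group Γ] [Finite Γ] {s : Set Γ} (hs : closure s = ⊤)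
    (q : Γ → Prop) (h1 : q 1) (hm : ∀ a b, q a → q b → q (a * b)) (hq : ∀ a ∈ s, q a) (g : Γ) :
    q g := by
  let N : Submonoid Γ := { carrier := {a | q a}, one_mem' := h1, mul_mem' := fun {a b} => hm a b }
  have h : Submonoid.closure s ≤ N := Submonoid.closure_le.2 hq
  have : g ∈ (closure s).toSubmonoid := by rw [hs]; trivial
  rw [closure_toSubmonoid_of_finite] at this
  exact h this

/-- The additive form of an action by endomorphisms on a commutative group. -/
def toAddEnd {Γ U : Type} [Group Γ] [CommGroup U] (ψ : Γ →* Monoid.End U) :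
    Γ →* AddMonoid.End (Additive U) where
  toFun s := MonoidHom.toAdditive (ψ s)
  map_one' := by rw [map_one]; rfl
  map_mul' s t := by rw [map_mul]; rfl

/-- The irreducible case of `quad`, a multiplicative restatement of `quad_lin`. -/
lemma quad_irr {Γ U : Type} [Group Γ] [Finite Γ] [CommGroup U] [Finite U] (hp2 : p ≠ 2)
    (hU : ∀ u : U, u ^ p = 1) (ψ : Γ →* Monoid.End U) (x y : Γ) (hgen : closure {x, y} = ⊤)
    (hodd : Odd (Nat.card Γ)) (hx : ∀ v, ψ x (ψ x v * v⁻¹) = ψ x v * v⁻¹)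
    (hy : ∀ v, ψ y (ψ y v * v⁻¹) = ψ y v * v⁻¹)
    (hirr : ∀ W : Subgroup U, (∀ s, ∀ u ∈ W, ψ s u ∈ W) → W = ⊥ ∨ W = ⊤) (s : Γ) : ψ s = 1 := by
  let θ := toAddEnd ψ
  let Θ := θ.toHomUnits
  have hΘ : ∀ s, ((Θ s : (AddMonoid.End (Additive U))ˣ) : AddMonoid.End (Additive U)) = θ s :=
    fun s => rfl
  have hcl : closure {Θ x, Θ y} = Θ.range := by
    rw [← Set.image_pair, ← MonoidHom.map_closure, hgen, MonoidHom.range_eq_map]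
  have hsq : ∀ x : Γ, (∀ v, ψ x (ψ x v * v⁻¹) = ψ x v * v⁻¹) → (θ x - 1) * (θ x - 1) = 0 := by
    intro x hx
    refine DFunLike.ext _ _ fun v => ?_
    change (θ x) (θ x v - v) - (θ x v - v) = 0
    rw [sub_eq_zero, sub_eq_add_neg]
    exact hx v.toMul
  have hmain := quad_lin (p := p) (θ x - 1) (θ y - 1) (Θ x) (Θ y) (by rw [hΘ]; abel)
    (by rw [hΘ]; abel) (hsq x hx) (hsq y hy) hp2 (fun v => hU v.toMul)
    (by rw [hcl]; exact Finite.of_surjective _ Θ.rangeRestrict_surjective)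
    (by rw [hcl]; exact Odd.of_dvd_nat hodd (Subgroup.card_range_dvd Θ)) (by
      intro W h1 h2
      have h3 : ∀ s, ∀ u ∈ W, θ s u ∈ W := by
        refine closure_pred hgen _ ?_ ?_ ?_
        · intro u hu; rw [map_one]; exact hu
        · intro a b ha hb u hu; rw [map_mul]; exact ha _ (hb _ hu)
        · rintro z (rfl | rfl) u hu
          · have := W.add_mem (h1 u hu) hu
            change θ z u - u + u ∈ W at this
            rwa [sub_add_cancel] at this
          · have := W.add_mem (h2 u hu) hu
            change θ z u - u + u ∈ W at this
            rwa [sub_add_cancel] at this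
      rcases hirr (AddSubgroup.toSubgroup' W) (fun s u hu => h3 s u hu) with h | h
      · left
        rw [eq_bot_iff]
        intro u hu
        have : Additive.toMul u ∈ AddSubgroup.toSubgroup' W := hu
        rw [h, Subgroup.mem_bot] at this
        exact this
      · right
        rw [eq_top_iff]
        intro u _
        have : Additive.toMul u ∈ AddSubgroup.toSubgroup' W := h ▸ Subgroup.mem_top _
        exact this)
  have hx1 : θ x = 1 := sub_eq_zero.1 hmain.1
  have hy1 : θ y = 1 := sub_eq_zero.1 hmain.2
  have : θ s = 1 := by
    refine closure_pred (q := fun s => θ s = 1) hgen (map_one _) ?_ ?_ s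
    · intro a b ha hb; rw [map_mul, ha, hb, one_mul]
    · rintro z (rfl | rfl)
      · exact hx1
      · exact hy1
  refine DFunLike.ext _ _ fun u => ?_
  exact DFunLike.congr_fun this (Additive.ofMul u)

/-- A group of odd order generated by two elements acting quadratically on a `p`-group induces
a `p`-group of automorphisms. -/
theorem quad {Γ : Type} [Group Γ] [Finite Γ] (hp2 : p ≠ 2) (x y : Γ) (hgen : closure {x, y} = ⊤)
    (hodd : Odd (Nat.card Γ)) : ∀ (n : ℕ) {V : Type} [Group V] [Finite V] (_ : Nat.card V = n)
    (_ : IsPGroup p V) (φ : Γ →* Monoid.End V)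
    (_ : ∀ v, φ x (φ x v * v⁻¹) = φ x v * v⁻¹) (_ : ∀ v, φ y (φ y v * v⁻¹) = φ y v * v⁻¹) (s : Γ),
    ∃ k : ℕ, φ (s ^ p ^ k) = 1 := by
  intro n
  induction n using Nat.strong_induction_on with
  | _ n ih =>
  intro V _ _ hn hV φ hx hy s
  rcases subsingleton_or_nontrivial V with hs | hnt
  · exact ⟨0, DFunLike.ext _ _ fun v => Subsingleton.elim _ _⟩
  have hφinv : ∀ s v, φ s (φ s⁻¹ v) = v := by
    intro s v
    have : (φ s * φ s⁻¹) v = v := by rw [← map_mul, mul_inv_cancel, map_one]; rfl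
    exact this
  -- a minimal invariant subgroup among central elements of order `p`
  let good : Subgroup V → Prop := fun U => U ≠ ⊥ ∧ (∀ s, ∀ u ∈ U, φ s u ∈ U) ∧
    U ≤ center V ∧ ∀ u ∈ U, u ^ p = 1
  have hex : ∃ U, good U := by
    let Ω : Subgroup V :=
      { carrier := {z | z ∈ center V ∧ z ^ p = 1}
        one_mem' := ⟨one_mem _, one_pow _⟩
        mul_mem' := fun {a b} ha hb => ⟨mul_mem ha.1 hb.1, by
          have hc : Commute a b := (Subgroup.mem_center_iff.1 ha.1 b).symm
          rw [hc.mul_pow, ha.2, hb.2, one_mul]⟩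
        inv_mem' := fun {a} ha => ⟨inv_mem ha.1, by rw [inv_pow, ha.2, inv_one]⟩ }
    refine ⟨Ω, ?_, ?_, fun z hz => hz.1, fun z hz => hz.2⟩
    · intro hbot
      have := hV.center_nontrivial
      have h1 : IsPGroup p (center V) := hV.to_subgroup _
      obtain ⟨m, hm, h2⟩ := h1.nontrivial_iff_card.1 this
      have h3 : p ∣ Nat.card (center V) := by rw [h2]; exact dvd_pow_self p hm.ne'
      obtain ⟨z, hz⟩ := exists_prime_orderOf_dvd_card' p h3
      have h4 : (z : V) ∈ Ω := ⟨z.2, by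
        have := pow_orderOf_eq_one z
        rw [hz] at this
        exact congrArg Subtype.val this⟩
      rw [hbot, Subgroup.mem_bot] at h4
      have : z = 1 := Subtype.ext h4
      rw [this, orderOf_one] at hz
      exact hp.out.one_lt.ne hz
    · rintro s z ⟨h1, h2⟩
      refine ⟨Subgroup.mem_center_iff.2 fun v => ?_, by rw [← map_pow, h2, map_one]⟩
      have := Subgroup.mem_center_iff.1 h1 (φ s⁻¹ v)
      have := congrArg (φ s) this
      rwa [map_mul, map_mul, hφinv] at this
  obtain ⟨U, ⟨hU1, hU2, hU3, hU4⟩, hUmin⟩ := exists_minimal_of_wellFoundedLT good hex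
  have hUn : U.Normal := ⟨fun u hu g => by
    rw [Subgroup.mem_center_iff.1 (hU3 hu) g, mul_inv_cancel_right]; exact hu⟩
  -- some `p`-power of `s` acts trivially on `V / U` by induction
  have hle : ∀ s, U ≤ U.comap (φ s) := fun s u hu => hU2 s u hu
  let φ' : Γ →* Monoid.End (V ⧸ U) :=
    { toFun := fun s => QuotientGroup.map U U (φ s) (hle s)
      map_one' := by
        refine DFunLike.ext _ _ fun v => ?_
        induction v using QuotientGroup.induction_on with
        | H v => change ((φ 1 v : V) : V ⧸ U) = v; rw [map_one]; rfl
      map_mul' := fun s t => by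
        refine DFunLike.ext _ _ fun v => ?_
        induction v using QuotientGroup.induction_on with
        | H v => change ((φ (s * t) v : V) : V ⧸ U) = (φ s (φ t v) : V); rw [map_mul]; rfl }
  have hφ' : ∀ s (v : V), φ' s (v : V ⧸ U) = (φ s v : V) := fun s v => rfl
  have hcard : Nat.card (V ⧸ U) < n := by
    rw [← hn]
    have h1 := Subgroup.card_eq_card_quotient_mul_card_subgroup U
    have h2 : 1 < Nat.card U := by
      rw [Subgroup.one_lt_card_iff_ne_bot]; exact hU1
    have h3 : 0 < Nat.card (V ⧸ U) := Nat.card_pos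
    nlinarith
  obtain ⟨k, hk⟩ := ih _ hcard rfl (hV.to_quotient U) φ'
    (fun v => by
      induction v using QuotientGroup.induction_on with
      | H v => exact congrArg (QuotientGroup.mk (s := U)) (hx v))
    (fun v => by
      induction v using QuotientGroup.induction_on with
      | H v => exact congrArg (QuotientGroup.mk (s := U)) (hy v)) s
  -- `s` itself acts trivially on `U` by irreducibility
  letI : CommGroup U := { (inferInstance : Group U) with
    mul_comm := fun a b => Subtype.ext (Subgroup.mem_center_iff.1 (hU3 b.2) a) }
  let ψ : Γ →* Monoid.End U :=
    { toFun := fun s => ((φ s).comp U.subtype).codRestrict U (fun u => hU2 s u u.2)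
      map_one' := by
        refine DFunLike.ext _ _ fun v => Subtype.ext ?_
        change φ 1 v = v; rw [map_one]; rfl
      map_mul' := fun s t => by
        refine DFunLike.ext _ _ fun v => Subtype.ext ?_
        change φ (s * t) v = φ s (φ t v); rw [map_mul]; rfl }
  have hψ : ∀ t, ψ t = 1 := quad_irr hp2 (fun u => Subtype.ext (hU4 u u.2)) ψ x y hgen hodd
    (fun v => Subtype.ext (hx v)) (fun v => Subtype.ext (hy v)) (by
      intro W hW
      by_cases hb : W = ⊥
      · exact Or.inl hb
      right
      have h1 : good (W.map U.subtype) := by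
        refine ⟨fun h => hb ?_, ?_, ?_, ?_⟩
        · exact (Subgroup.map_eq_bot_iff_of_injective W U.subtype_injective).1 h
        · rintro s _ ⟨u, hu, rfl⟩
          exact ⟨ψ s u, hW s u hu, rfl⟩
        · rintro _ ⟨u, hu, rfl⟩; exact hU3 u.2
        · rintro _ ⟨u, hu, rfl⟩; exact hU4 u u.2
      have h2 := hUmin h1 (by rintro _ ⟨u, hu, rfl⟩; exact u.2)
      rw [eq_top_iff]
      intro u _
      obtain ⟨u', hu', h3⟩ := h2 u.2
      have : u' = u := Subtype.ext h3
      exact this ▸ hu')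
  have hU5 : ∀ t, ∀ u ∈ U, φ t u = u := fun t u hu => by
    have h0 := DFunLike.congr_fun (hψ t) (⟨u, hu⟩ : U)
    exact congrArg Subtype.val h0
  refine ⟨k + 1, DFunLike.ext _ _ fun v => ?_⟩
  generalize ht : s ^ p ^ k = t at hk
  have h1 : v⁻¹ * φ t v ∈ U := by
    have h2 := DFunLike.congr_fun hk (v : V ⧸ U)
    rw [hφ'] at h2
    exact QuotientGroup.eq.1 h2.symm
  have h3 : ∀ n : ℕ, φ (t ^ n) v = v * (v⁻¹ * φ t v) ^ n := by
    intro n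
    induction n with
    | zero => rw [pow_zero, pow_zero, map_one, mul_one]; rfl
    | succ n ihn =>
      rw [pow_succ', map_mul]
      change φ t (φ (t ^ n) v) = _
      rw [ihn, map_mul, hU5 t _ (U.pow_mem h1 n), pow_succ', ← mul_assoc v, mul_inv_cancel_left]
  rw [pow_succ, pow_mul, ht, h3, hU4 _ h1, mul_one]
  rfl

section
variable {M : Type} [Group M] [Finite M]

/-- The largest normal subgroup of `M` inducing a `p`-group of automorphisms on `V`. -/
def TT (p : ℕ) (V : Subgroup M) [V.Normal] : Subgroup M :=
  (pCore p (M ⧸ centralizer (V : Set M))).comap (QuotientGroup.mk' (centralizer (V : Set M)))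

instance (V : Subgroup M) [V.Normal] : (TT p V).Normal := by unfold TT; infer_instance

lemma centralizer_le_TT (V : Subgroup M) [V.Normal] : centralizer (V : Set M) ≤ TT p V := by
  intro x hx
  rw [TT, Subgroup.mem_comap, QuotientGroup.mk'_apply, (QuotientGroup.eq_one_iff x).2 hx]
  exact one_mem _

/-- Groups of odd order are `p`-stable: an element acting quadratically on a normal `p`-subgroup `V`
lies in `O_p` modulo the centralizer of `V`. By Baer–Suzuki only the group generated by the element
and one conjugate matters, and `quad` applies to it. -/
lemma pstable (hp2 : p ≠ 2) (hodd : Odd (Nat.card M)) (V : Subgroup M) [hVn : V.Normal]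
    (hV : IsPGroup p V) (x : M) (hx : ∀ v ∈ V, Commute x (x * v * x⁻¹ * v⁻¹)) : x ∈ TT p V := by
  rw [TT, Subgroup.mem_comap]
  refine baer_suzuki _ fun g' => ?_
  obtain ⟨g, rfl⟩ := QuotientGroup.mk'_surjective _ g'
  set π := QuotientGroup.mk' (centralizer (V : Set M)) with hπ
  set y := g * x * g⁻¹ with hy
  have hy' : ∀ v ∈ V, Commute y (y * v * y⁻¹ * v⁻¹) := by
    intro v hv
    have h1 := hx (g⁻¹ * v * g) (by simpa using hVn.conj_mem v hv g⁻¹)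
    have h2 := h1.map (MulAut.conj g).toMonoidHom
    simp only [MulEquiv.toMonoidHom_eq_coe, MonoidHom.coe_coe, MulAut.conj_apply] at h2
    convert h2 using 1
    rw [hy]; group
  set Γ := closure ({x, y} : Set M) with hΓ
  have hxΓ : x ∈ Γ := subset_closure (by simp)
  have hyΓ : y ∈ Γ := subset_closure (by simp)
  have himg : closure {π x, π g * π x * (π g)⁻¹} = Γ.map π := by
    rw [hΓ, MonoidHom.map_closure, Set.image_pair, hy]; simp
  rw [himg]
  let φ : Γ →* Monoid.End V :=
    { toFun := fun s => (MulAut.conjNormal (s : M) : MulAut V).toMonoidHom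
      map_one' := by
        refine DFunLike.ext _ _ fun v => Subtype.ext ?_
        change ((1 : Γ) : M) * v * ((1 : Γ) : M)⁻¹ = v
        simp
      map_mul' := fun s t => by
        refine DFunLike.ext _ _ fun v => Subtype.ext ?_
        change ((s * t : Γ) : M) * v * ((s * t : Γ) : M)⁻¹ = s * (t * v * (t : M)⁻¹) * (s : M)⁻¹
        rw [Subgroup.coe_mul]; group }
  have hφ : ∀ s v, ((φ s v : V) : M) = s * v * (s : M)⁻¹ := fun s v => rfl
  have hq := quad (p := p) hp2 (⟨x, hxΓ⟩ : Γ) ⟨y, hyΓ⟩ (by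
      have := Subgroup.closure_closure_coe_preimage (k := ({x, y} : Set M))
      rw [← this]; congr 1
      ext z
      simp [Subtype.ext_iff])
    (Odd.of_dvd_nat hodd (Subgroup.card_subgroup_dvd_card Γ)) _ (V := V) rfl hV φ
    (fun v => by
      apply Subtype.ext
      have h1 := (hx v v.2).eq
      rw [hφ, Subgroup.coe_mul, hφ]
      change x * (x * v * x⁻¹ * (v : M)⁻¹) * x⁻¹ = x * v * x⁻¹ * (v : M)⁻¹
      rw [h1]; group)
    (fun v => by
      apply Subtype.ext
      have h1 := (hy' v v.2).eq
      rw [hφ, Subgroup.coe_mul, hφ]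
      change y * (y * v * y⁻¹ * (v : M)⁻¹) * y⁻¹ = y * v * y⁻¹ * (v : M)⁻¹
      rw [h1]; group)
  rintro ⟨_, s, hs, rfl⟩
  obtain ⟨k, hk⟩ := hq ⟨s, hs⟩
  refine ⟨k, Subtype.ext ?_⟩
  change (π s) ^ p ^ k = 1
  rw [← map_pow, hπ, QuotientGroup.mk'_apply, QuotientGroup.eq_one_iff]
  intro v hv
  have := congrArg Subtype.val (DFunLike.congr_fun hk (⟨v, hv⟩ : V))
  rw [hφ] at this
  change s ^ p ^ k * v * (s ^ p ^ k)⁻¹ = v at this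
  exact (mul_inv_eq_iff_eq_mul.1 this).symm
end
end
end Acd

/-! ### A Glauberman–Solomon subgroup and the resulting factorization -/

namespace Acd
open Subgroup
open scoped Pointwise

section
variable {M : Type} [Group M]

/-- `A` is admissible in `S`: it is an abelian normal subgroup of `S`, and every element of `S`
acting quadratically on `A` (that is, with `[x, [x, A]] = 1`) centralizes `A`. -/
def Adm (S A : Subgroup M) : Prop :=
  A ≤ S ∧ (∀ s ∈ S, ∀ a ∈ A, s * a * s⁻¹ ∈ A) ∧ (∀ a ∈ A, ∀ b ∈ A, Commute a b) ∧
    ∀ x ∈ S, (∀ a ∈ A, Commute x (x * a * x⁻¹ * a⁻¹)) → ∀ a ∈ A, Commute x a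

/-- The join of all admissible subgroups of `S`, a Glauberman–Solomon type characteristic subgroup.
It is itself admissible (`WW_adm`) and contains the center of `S`. -/
def WW (S : Subgroup M) : Subgroup M := sSup {A | Adm S A}

lemma Adm.le_WW {S A : Subgroup M} (h : Adm S A) : A ≤ WW S := le_sSup h

lemma WW_adm (S : Subgroup M) : Adm S (WW S) := by
  have hmul : ∀ (q : M → Prop), q 1 → (∀ a b, q a → q b → q (a * b)) → (∀ a, q a → q a⁻¹) →
      (∀ A, Adm S A → ∀ a ∈ A, q a) → ∀ a ∈ WW S, q a := by
    intro q h1 h2 h3 h4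
    let N : Subgroup M := { carrier := {a | q a}, one_mem' := h1, mul_mem' := fun {a b} => h2 a b,
                            inv_mem' := fun {a} => h3 a }
    have : WW S ≤ N := sSup_le fun A hA a ha => h4 A hA a ha
    exact fun a ha => this ha
  have hconj : ∀ s ∈ S, ∀ a ∈ WW S, s * a * s⁻¹ ∈ WW S := by
    intro s hs
    refine hmul _ (by simp) ?_ ?_ ?_
    · intro a b ha hb
      have := mul_mem ha hb
      simpa [mul_assoc] using this
    · intro a ha
      have := inv_mem ha
      simpa [mul_assoc] using this
    · exact fun A hA a ha => hA.le_WW (hA.2.1 s hs a ha)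
  have hcomm : ∀ A, Adm S A → ∀ B, Adm S B → ∀ a ∈ A, ∀ b ∈ B, Commute b a := by
    intro A hA B hB a ha b hb
    refine hA.2.2.2 b (hB.1 hb) (fun a' ha' => ?_) a ha
    refine hB.2.2.1 b hb _ ?_
    have : b * a' * b⁻¹ * a'⁻¹ = b * (a' * b⁻¹ * a'⁻¹) := by group
    rw [this]
    exact mul_mem hb (hB.2.1 a' (hA.1 ha') _ (inv_mem hb))
  refine ⟨sSup_le fun A hA => hA.1, hconj, ?_, ?_⟩
  · refine hmul _ (fun b _ => Commute.one_left b) (fun a a' h h' b hb => (h b hb).mul_left (h' b hb))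
      (fun a h b hb => (h b hb).inv_left) ?_
    intro A hA a ha
    refine hmul _ (Commute.one_right a) (fun b b' h h' => h.mul_right h')
      (fun b h => h.inv_right) ?_
    exact fun B hB b hb => hcomm B hB A hA b hb a ha
  · intro x hx hq
    refine hmul _ (Commute.one_right x) (fun b b' h h' => h.mul_right h')
      (fun b h => h.inv_right) ?_
    exact fun B hB => hB.2.2.2 x hx fun b hb => hq b (hB.le_WW hb)

lemma WW_le (S : Subgroup M) : WW S ≤ S := (WW_adm S).1

lemma center_le_WW (S : Subgroup M) : S ⊓ centralizer (S : Set M) ≤ WW S := by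
  have hc : ∀ s ∈ S, ∀ a ∈ S ⊓ centralizer (S : Set M), Commute s a :=
    fun s hs a ha => ha.2 s hs
  refine Adm.le_WW ⟨inf_le_left, ?_, ?_, ?_⟩
  · intro s hs a ha
    rw [(hc s hs a ha).eq, mul_inv_cancel_right]; exact ha
  · exact fun a ha b hb => hc a ha.1 b hb
  · exact fun x hx _ a ha => hc x hx a ha

lemma WW_ne_bot {p : ℕ} [Fact p.Prime] [Finite M] {S : Subgroup M} (hS : IsPGroup p S)
    (hne : S ≠ ⊥) : WW S ≠ ⊥ := by
  intro h
  have : Nontrivial S := (Subgroup.nontrivial_iff_ne_bot S).2 hne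
  have := hS.center_nontrivial
  obtain ⟨z, hz⟩ := exists_ne (1 : center S)
  have h1 : ((z : S) : M) ∈ WW S := center_le_WW S ⟨(z : S).2, fun s hs =>
    congrArg Subtype.val (Subgroup.mem_center_iff.1 z.2 ⟨s, hs⟩)⟩
  rw [h, Subgroup.mem_bot] at h1
  exact hz (Subtype.ext (Subtype.ext h1))

lemma WW_map {N : Type} [Group N] (f : M →* N) (hf : Function.Injective f) (S : Subgroup M) :
    WW (S.map f) = (WW S).map f := by
  have hcm : ∀ a b, Commute (f a) (f b) ↔ Commute a b := by
    intro a b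
    refine ⟨fun h => hf ?_, fun h => h.map f⟩
    rw [map_mul, map_mul]; exact h.eq
  apply le_antisymm
  · refine sSup_le fun B hB => ?_
    have hBr : ∀ b ∈ B, ∃ a ∈ S, f a = b := fun b hb => hB.1 hb
    have : Adm S (B.comap f) := by
      refine ⟨?_, ?_, ?_, ?_⟩
      · intro a ha
        obtain ⟨a', ha', h⟩ := hBr _ ha
        exact hf h ▸ ha'
      · intro s hs a ha
        have := hB.2.1 (f s) ⟨s, hs, rfl⟩ (f a) ha
        rw [Subgroup.mem_comap]; simpa using this
      · exact fun a ha b hb => (hcm a b).1 (hB.2.2.1 _ ha _ hb)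
      · intro x hx hq a ha
        refine (hcm x a).1 (hB.2.2.2 (f x) ⟨x, hx, rfl⟩ ?_ _ ha)
        intro b hb
        obtain ⟨a', ha', rfl⟩ := hBr b hb
        have := (hq a' hb).map f
        simpa using this
    intro b hb
    obtain ⟨a, ha, rfl⟩ := hBr b hb
    exact ⟨a, this.le_WW hb, rfl⟩
  · refine Adm.le_WW ?_
    have hA := WW_adm S
    refine ⟨Subgroup.map_mono hA.1, ?_, ?_, ?_⟩
    · rintro _ ⟨s, hs, rfl⟩ _ ⟨a, ha, rfl⟩
      exact ⟨s * a * s⁻¹, hA.2.1 s hs a ha, by simp⟩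
    · rintro _ ⟨s, hs, rfl⟩ _ ⟨a, ha, rfl⟩
      exact (hA.2.2.1 s hs a ha).map f
    · rintro _ ⟨x, hx, rfl⟩ hq _ ⟨a, ha, rfl⟩
      refine (hA.2.2.2 x hx (fun b hb => ?_) a ha).map f
      have := hq (f b) ⟨b, hb, rfl⟩
      rw [← hcm]; simpa using this

lemma WW_subgroupOf {S N : Subgroup M} (h : S ≤ N) : (WW (S.subgroupOf N)).map N.subtype = WW S := by
  rw [← WW_map _ N.subtype_injective, Subgroup.subgroupOf_map_subtype, inf_of_le_left h]

lemma WW_conj (S : Subgroup M) (g : M) :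
    WW (S.map (MulAut.conj g).toMonoidHom) = (WW S).map (MulAut.conj g).toMonoidHom :=
  WW_map _ (MulAut.conj g).injective S

lemma map_conj_of_mem [Finite M] {S : Subgroup M} {g : M} (hg : g ∈ normalizer (S : Set M)) :
    S.map (MulAut.conj g).toMonoidHom = S := by
  apply le_antisymm
  · rintro _ ⟨s, hs, rfl⟩
    exact mem_norm_iff.1 hg s hs
  · intro s hs
    refine ⟨g⁻¹ * s * g, ?_, by simp [mul_assoc]⟩
    have := mem_norm_iff.1 (inv_mem hg) s hs
    rw [inv_inv] at this
    exact this

lemma normalizer_le_WW [Finite M] (S : Subgroup M) :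
    normalizer (S : Set M) ≤ normalizer (WW S : Set M) := by
  intro g hg
  rw [mem_norm_iff]
  intro w hw
  have h := WW_conj S g
  rw [map_conj_of_mem hg] at h
  rw [h]
  exact ⟨w, hw, rfl⟩

variable [Finite M] {p : ℕ} [hp : Fact p.Prime]

lemma relIndex_sylow_normal (S : Sylow p M) (N : Subgroup M) [N.Normal] :
    ¬ p ∣ (S : Subgroup M).relIndex N := by
  have h1 : (S : Subgroup M).relIndex N = (S : Subgroup M).relIndex (S ⊔ N) := by
    have e1 := relIndex_mul_relIndex ((S : Subgroup M) ⊓ N) S (S ⊔ N) inf_le_left le_sup_left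
    have e2 := relIndex_mul_relIndex ((S : Subgroup M) ⊓ N) N (S ⊔ N) inf_le_right le_sup_right
    rw [inf_relIndex_left] at e1
    rw [inf_relIndex_right, relIndex_sup_right, ← e1, mul_comm] at e2
    exact Nat.eq_of_mul_eq_mul_left (Nat.pos_of_ne_zero (by
      exact Subgroup.index_ne_zero_of_finite)) e2
  rw [h1]
  intro h
  exact S.not_dvd_index (h.trans (relIndex_dvd_index_of_le le_sup_left))

/-- The intersection of a Sylow subgroup with a normal subgroup. -/
def sylowInf (S : Sylow p M) (N : Subgroup M) [N.Normal] : Sylow p N :=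
  IsPGroup.toSylow (P := (S : Subgroup M).subgroupOf N)
    (S.2.comap_of_injective N.subtype N.subtype_injective)
    (relIndex_sylow_normal S N)

lemma sylowInf_map (S : Sylow p M) (N : Subgroup M) [N.Normal] :
    ((sylowInf S N : Sylow p N) : Subgroup N).map N.subtype = (S : Subgroup M) ⊓ N :=
  Subgroup.subgroupOf_map_subtype _ _

/-- The Frattini argument for the Sylow subgroup `S ∩ N` of a normal subgroup `N`. -/
lemma frattini (S : Sylow p M) (N : Subgroup M) [N.Normal] (m : M) :
    ∃ n ∈ N, ∃ a ∈ normalizer (((S : Subgroup M) ⊓ N : Subgroup M) : Set M), m = n * a := by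
  have h := (sylowInf S N).normalizer_sup_eq_top
  rw [sylowInf_map, sup_comm] at h
  have hm : m ∈ N ⊔ normalizer (((S : Subgroup M) ⊓ N : Subgroup M) : Set M) := by
    rw [h]; trivial
  obtain ⟨n, hn, a, ha, rfl⟩ := Subgroup.mem_sup_of_normal_left.1 hm
  exact ⟨n, hn, a, ha, rfl⟩

/-- `TT p V = C(V) (S ∩ TT p V)` for every Sylow `p`-subgroup `S`. -/
lemma TT_factor (S : Sylow p M) (V : Subgroup M) [V.Normal] {t : M} (ht : t ∈ TT p V) :
    ∃ c ∈ centralizer (V : Set M), ∃ s ∈ (S : Subgroup M) ⊓ TT p V, t = c * s := by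
  have h1 := pCore_le (S.mapSurjective (QuotientGroup.mk'_surjective (centralizer (V : Set M))))
    (Subgroup.mem_comap.1 ht)
  obtain ⟨s, hs, hst⟩ := h1
  have hc : t * s⁻¹ ∈ centralizer (V : Set M) := by
    rw [← QuotientGroup.eq_one_iff, QuotientGroup.mk_mul, QuotientGroup.mk_inv]
    change (s : M ⧸ centralizer (V : Set M)) = t at hst
    rw [hst, mul_inv_cancel]
  refine ⟨t * s⁻¹, hc, s, ⟨hs, ?_⟩, by group⟩
  have : s = (t * s⁻¹)⁻¹ * t := by group
  rw [this]
  exact (TT p V).mul_mem ((TT p V).inv_mem (centralizer_le_TT V hc)) ht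

/-- The Frattini argument for `S ∩ TT p V`, whose conjugates under `TT p V` are conjugates under `C(V)`. -/
lemma TT_frattini (S : Sylow p M) (V : Subgroup M) [V.Normal] (m : M) :
    ∃ c ∈ centralizer (V : Set M),
      ∃ n ∈ normalizer (((S : Subgroup M) ⊓ TT p V : Subgroup M) : Set M), m = c * n := by
  obtain ⟨t, ht, a, ha, rfl⟩ := frattini S (TT p V) m
  obtain ⟨c, hc, s, hs, rfl⟩ := TT_factor S V ht
  exact ⟨c, hc, s * a, mul_mem (Subgroup.le_normalizer hs) ha, mul_assoc _ _ _⟩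

/-- If `WW S` lies in a normal subgroup `S0 ≤ S`, it is normal. Its normal closure `V` is again
admissible, by `p`-stability and the Frattini argument, so `V = WW S` by maximality. -/
theorem gs1 (hp2 : p ≠ 2) (hodd : Odd (Nat.card M)) (S : Sylow p M) (S0 : Subgroup M)
    [hS0n : S0.Normal] (h1 : WW (S : Subgroup M) ≤ S0) (h2 : S0 ≤ S) :
    (WW (S : Subgroup M)).Normal := by
  set W := WW (S : Subgroup M) with hW
  have hA := WW_adm (S : Subgroup M)
  rw [← hW] at hA
  set V := normalClosure (W : Set M) with hV
  have hWV : W ≤ V := Subgroup.subset_normalClosure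
  have hVS0 : V ≤ S0 := Subgroup.normalClosure_le_normal h1
  have hVp : IsPGroup p V := S.2.to_le (hVS0.trans h2)
  have hind : ∀ (q : M → Prop), q 1 → (∀ a b, q a → q b → q (a * b)) → (∀ a, q a → q a⁻¹) →
      (∀ g, ∀ w ∈ W, q (g * w * g⁻¹)) → ∀ a ∈ V, q a := by
    intro q h1 h2 h3 h4
    let N : Subgroup M := { carrier := {a | q a}, one_mem' := h1, mul_mem' := fun {a b} => h2 a b,
                            inv_mem' := fun {a} => h3 a }
    have : V ≤ N := by
      rw [hV, normalClosure, closure_le]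
      intro a ha
      rw [Group.mem_conjugatesOfSet_iff] at ha
      obtain ⟨w, hw, hc⟩ := ha
      obtain ⟨g, rfl⟩ := isConj_iff.1 hc
      exact h4 g w hw
    exact fun a ha => this ha
  have hcW : ∀ g, ∀ b ∈ W, ∀ w ∈ W, Commute (g * b * g⁻¹) w := by
    intro g b hb w hw
    have hbS : ∀ g, ∀ b ∈ W, g * b * g⁻¹ ∈ S0 := fun g b hb => hS0n.conj_mem b (h1 hb) g
    refine hA.2.2.2 _ (h2 (hbS g b hb)) (fun w hw => ?_) w hw
    have hws : g⁻¹ * w * g ∈ (S : Subgroup M) := h2 (by simpa using hbS g⁻¹ w hw)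
    have h3 : b * ((g⁻¹ * w * g) * b⁻¹ * (g⁻¹ * w * g)⁻¹) ∈ W :=
      mul_mem hb (hA.2.1 _ hws _ (inv_mem hb))
    have h4 := (hA.2.2.1 b hb _ h3).map (MulAut.conj g).toMonoidHom
    simp only [MulEquiv.toMonoidHom_eq_coe, MonoidHom.coe_coe, MulAut.conj_apply] at h4
    convert h4 using 1
    group
  have hVadm : Adm (S : Subgroup M) V := by
    have hVn : V.Normal := by rw [hV]; infer_instance
    refine ⟨hVS0.trans h2, fun s _ a ha => hVn.conj_mem a ha s, ?_, ?_⟩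
    · refine hind _ (fun b _ => Commute.one_left b)
        (fun a a' h h' b hb => (h b hb).mul_left (h' b hb)) (fun a h b hb => (h b hb).inv_left) ?_
      intro g w hw
      refine hind _ (Commute.one_right _) (fun b b' h h' => h.mul_right h')
        (fun b h => h.inv_right) ?_
      intro g' w' hw'
      have h3 := (hcW (g'⁻¹ * g) w hw w' hw').map (MulAut.conj g').toMonoidHom
      simp only [MulEquiv.toMonoidHom_eq_coe, MonoidHom.coe_coe, MulAut.conj_apply] at h3
      convert h3 using 1
      group
    · intro x hx hq
      have hxT : x ∈ TT p V := pstable hp2 hodd V hVp x hq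
      refine hind _ (Commute.one_right x) (fun b b' h h' => h.mul_right h')
        (fun b h => h.inv_right) ?_
      intro m w hw
      obtain ⟨c, hc, n, hn, rfl⟩ := TT_frattini S V m
      have h3 : c * n * w * (c * n)⁻¹ = n * w * n⁻¹ := by
        have h4 := hc (n * w * n⁻¹) (hVn.conj_mem w (hWV hw) n)
        have h5 : c * n * w * (c * n)⁻¹ = c * (n * w * n⁻¹) * c⁻¹ := by group
        rw [h5, ← h4, mul_inv_cancel_right]
      rw [h3]
      have h6 := mem_norm_iff.1 (inv_mem hn) x ⟨hx, hxT⟩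
      rw [inv_inv] at h6
      have h7 : Commute (n⁻¹ * x * n) w := by
        refine hA.2.2.2 _ h6.1 (fun a ha => ?_) w hw
        have h8 := (hq (n * a * n⁻¹) (hVn.conj_mem a (hWV ha) n)).map (MulAut.conj n⁻¹).toMonoidHom
        simp only [MulEquiv.toMonoidHom_eq_coe, MonoidHom.coe_coe, MulAut.conj_apply, inv_inv] at h8
        convert h8 using 1
        group
      have h8 := h7.map (MulAut.conj n).toMonoidHom
      simp only [MulEquiv.toMonoidHom_eq_coe, MonoidHom.coe_coe, MulAut.conj_apply] at h8
      convert h8 using 1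
      group
  have : W = V := le_antisymm hWV hVadm.le_WW
  rw [this, hV]; infer_instance

/-- The factorization `M = C_M(Q) N_M(WW S)` for a normal `p`-subgroup `Q` of a group of odd order. -/
theorem gs (hp2 : p ≠ 2) (hodd : Odd (Nat.card M)) (S : Sylow p M) (Q : Subgroup M)
    [hQn : Q.Normal] (hQ : IsPGroup p Q) (m : M) :
    ∃ c ∈ centralizer (Q : Set M), ∃ n ∈ normalizer (WW (S : Subgroup M) : Set M), m = c * n := by
  have hA := WW_adm (S : Subgroup M)
  have hQS : Q ≤ S := (le_pCore hQ).trans (pCore_le S)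
  have hWT : WW (S : Subgroup M) ≤ TT p Q := by
    intro w hw
    refine pstable hp2 hodd Q hQ w fun q hq => ?_
    refine hA.2.2.1 w hw _ ?_
    have : w * q * w⁻¹ * q⁻¹ = w * (q * w⁻¹ * q⁻¹) := by group
    rw [this]
    exact mul_mem hw (hA.2.1 q (hQS hq) _ (inv_mem hw))
  obtain ⟨c, hc, n, hn, rfl⟩ := TT_frattini S Q m
  refine ⟨c, hc, n, ?_, rfl⟩
  set S0 := (S : Subgroup M) ⊓ TT p Q with hS0
  set N := normalizer (S0 : Set M) with hN
  have hSN : (S : Subgroup M) ≤ N := by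
    intro s hs
    rw [hN, mem_norm_iff]
    intro t ht
    exact ⟨(S : Subgroup M).mul_mem ((S : Subgroup M).mul_mem hs ht.1) ((S : Subgroup M).inv_mem hs),
      (inferInstance : (TT p Q).Normal).conj_mem t ht.2 s⟩
  have hn0 : (S0.subgroupOf N).Normal := by rw [hN]; infer_instance
  have hWs := WW_subgroupOf hSN
  have hgs := gs1 hp2 (Odd.of_dvd_nat hodd (Subgroup.card_subgroup_dvd_card N)) (S.subtype hSN)
    (S0.subgroupOf N) (by
      rw [Sylow.coe_subtype]
      intro w hw
      have h1 : (w : M) ∈ WW (S : Subgroup M) := by rw [← hWs]; exact ⟨w, hw, rfl⟩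
      exact ⟨WW_le _ h1, hWT h1⟩) (by
      rw [Sylow.coe_subtype]
      intro w hw; exact hw.1)
  rw [Sylow.coe_subtype] at hgs
  rw [mem_norm_iff]
  intro w hw
  rw [← hWs] at hw ⊢
  obtain ⟨w', hw', rfl⟩ := hw
  exact ⟨(⟨n, hn⟩ : N) * w' * (⟨n, hn⟩ : N)⁻¹, hgs.conj_mem w' hw' _, rfl⟩
end
end Acd

/-! ### Conjugation maps and Alperin's fusion theorem -/

namespace Acd
open Subgroup
open scoped Pointwise

section
variable {G : Type} [Group G]

/-- The conjugate `g R g⁻¹`. -/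
def cj (g : G) (R : Subgroup G) : Subgroup G := R.map (MulAut.conj g).toMonoidHom

lemma mem_cj {g : G} {R : Subgroup G} {x : G} : x ∈ cj g R ↔ g⁻¹ * x * g ∈ R := by
  constructor
  · rintro ⟨r, hr, rfl⟩
    have : g⁻¹ * (g * r * g⁻¹) * g = r := by group
    simpa [this] using hr
  · intro h
    exact ⟨_, h, by simp [mul_assoc]⟩

lemma conj_mem_cj {g : G} {R : Subgroup G} {x : G} (hx : x ∈ R) : g * x * g⁻¹ ∈ cj g R :=
  ⟨x, hx, rfl⟩

lemma cj_le {g : G} {R P : Subgroup G} : cj g R ≤ P ↔ ∀ r ∈ R, g * r * g⁻¹ ∈ P := by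
  constructor
  · exact fun h r hr => h (conj_mem_cj hr)
  · rintro h _ ⟨r, hr, rfl⟩; exact h r hr

lemma card_cj (g : G) (R : Subgroup G) : Nat.card (cj g R) = Nat.card R :=
  Subgroup.card_map_of_injective (MulAut.conj g).injective

lemma cj_isPGroup {p : ℕ} {g : G} {R : Subgroup G} (h : IsPGroup p R) : IsPGroup p (cj g R) :=
  h.map _

/-- `g` and `h` induce the same conjugation map on `R`. -/
def Agree (R : Subgroup G) (g h : G) : Prop := ∀ r ∈ R, g * r * g⁻¹ = h * r * h⁻¹

lemma Agree.mul {R : Subgroup G} {g h a b : G} (h1 : Agree R g h) (h2 : Agree (cj g R) a b) :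
    Agree R (a * g) (b * h) := by
  intro r hr
  have e1 : a * g * r * (a * g)⁻¹ = a * (g * r * g⁻¹) * a⁻¹ := by group
  have e2 : b * h * r * (b * h)⁻¹ = b * (h * r * h⁻¹) * b⁻¹ := by group
  rw [e1, e2, ← h1 r hr]
  exact h2 _ (conj_mem_cj hr)

lemma Agree.mul_left {R : Subgroup G} {g h : G} (h1 : Agree R g h) (a : G) :
    Agree R (a * g) (a * h) := h1.mul fun _ _ => rfl

lemma Agree.mono {R R' : Subgroup G} {g h : G} (h1 : Agree R' g h) (hle : R ≤ R') : Agree R g h :=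
  fun r hr => h1 r (hle hr)

lemma Agree.symm {R : Subgroup G} {g h : G} (h1 : Agree R g h) : Agree R h g :=
  fun r hr => (h1 r hr).symm

lemma Agree.trans {R : Subgroup G} {g h k : G} (h1 : Agree R g h) (h2 : Agree R h k) : Agree R g k :=
  fun r hr => (h1 r hr).trans (h2 r hr)

lemma Agree.cj_eq {R : Subgroup G} {g h : G} (h1 : Agree R g h) : cj g R = cj h R := by
  apply le_antisymm
  · exact cj_le.2 fun r hr => h1 r hr ▸ conj_mem_cj hr
  · exact cj_le.2 fun r hr => (h1 r hr).symm ▸ conj_mem_cj hr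

/-- `H` controls the conjugations carrying `R` into `P`. -/
def Ctrl (P H R : Subgroup G) : Prop := ∀ g, cj g R ≤ P → ∃ h ∈ H, Agree R g h

variable [Finite G] {p : ℕ} [hp : Fact p.Prime]

lemma cj_le_sylow {T : Subgroup G} (hT : IsPGroup p T) (P : Sylow p G) : ∃ g, cj g T ≤ P := by
  obtain ⟨Q, hQ⟩ := hT.exists_le_sylow
  obtain ⟨g, rfl⟩ := MulAction.exists_smul_eq G Q P
  refine ⟨g, cj_le.2 fun r hr => (mem_sylow_conj Q g _).2 ?_⟩
  have : g⁻¹ * (g * r * g⁻¹) * g = r := by group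
  rw [this]; exact hQ hr

/-- A `p`-subgroup of `N` is conjugate by an element of `N` into a given Sylow subgroup of `N`. -/
lemma cj_le_sylow_sub {N T : Subgroup G} (hTN : T ≤ N) (hT : IsPGroup p T) (S : Sylow p N) :
    ∃ n ∈ N, cj n T ≤ (S : Subgroup N).map N.subtype := by
  obtain ⟨n, hn⟩ := cj_le_sylow (T := T.subgroupOf N)
    (hT.comap_of_injective N.subtype N.subtype_injective) S
  refine ⟨n, n.2, cj_le.2 fun r hr => ?_⟩
  exact ⟨n * ⟨r, hTN hr⟩ * n⁻¹, cj_le.1 hn ⟨r, hTN hr⟩ hr, rfl⟩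

/-- Some Sylow subgroup of `N`, viewed in `G`, contains a given `p`-subgroup of `N`. -/
lemma exists_sylow_sub {N T : Subgroup G} (hTN : T ≤ N) (hT : IsPGroup p T) :
    ∃ S : Sylow p N, T ≤ (S : Subgroup N).map N.subtype := by
  obtain ⟨S, hS⟩ := (hT.comap_of_injective N.subtype N.subtype_injective).exists_le_sylow
  exact ⟨S, fun r hr => ⟨⟨r, hTN hr⟩, hS (x := ⟨r, hTN hr⟩) hr, rfl⟩⟩

lemma sylow_sub_le {N : Subgroup G} (S : Sylow p N) : (S : Subgroup N).map N.subtype ≤ N := by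
  rintro _ ⟨x, _, rfl⟩; exact x.2

lemma sylow_sub_isPGroup {N : Subgroup G} (S : Sylow p N) :
    IsPGroup p ((S : Subgroup N).map N.subtype) := S.2.map _

lemma lt_normalizer {R P : Subgroup G} (hP : IsPGroup p P) (hR : R < P) :
    Nat.card R < Nat.card (P ⊓ normalizer (R : Set G) : Subgroup G) := by
  have hnil : Group.IsNilpotent P := hP.isNilpotent
  have h1 : R.subgroupOf P < ⊤ := by
    rw [lt_top_iff_ne_top]
    intro h
    exact hR.not_ge (Subgroup.subgroupOf_eq_top.1 h)
  have h2 := Group.normalizerCondition_of_isNilpotent (G := P) _ h1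
  obtain ⟨x, hx1, hx2⟩ := SetLike.exists_of_lt h2
  have hlt : R < P ⊓ normalizer (R : Set G) := by
    refine lt_of_le_of_ne (le_inf hR.le Subgroup.le_normalizer) fun h => hx2 ?_
    change (x : G) ∈ R
    rw [h]
    refine ⟨x.2, mem_norm_iff.2 fun r hr => ?_⟩
    exact (mem_norm_iff.1 hx1) ⟨r, hR.le hr⟩ hr
  exact Set.ncard_lt_ncard (SetLike.coe_ssubset_coe.2 hlt) (Set.toFinite _) |>.trans_eq rfl

lemma cj_eq_of_mem {R : Subgroup G} {n : G} (hn : n ∈ normalizer (R : Set G)) : cj n R = R :=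
  map_conj_of_mem hn

lemma mem_norm_of_cj_le {R : Subgroup G} {n : G} (h : cj n R ≤ R) : n ∈ normalizer (R : Set G) :=
  mem_norm_iff.2 (cj_le.1 h)

lemma cj_mul (a b : G) (R : Subgroup G) : cj (a * b) R = cj a (cj b R) := by
  ext x; simp only [mem_cj]
  have : (a * b)⁻¹ * x * (a * b) = b⁻¹ * (a⁻¹ * x * a) * b := by group
  rw [this]

lemma cj_mono {R R' : Subgroup G} (h : R ≤ R') (g : G) : cj g R ≤ cj g R' := Subgroup.map_mono h

lemma cj_one (R : Subgroup G) : cj 1 R = R := by ext x; simp [mem_cj]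

lemma conj_normalizer_cj {R : Subgroup G} {n k : G} (hn : n ∈ normalizer (R : Set G)) :
    k * n * k⁻¹ ∈ normalizer (cj k R : Set G) := by
  refine mem_norm_of_cj_le ?_
  rw [← cj_mul, inv_mul_cancel_right, cj_mul, cj_eq_of_mem hn]

/-- `R` is fully normalized in `P`: every `p`-subgroup of `N_G(R)` is conjugate within `N_G(R)` to a
subgroup of `P`. -/
def FullyNorm (p : ℕ) (P R : Subgroup G) : Prop :=
  ∀ T : Subgroup G, IsPGroup p T → T ≤ normalizer (R : Set G) →
    ∃ n ∈ normalizer (R : Set G), cj n T ≤ P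

/-- A form of Alperin's fusion theorem: a subgroup `H ≥ N_G(P)` controls all conjugations between
subgroups of `P` once it controls the automorphisms induced by `N_G(R)` on each proper fully
normalized `R`, where control for larger subgroups of `P` may be assumed. -/
theorem alperin (P : Sylow p G) (H : Subgroup G) (hH : normalizer ((P : Subgroup G) : Set G) ≤ H)
    (hloc : ∀ R : Subgroup G, R < P → FullyNorm p P R →
      (∀ R' : Subgroup G, R' ≤ P → Nat.card R < Nat.card R' → Ctrl P H R') →
      ∀ m ∈ normalizer (R : Set G), ∃ h ∈ H, Agree R m h) :
    ∀ R : Subgroup G, R ≤ P → Ctrl P H R := by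
  have main : ∀ n : ℕ, ∀ R : Subgroup G, R ≤ P → Nat.card P - Nat.card R = n → Ctrl P H R := by
    intro n
    induction n using Nat.strong_induction_on with
    | _ n ih =>
    intro R hRP hn g hg
    by_cases hRP' : R = P
    · subst hRP'
      exact ⟨g, hH (mem_norm_of_cj_le hg), fun _ _ => rfl⟩
    have hlt : R < P := lt_of_le_of_ne hRP hRP'
    have hcle : ∀ R' : Subgroup G, R' ≤ P → Nat.card R' ≤ Nat.card P :=
      fun R' h => Subgroup.card_le_of_le h
    have hclt : Nat.card R < Nat.card P :=
      (lt_normalizer P.2 hlt).trans_le (hcle _ inf_le_left)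
    have hih : ∀ R' : Subgroup G, R' ≤ P → Nat.card R < Nat.card R' → Ctrl P H R' :=
      fun R' h1 h2 => ih _ (by have := hcle R' h1; omega) R' h1 rfl
    -- a fully normalized conjugate `R1` of `R`
    obtain ⟨T, hT⟩ := exists_sylow_sub (p := p) (Subgroup.le_normalizer (H := R)) (P.2.to_le hRP)
    obtain ⟨k, hk⟩ := cj_le_sylow (sylow_sub_isPGroup T) P
    set R1 := cj k R with hR1
    have hfn : FullyNorm p (P : Subgroup G) R1 := by
      intro T' hT' hTn
      have h1 : cj k⁻¹ T' ≤ normalizer (R : Set G) := by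
        refine cj_le.2 fun t ht => ?_
        have := conj_normalizer_cj (k := k⁻¹) (hTn ht)
        rwa [hR1, ← cj_mul, inv_mul_cancel, cj_one] at this
      obtain ⟨n, hn, hn2⟩ := cj_le_sylow_sub h1 (cj_isPGroup hT') T
      refine ⟨k * n * k⁻¹, conj_normalizer_cj hn, ?_⟩
      rw [cj_mul, cj_mul]
      exact (cj_mono hn2 k).trans hk
    have hcR1 : Nat.card R1 = Nat.card R := card_cj k R
    have hR1P : R1 < P := by
      refine lt_of_le_of_ne ((cj_mono hT k).trans hk) fun h => ?_
      rw [h] at hcR1; exact hclt.ne' hcR1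
    have hloc1 := hloc R1 hR1P hfn (by rw [hcR1]; exact hih)
    have claim : ∀ (R2 : Subgroup G) (u : G), R2 ≤ P → cj u R2 = R1 → ∃ h ∈ H, Agree R2 u h := by
      intro R2 u hR2 hu
      have hc2 : Nat.card R2 = Nat.card R := by rw [← hcR1, ← hu, card_cj]
      have hlt2 : R2 < P := lt_of_le_of_ne hR2 fun h => by
        rw [h] at hc2; exact hclt.ne' hc2
      have hT2 := lt_normalizer P.2 hlt2
      set T2 := (P : Subgroup G) ⊓ normalizer (R2 : Set G) with hT2'
      have hRT : R2 ≤ T2 := le_inf hR2 Subgroup.le_normalizer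
      obtain ⟨n, hn, hn2⟩ := hfn (cj u T2) (cj_isPGroup (P.2.to_le inf_le_left)) (by
        refine cj_le.2 fun t ht => ?_
        have := conj_normalizer_cj (k := u) ht.2
        rwa [hu] at this)
      rw [← cj_mul] at hn2
      obtain ⟨h, hh, hag⟩ := hih T2 inf_le_left (hc2 ▸ hT2) _ hn2
      obtain ⟨h', hh', hag'⟩ := hloc1 n⁻¹ (inv_mem hn)
      refine ⟨h' * h, mul_mem hh' hh, ?_⟩
      have h3 : cj (n * u) R2 = R1 := by rw [cj_mul, hu, cj_eq_of_mem hn]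
      have := (hag.mono hRT).mul (a := n⁻¹) (b := h') (by rw [h3]; exact hag')
      rwa [inv_mul_cancel_left] at this
    obtain ⟨h1, hh1, ha1⟩ := claim (cj g R) (k * g⁻¹) hg (by rw [← cj_mul, inv_mul_cancel_right])
    obtain ⟨h2, hh2, ha2⟩ := claim R k hRP rfl
    refine ⟨h1⁻¹ * h2, mul_mem (inv_mem hh1) hh2, fun r hr => ?_⟩
    have e1 := ha1 _ (conj_mem_cj (g := g) hr)
    have e2 := ha2 r hr
    have e3 : k * g⁻¹ * (g * r * g⁻¹) * (k * g⁻¹)⁻¹ = k * r * k⁻¹ := by group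
    rw [e3, e2] at e1
    have e4 : h1⁻¹ * h2 * r * (h1⁻¹ * h2)⁻¹ = h1⁻¹ * (h2 * r * h2⁻¹) * h1 := by group
    rw [e4, e1]; group
  exact fun R hR => main _ R hR rfl
end
end Acd

/-! ### The normalizer of `WW P` controls `p`-fusion -/

namespace Acd
open Subgroup
open scoped Pointwise

section
variable {G : Type} [Group G] [Finite G] {p : ℕ} [hp : Fact p.Prime]

/-- `N_G(WW P)` controls `p`-fusion: every conjugation map between subgroups of a Sylow subgroup `P`
is induced by an element of `N_G(WW P)`. -/
def FC (p : ℕ) (G : Type) [Group G] : Prop :=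
  ∀ P : Sylow p G, ∀ R : Subgroup G, R ≤ P → Ctrl P (normalizer (WW (P : Subgroup G) : Set G)) R

lemma fc_sub {L : Subgroup G} (hL : FC p L) (S : Sylow p L) {R : Subgroup G}
    (hR : R ≤ (S : Subgroup L).map L.subtype) {g : G} (hg : g ∈ L)
    (hgR : cj g R ≤ (S : Subgroup L).map L.subtype) :
    ∃ h ∈ L, h ∈ normalizer (WW ((S : Subgroup L).map L.subtype) : Set G) ∧ Agree R g h := by
  have hRL : R ≤ L := hR.trans (sylow_sub_le S)
  have key : ∀ x : L, (x : G) ∈ (S : Subgroup L).map L.subtype → x ∈ (S : Subgroup L) := by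
    rintro x ⟨y, hy, hxy⟩
    have : y = x := Subtype.ext hxy
    exact this ▸ hy
  obtain ⟨h, hh, hA⟩ := hL S (R.subgroupOf L) (fun x hx => key x (hR hx)) ⟨g, hg⟩
    (cj_le.2 fun r hr => key _ (cj_le.1 hgR r hr))
  refine ⟨h, h.2, ?_, ?_⟩
  · rw [WW_map _ L.subtype_injective, mem_norm_iff]
    rintro _ ⟨w, hw, rfl⟩
    exact ⟨h * w * h⁻¹, mem_norm_iff.1 hh w hw, rfl⟩
  · intro r hr
    have := hA ⟨r, hRL hr⟩ hr
    exact congrArg Subtype.val this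

lemma fc_sub' {L : Subgroup G} (hL : FC p L) (P : Sylow p G) (hPL : P ≤ L) {R : Subgroup G}
    (hR : R ≤ P) {g : G} (hg : g ∈ L) (hgR : cj g R ≤ P) :
    ∃ h ∈ L, h ∈ normalizer (WW (P : Subgroup G) : Set G) ∧ Agree R g h := by
  have e : ((P.subtype hPL : Sylow p L) : Subgroup L).map L.subtype = P := by
    rw [Sylow.coe_subtype, Subgroup.subgroupOf_map_subtype, inf_of_le_left hPL]
  have := fc_sub hL (P.subtype hPL) (R := R) (by rw [e]; exact hR) hg (by rw [e]; exact hgR)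
  rwa [e] at this

lemma sylow_le_nWW (P : Subgroup G) : P ≤ normalizer (WW P : Set G) :=
  le_normalizer.trans (normalizer_le_WW P)

/-- The case where `L = P C_G(O_p(G))` is known to satisfy fusion control: by `gs` with
`Q = O_p(G)`, every element of `G` is a product of one in `N_G(WW P)` and one in `L`. -/
lemma fc_case1 (hp2 : p ≠ 2) (hodd : Odd (Nat.card G)) (P : Sylow p G)
    (hL : FC p ((P : Subgroup G) ⊔ centralizer (pCore p G : Set G) : Subgroup G))
    (R : Subgroup G) (hR : R ≤ P) :
    Ctrl P (normalizer (WW (P : Subgroup G) : Set G)) R := by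
  intro g hg
  set L : Subgroup G := (P : Subgroup G) ⊔ centralizer (pCore p G : Set G) with hLd
  set H : Subgroup G := normalizer (WW (P : Subgroup G) : Set G) with hH
  have hPL : (P : Subgroup G) ≤ L := le_sup_left
  have hPH : (P : Subgroup G) ≤ H := sylow_le_nWW _
  obtain ⟨c0, hc0, n0, hn0, e⟩ := gs hp2 hodd P (pCore p G) pCore_isPGroup g⁻¹
  have hc : c0⁻¹ ∈ L := (le_sup_right : _ ≤ L) (inv_mem hc0)
  set c := c0⁻¹
  have hn : n0⁻¹ ∈ H := inv_mem hn0
  set n := n0⁻¹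
  have hgc : g = n * c := by rw [← inv_inv g, e]; simp [n, c]
  have h1 : cj c R ≤ L ⊓ H := by
    refine cj_le.2 fun r hr => ⟨L.mul_mem (L.mul_mem hc (hPL (hR hr))) (inv_mem hc), ?_⟩
    have := hPH (cj_le.1 hg r hr)
    rw [hgc] at this
    have h2 := H.mul_mem (H.mul_mem (inv_mem hn) this) hn
    have e : n⁻¹ * (n * c * r * (n * c)⁻¹) * n = c * r * c⁻¹ := by group
    rwa [e] at h2
  have hPLH : (P : Subgroup G) ≤ L ⊓ H := le_inf hPL hPH
  have e : ((P.subtype hPLH : Sylow p (L ⊓ H : Subgroup G)) : Subgroup (L ⊓ H : Subgroup G)).map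
      (L ⊓ H).subtype = P := by
    rw [Sylow.coe_subtype, Subgroup.subgroupOf_map_subtype, inf_of_le_left hPLH]
  obtain ⟨l, hl, hlc⟩ := cj_le_sylow_sub h1 (cj_isPGroup (P.2.to_le hR)) (P.subtype hPLH)
  rw [e, ← cj_mul] at hlc
  obtain ⟨h, -, hh, hA⟩ := fc_sub' hL P hPL hR (L.mul_mem hl.1 hc) hlc
  refine ⟨n * l⁻¹ * h, H.mul_mem (H.mul_mem hn (inv_mem hl.2)) hh, ?_⟩
  have := hA.mul_left (n * l⁻¹)
  have e : n * l⁻¹ * (l * c) = g := by rw [hgc]; group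
  rwa [e] at this

/-- If the quotient is a `p`-group, Sylow times kernel is everything. -/
lemma sylow_mul {M : Type} [Group M] [Finite M] (T : Sylow p M) (C : Subgroup M) [C.Normal]
    (hC : ∀ z : M, (orderOf z).Coprime p → z ∈ C) (m : M) : ∃ t ∈ T, ∃ c ∈ C, m = t * c := by
  have hq : IsPGroup p (M ⧸ C) := by
    rintro ⟨z⟩
    obtain ⟨k, u, hu, e⟩ := Nat.exists_eq_pow_mul_and_not_dvd (orderOf_pos z).ne' p hp.out.ne_one
    refine ⟨k, (QuotientGroup.eq_one_iff (z ^ p ^ k)).2 (hC _ ?_)⟩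
    rw [orderOf_pow' _ (pow_ne_zero _ hp.out.ne_zero), e, Nat.gcd_eq_right (Dvd.intro _ rfl),
      Nat.mul_div_cancel_left _ (pow_pos hp.out.pos _)]
    exact ((Nat.Prime.coprime_iff_not_dvd hp.out).2 hu).symm
  have h1 : (T : Subgroup M).map (QuotientGroup.mk' C) = ⊤ :=
    ((T.mapSurjective (QuotientGroup.mk'_surjective C)).is_maximal' (Q := ⊤)
      (hq.to_subgroup _) le_top).symm
  have h2 : QuotientGroup.mk' C m ∈ (T : Subgroup M).map (QuotientGroup.mk' C) := by
    rw [h1]; trivial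
  obtain ⟨t, ht, hte⟩ := h2
  exact ⟨t, ht, t⁻¹ * m, QuotientGroup.eq.1 hte, by group⟩

lemma iter_conj {z r q : G} (h1 : z * r * z⁻¹ = q * r) (h2 : Commute z q) (n : ℕ) :
    z ^ n * r * (z ^ n)⁻¹ = q ^ n * r := by
  induction n with
  | zero => simp
  | succ n ih =>
    have e : z ^ (n+1) * r * (z ^ (n+1))⁻¹ = z * (z ^ n * r * (z ^ n)⁻¹) * z⁻¹ := by
      rw [pow_succ']; group
    have e2 : z * (q ^ n * r) * z⁻¹ = z * q ^ n * z⁻¹ * (z * r * z⁻¹) := by group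
    rw [e, ih, e2, h1, (h2.pow_right n).eq, mul_inv_cancel_right, pow_succ, mul_assoc]

/-- A `p'`-element `z` centralizing `R` modulo `Q` centralizes `R`, when `G` induces on `Q` only a
`p`-group of automorphisms: `z` then commutes with `Q`, and `r ↦ [z, r]` takes values in `Q`, of
order prime to that of `z`. -/
lemma p_prime_centralizes {P Q R : Subgroup G} [Q.Normal] (hP : IsPGroup p P) (hQ : IsPGroup p Q)
    (htop : P ⊔ centralizer (Q : Set G) = ⊤) {z : G} (hz : (orderOf z).Coprime p)
    (hzR : ∀ r ∈ R, z * r * z⁻¹ * r⁻¹ ∈ Q) : ∀ r ∈ R, z * r * z⁻¹ = r := by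
  have hzQ : z ∈ centralizer (Q : Set G) := by
    have h1 : IsPGroup p (G ⧸ centralizer (Q : Set G)) := by
      have h2 : P.map (QuotientGroup.mk' (centralizer (Q : Set G))) = ⊤ := by
        have := congrArg (Subgroup.map (QuotientGroup.mk' (centralizer (Q : Set G)))) htop
        rw [Subgroup.map_sup, QuotientGroup.map_mk'_self, sup_bot_eq,
          Subgroup.map_top_of_surjective _ (QuotientGroup.mk'_surjective _)] at this
        exact this
      have h3 := hP.map (QuotientGroup.mk' (centralizer (Q : Set G)))
      rw [h2] at h3
      exact h3.of_equiv Subgroup.topEquiv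
    obtain ⟨k, hk⟩ := h1 (z : G ⧸ centralizer (Q : Set G))
    have h4 : orderOf (z : G ⧸ centralizer (Q : Set G)) ∣ p ^ k := orderOf_dvd_of_pow_eq_one hk
    have h5 : orderOf (z : G ⧸ centralizer (Q : Set G)) ∣ orderOf z :=
      orderOf_map_dvd (QuotientGroup.mk' (centralizer (Q : Set G))) z
    have h6 := Nat.eq_one_of_dvd_coprimes (hz.pow_right k) h5 h4
    exact (QuotientGroup.eq_one_iff z).1 (orderOf_eq_one_iff.1 h6)
  intro r hr
  set q := z * r * z⁻¹ * r⁻¹ with hq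
  have h1 : z * r * z⁻¹ = q * r := by rw [hq]; group
  have h2 : Commute z q := (hzQ q (hzR r hr)).symm
  have h3 := iter_conj h1 h2 (orderOf z)
  rw [pow_orderOf_eq_one] at h3
  have h4 : q ^ orderOf z = 1 := by simpa using h3
  obtain ⟨k, hk⟩ := hQ ⟨q, hzR r hr⟩
  have h5 : q ^ p ^ k = 1 := congrArg Subtype.val hk
  have h6 := Nat.eq_one_of_dvd_coprimes (hz.pow_right k) (orderOf_dvd_of_pow_eq_one h4)
    (orderOf_dvd_of_pow_eq_one h5)
  rw [h1, orderOf_eq_one_iff.1 h6, one_mul]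

/-- The case `G = P C_G(O_p(G))` with `P` not normal. The preimage `H` of the normalizer of `WW` in
`G / O_p(G)` is a proper subgroup which controls fusion, and fusion control holds inside `H`. -/
lemma fc_case2b (P : Sylow p G) (htop : (P : Subgroup G) ⊔ centralizer (pCore p G : Set G) = ⊤)
    (hne : ¬ (P : Subgroup G) ≤ pCore p G) (hquot : FC p (G ⧸ pCore p G))
    (hsub : ∀ L : Subgroup G, L ≠ ⊤ → FC p L)
    (R : Subgroup G) (hR : R ≤ P) :
    Ctrl P (normalizer (WW (P : Subgroup G) : Set G)) R := by
  set Q := pCore p G with hQd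
  have hQP : Q ≤ P := pCore_le P
  set π := QuotientGroup.mk' Q with hπ
  have hπs : Function.Surjective π := QuotientGroup.mk'_surjective Q
  have hπk : ∀ x, π x = 1 ↔ x ∈ Q := fun x => QuotientGroup.eq_one_iff x
  set P' : Sylow p (G ⧸ Q) := P.mapSurjective hπs with hP'
  have hP'c : (P' : Subgroup (G ⧸ Q)) = (P : Subgroup G).map π := rfl
  set H : Subgroup G := (normalizer (WW (P' : Subgroup (G ⧸ Q)) : Set (G ⧸ Q))).comap π with hH
  have hPH : normalizer ((P : Subgroup G) : Set G) ≤ H := by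
    intro g hg
    refine normalizer_le_WW _ (mem_norm_iff.2 ?_)
    rintro _ ⟨x, hx, rfl⟩
    exact ⟨g * x * g⁻¹, mem_norm_iff.1 hg x hx, by simp⟩
  have hPH' : (P : Subgroup G) ≤ H := le_normalizer.trans hPH
  have hHtop : H ≠ ⊤ := by
    intro h
    have hn : (WW (P' : Subgroup (G ⧸ Q))).Normal := by
      constructor
      intro w hw g
      obtain ⟨g, rfl⟩ := hπs g
      have : g ∈ H := h ▸ mem_top g
      exact mem_norm_iff.1 this w hw
    have hX : ((WW (P' : Subgroup (G ⧸ Q))).comap π) ≤ P := by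
      intro x hx
      obtain ⟨y, hy, hyx⟩ := WW_le _ hx
      have : y⁻¹ * x ∈ Q := QuotientGroup.eq.1 hyx
      have := (P : Subgroup G).mul_mem hy (hQP this)
      rwa [mul_inv_cancel_left] at this
    have hXQ := le_pCore (P.2.to_le hX)
    have hb : WW (P' : Subgroup (G ⧸ Q)) = ⊥ := by
      rw [eq_bot_iff]
      intro w hw
      obtain ⟨g, rfl⟩ := hπs w
      exact (hπk g).2 (hXQ hw)
    refine WW_ne_bot P'.2 ?_ hb
    intro h0
    apply hne
    intro x hx
    have h1 : π x ∈ (P' : Subgroup (G ⧸ Q)) := ⟨x, hx, rfl⟩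
    rw [h0] at h1
    exact (hπk x).1 h1
  have hctrl : Ctrl P H R := by
    refine alperin P H hPH ?_ R hR
    intro R hRP hfn IH m hm
    by_cases hQR : Q ≤ R
    swap
    · have hlt : R < R ⊔ Q := by
        refine lt_of_le_of_ne le_sup_left fun h => hQR ?_
        rw [h]; exact le_sup_right
      have h1 : Nat.card R < Nat.card (R ⊔ Q : Subgroup G) :=
        Set.ncard_lt_ncard hlt (Set.toFinite _)
      obtain ⟨h, hh, hA⟩ := IH (R ⊔ Q) (sup_le hRP.le hQP) h1 m (by
        rw [cj, Subgroup.map_sup]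
        refine sup_le ?_ ?_
        · exact (cj_eq_of_mem hm).le.trans hRP.le
        · refine cj_le.2 fun r hr => hQP (pCore_normal.conj_mem r hr m))
      exact ⟨h, hh, hA.mono le_sup_left⟩
    obtain ⟨h', hh', hA'⟩ := hquot P' (R.map π) (Subgroup.map_mono hRP.le) (π m) (by
      refine cj_le.2 ?_
      rintro _ ⟨r, hr, rfl⟩
      exact ⟨m * r * m⁻¹, hRP.le (mem_norm_iff.1 hm r hr), by simp⟩)
    obtain ⟨h, rfl⟩ := hπs h'
    have hhH : h ∈ H := hh'
    set K : Subgroup G := (centralizer ((R.map π : Subgroup (G ⧸ Q)) : Set (G ⧸ Q))).comap π with hK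
    have hKm : ∀ k, k ∈ K ↔ ∀ r ∈ R, k * r * k⁻¹ * r⁻¹ ∈ Q := by
      intro k
      constructor
      · intro hk r hr
        rw [← hπk]
        have := hk (π r) ⟨r, hr, rfl⟩
        simp only [map_mul, map_inv, ← this]; group
      · rintro hk _ ⟨r, hr, rfl⟩
        have := (hπk _).2 (hk r hr)
        simp only [map_mul, map_inv] at this
        rw [mul_inv_eq_one, mul_inv_eq_iff_eq_mul] at this
        exact this.symm
    have hKN : K ≤ normalizer (R : Set G) := by
      intro k hk
      refine mem_norm_iff.2 fun r hr => ?_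
      have := R.mul_mem (hQR ((hKm k).1 hk r hr)) hr
      rwa [inv_mul_cancel_right] at this
    set k := h⁻¹ * m with hkd
    have hk : k ∈ K := by
      rw [hKm]
      intro r hr
      have := hA' (π r) ⟨r, hr, rfl⟩
      rw [← hπk]
      simp only [hkd, map_mul, map_inv]
      have e : (π h)⁻¹ * π m * π r * ((π h)⁻¹ * π m)⁻¹ * (π r)⁻¹ =
        (π h)⁻¹ * (π m * π r * (π m)⁻¹) * π h * (π r)⁻¹ := by group
      rw [e, this]; group
    obtain ⟨T⟩ : Nonempty (Sylow p K) := inferInstance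
    obtain ⟨n, hn, hnT⟩ := hfn ((T : Subgroup K).map K.subtype) (sylow_sub_isPGroup T)
      ((sylow_sub_le T).trans hKN)
    have hk' : n⁻¹ * k * n ∈ K := by
      rw [hKm]
      intro r hr
      have h1 := (hKm k).1 hk _ (mem_norm_iff.1 hn r hr)
      have h2 := (pCore_normal (p := p) (G := G)).conj_mem _ h1 n⁻¹
      convert h2 using 1
      group
    have hcn : ((centralizer (R : Set G)).subgroupOf K).Normal := by
      constructor
      intro c hc g r hr
      have hg := inv_mem (hKN g.2)
      have := hc _ (mem_norm_iff.1 hg r hr)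
      change r * (g * c * (g : G)⁻¹) = g * c * (g : G)⁻¹ * r
      calc r * (g * c * (g : G)⁻¹) = g * ((g : G)⁻¹ * r * (g : G)⁻¹⁻¹ * c) * (g : G)⁻¹ := by group
        _ = g * (c * ((g : G)⁻¹ * r * (g : G)⁻¹⁻¹)) * (g : G)⁻¹ := by
          congr 2
        _ = _ := by group
    obtain ⟨t, ht, c, hc, e⟩ := sylow_mul T ((centralizer (R : Set G)).subgroupOf K) (by
      intro z hz r hr
      have := p_prime_centralizes P.2 pCore_isPGroup htop (z := (z : G)) (R := R)
        (by rwa [Subgroup.orderOf_coe]) ((hKm z).1 z.2) r hr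
      rw [mul_inv_eq_iff_eq_mul] at this
      exact this.symm) ⟨_, hk'⟩
    have e' : n⁻¹ * k * n = t * c := congrArg Subtype.val e
    refine ⟨h * (n * t * n⁻¹), H.mul_mem hhH (hPH' (cj_le.1 hnT t ⟨t, ht, rfl⟩)), ?_⟩
    intro r hr
    have hmk : m = h * (n * t * n⁻¹) * (n * c * n⁻¹) := by
      have : k = n * (n⁻¹ * k * n) * n⁻¹ := by group
      have h3 : m = h * k := by rw [hkd]; group
      rw [h3, this, e']; group
    have h4 : (n⁻¹ * r * n) * (c : G) = c * (n⁻¹ * r * n) := by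
      have := mem_norm_iff.1 (inv_mem hn) r hr
      rw [inv_inv] at this
      exact hc _ this
    have h5 : n * c * n⁻¹ * r * (n * c * n⁻¹)⁻¹ = r := by
      calc n * c * n⁻¹ * r * (n * c * n⁻¹)⁻¹ = n * (c * (n⁻¹ * r * n)) * (c : G)⁻¹ * n⁻¹ := by group
        _ = _ := by rw [← h4]; group
    calc m * r * m⁻¹ = h * (n * t * n⁻¹) * (n * c * n⁻¹ * r * (n * c * n⁻¹)⁻¹) *
          (h * (n * t * n⁻¹))⁻¹ := by rw [hmk]; group
      _ = _ := by rw [h5]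
  intro g hg
  obtain ⟨h, hh, hA⟩ := hctrl g hg
  obtain ⟨h', -, hh', hA'⟩ := fc_sub' (hsub H hHtop) P hPH' hR hh (hA.cj_eq ▸ hg)
  exact ⟨h', hh', hA.trans hA'⟩

/-- The case `O_p(G) = 1`. By Alperin's theorem an element `m` of some `N_G(R)` has to be treated;
`gs` replaces it by one normalizing `WW S` for a Sylow subgroup `S` of `N_G(R)`. As `N_G(WW T)` is
proper for each `T ≥ S`, fusion control in it allows `T` to be enlarged up to a Sylow subgroup of `G`. -/
lemma fc_case2c (hp2 : p ≠ 2) (hodd : Odd (Nat.card G)) (P : Sylow p G) (hQ : pCore p G = ⊥)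
    (hsub : ∀ L : Subgroup G, L ≠ ⊤ → FC p L)
    (R : Subgroup G) (hR : R ≤ P) :
    Ctrl P (normalizer (WW (P : Subgroup G) : Set G)) R := by
  set H := normalizer (WW (P : Subgroup G) : Set G) with hH
  refine alperin P H (normalizer_le_WW _) ?_ R hR
  clear hR R
  intro R hRP hfn IH m hm
  by_cases hRb : R = ⊥
  · refine ⟨1, H.one_mem, fun r hr => ?_⟩
    rw [hRb, Subgroup.mem_bot] at hr
    simp [hr]
  set N := normalizer (R : Set G) with hN
  have hRN : R ≤ N := le_normalizer
  obtain ⟨S, hS⟩ := exists_sylow_sub (N := N) (T := (P : Subgroup G) ⊓ N) inf_le_right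
    (P.2.to_le inf_le_left)
  set S' := (S : Subgroup N).map N.subtype with hS'
  have hoddN : Odd (Nat.card N) := hodd.of_dvd_nat (Subgroup.card_subgroup_dvd_card N)
  obtain ⟨c, hc, n, hn, e⟩ := gs hp2 hoddN S (R.subgroupOf N)
    ((P.2.to_le hRP.le).comap_of_injective N.subtype N.subtype_injective) ⟨m, hm⟩
  have hmn : m = c * n := congrArg Subtype.val e
  have hAmn : Agree R m n := by
    intro r hr
    have h1 : (n : G) * r * (n : G)⁻¹ ∈ R := mem_norm_iff.1 n.2 r hr
    have h2 := congrArg Subtype.val (hc (⟨_, hRN h1⟩ : N) h1)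
    change (n : G) * r * (n : G)⁻¹ * c = c * (n * r * (n : G)⁻¹) at h2
    calc m * r * m⁻¹ = c * (n * r * (n : G)⁻¹) * (c : G)⁻¹ := by rw [hmn]; group
      _ = _ := by rw [← h2]; group
  have hn' : (n : G) ∈ normalizer (WW S' : Set G) := by
    rw [hS', WW_map _ N.subtype_injective, mem_norm_iff]
    rintro _ ⟨w, hw, rfl⟩
    exact ⟨n * w * n⁻¹, mem_norm_iff.1 hn w hw, rfl⟩
  -- a largest `T ≥ S'` such that the action of `m` on `R` is realised in `N(WW T)`
  obtain ⟨T, ⟨hTp, hST, m', hm', hAm'⟩, hTmax⟩ := Set.Finite.exists_maximalFor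
    (fun T : Subgroup G => Nat.card T)
    {T : Subgroup G | IsPGroup p T ∧ S' ≤ T ∧ ∃ m' ∈ normalizer (WW T : Set G), Agree R m m'}
    (Set.toFinite _) ⟨S', sylow_sub_isPGroup S, le_rfl, n, hn', hAmn⟩
  have hRT : R ≤ T := (le_inf hRP.le hRN).trans (hS.trans hST)
  set L := normalizer (WW T : Set G) with hL
  have hLtop : L ≠ ⊤ := by
    intro h
    have : (WW T).Normal := normalizer_eq_top_iff.1 h
    have h1 := le_pCore (hTp.to_le (WW_le T))
    rw [hQ, le_bot_iff] at h1
    refine WW_ne_bot hTp (fun hb => hRb ?_) h1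
    rw [hb, le_bot_iff] at hRT; exact hRT
  obtain ⟨S1, hS1⟩ := exists_sylow_sub (sylow_le_nWW T) hTp
  set S1' := (S1 : Subgroup L).map L.subtype with hS1'
  have hcR : cj m' R = R := by rw [← hAm'.cj_eq]; exact cj_eq_of_mem hm
  obtain ⟨h, hhL, hh, hAh⟩ := fc_sub (hsub L hLtop) S1 (hRT.trans hS1) hm'
    (by rw [hcR]; exact hRT.trans hS1)
  have hcard : Nat.card S1' ≤ Nat.card T :=
    hTmax (j := S1') ⟨sylow_sub_isPGroup S1, hST.trans hS1, h, hh, hAm'.trans hAh⟩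
      (Set.ncard_le_ncard hS1 (Set.toFinite _))
  obtain ⟨P2, hP2⟩ := hTp.exists_le_sylow
  have hTP2 : T = P2 := by
    by_contra hne
    have h1 := lt_normalizer P2.2 (lt_of_le_of_ne hP2 hne)
    obtain ⟨l, hl, hlT⟩ := cj_le_sylow_sub (N := L)
      (T := (P2 : Subgroup G) ⊓ normalizer (T : Set G))
      (inf_le_right.trans (normalizer_le_WW T)) (P2.2.to_le inf_le_left) S1
    have h2 := Set.ncard_le_ncard hlT (Set.toFinite _)
    have h3 := card_cj l ((P2 : Subgroup G) ⊓ normalizer (T : Set G))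
    change Nat.card (cj l _) ≤ Nat.card S1' at h2
    omega
  obtain ⟨b, hb⟩ := cj_le_sylow hTp P
  have hbT : cj b T = P := by
    refine Subgroup.eq_of_le_of_card_ge hb ?_
    rw [card_cj, hTP2]
    exact (Nat.card_congr (Sylow.equiv P P2).toEquiv).le
  have hx : b * m' * b⁻¹ ∈ H := by
    have h1 := conj_normalizer_cj (k := b) hm'
    rw [cj, ← WW_conj] at h1
    change _ ∈ normalizer (WW (cj b T) : Set G) at h1
    rwa [hbT] at h1
  obtain ⟨hb', hbH, hbA⟩ := IH ((P : Subgroup G) ⊓ N) inf_le_left (lt_normalizer P.2 hRP) b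
    ((cj_mono (hS.trans hST) b).trans hb)
  refine ⟨hb'⁻¹ * (b * m' * b⁻¹) * hb', H.mul_mem (H.mul_mem (inv_mem hbH) hx) hbH, ?_⟩
  intro r hr
  have hRPN : R ≤ (P : Subgroup G) ⊓ N := le_inf hRP.le hRN
  have h1 := hbA r (hRPN hr)
  have h2 := hbA _ (hRPN (mem_norm_iff.1 hm r hr))
  have h3 := hAm' r hr
  symm
  calc hb'⁻¹ * (b * m' * b⁻¹) * hb' * r * (hb'⁻¹ * (b * m' * b⁻¹) * hb')⁻¹
      = hb'⁻¹ * (b * m' * b⁻¹) * (hb' * r * hb'⁻¹) * (b * m'⁻¹ * b⁻¹) * hb' := by group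
    _ = hb'⁻¹ * (b * (m' * r * m'⁻¹) * b⁻¹) * hb' := by rw [← h1]; group
    _ = m * r * m⁻¹ := by rw [← h3, h2]; group

end

/-- In a finite group of odd order, `N_G(WW P)` controls `p`-fusion. -/
theorem fc {p : ℕ} [hp : Fact p.Prime] (hp2 : p ≠ 2) : ∀ (n : ℕ) (G : Type) [Group G] [Finite G],
    Nat.card G = n → Odd n → FC p G := by
  intro n
  induction n using Nat.strong_induction_on with
  | _ n ih =>
  intro G _ _ hn hodd P R hR
  have hsub : ∀ L : Subgroup G, L ≠ ⊤ → FC p L := by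
    intro L hL
    refine ih _ ?_ L rfl (hodd.of_dvd_nat (hn ▸ Subgroup.card_subgroup_dvd_card L))
    rw [← hn]
    exact lt_of_le_of_ne (Subgroup.card_le_card_group L) fun h => hL (Subgroup.eq_top_of_card_eq L h)
  by_cases h1 : (P : Subgroup G) ⊔ centralizer (pCore p G : Set G) = ⊤
  swap
  · exact fc_case1 hp2 (hn ▸ hodd) P (hsub _ h1) R hR
  by_cases h2 : (P : Subgroup G) ≤ pCore p G
  · have h3 : (P : Subgroup G) = pCore p G := le_antisymm h2 (pCore_le P)
    have h4 : (P : Subgroup G).Normal := h3 ▸ pCore_normal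
    intro g _
    refine ⟨g, normalizer_le_WW _ ?_, fun _ _ => rfl⟩
    rw [normalizer_eq_top_iff.2 h4]; trivial
  by_cases h3 : pCore p G = ⊥
  · exact fc_case2c hp2 (hn ▸ hodd) P h3 hsub R hR
  refine fc_case2b P h1 h2 ?_ hsub R hR
  refine ih _ ?_ (G ⧸ pCore p G) rfl (hodd.of_dvd_nat (hn ▸ Subgroup.card_quotient_dvd_card _))
  have h4 := Subgroup.card_eq_card_quotient_mul_card_subgroup (pCore p G)
  have h5 : 1 < Nat.card (pCore p G) := (Subgroup.one_lt_card_iff_ne_bot _).2 h3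
  have h6 : 0 < Nat.card (G ⧸ pCore p G) := Nat.card_pos
  nlinarith

end Acd

/-! ### Criteria for `p`-nilpotency -/

namespace Acd
open Subgroup
open scoped Pointwise

section
variable {G : Type} [Group G] [Finite G] {p : ℕ} [hp : Fact p.Prime]

lemma comm_top_eq_bot {P : Type} [Group P] [Finite P] (hP : IsPGroup p P) (Q : Subgroup P)
    (h : Q ≤ ⁅Q, (⊤ : Subgroup P)⁆) : Q = ⊥ := by
  have hnil : Group.IsNilpotent P := hP.isNilpotent
  obtain ⟨n, hn⟩ := Subgroup.nilpotent_iff_lowerCentralSeries.1 hnil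
  have : ∀ n, Q ≤ Subgroup.lowerCentralSeries (⊤ : Subgroup P) n := by
    intro n
    induction n with
    | zero => simp
    | succ n ih => exact h.trans (commutator_mono ih le_rfl)
  have := this n
  rwa [hn, le_bot_iff] at this

lemma hom_trivial_of_coprime {M A : Type} [Group M] [Group A] (hA : IsPGroup p A) (f : M →* A)
    {z : M} (hz : (orderOf z).Coprime p) : f z = 1 := by
  obtain ⟨k, hk⟩ := hA (f z)
  exact orderOf_eq_one_iff.1 (Nat.eq_one_of_dvd_coprimes (hz.pow_right k) (orderOf_map_dvd f z)
    (orderOf_dvd_of_pow_eq_one hk))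

/-- The subgroup generated by the `p'`-elements. -/
def Op (p : ℕ) (G : Type) [Group G] : Subgroup G := closure {z | (orderOf z).Coprime p}

instance Op_normal : (Op p G).Normal := by
  constructor
  intro n hn g
  have h1 : (Op p G).map (MulAut.conj g).toMonoidHom ≤ Op p G := by
    rw [Op, MonoidHom.map_closure, closure_le]
    rintro _ ⟨z, hz, rfl⟩
    refine subset_closure ?_
    change (orderOf ((MulAut.conj g) z)).Coprime p
    rwa [MulEquiv.orderOf_eq]
  exact h1 ⟨n, hn, rfl⟩

lemma isPGroup_quot {C : Subgroup G} [C.Normal]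
    (hC : ∀ z : G, (orderOf z).Coprime p → z ∈ C) : IsPGroup p (G ⧸ C) := by
  rintro ⟨z⟩
  obtain ⟨k, u, hu, e⟩ := Nat.exists_eq_pow_mul_and_not_dvd (orderOf_pos z).ne' p hp.out.ne_one
  refine ⟨k, (QuotientGroup.eq_one_iff (z ^ p ^ k)).2 (hC _ ?_)⟩
  rw [orderOf_pow' _ (pow_ne_zero _ hp.out.ne_zero), e, Nat.gcd_eq_right (Dvd.intro _ rfl),
    Nat.mul_div_cancel_left _ (pow_pos hp.out.pos _)]
  exact ((Nat.Prime.coprime_iff_not_dvd hp.out).2 hu).symm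

/-- If elements of `P` conjugate in `G` are already conjugate in `P`, then `G` has a normal
`p`-complement: the focal subgroup theorem applied to the subgroup generated by the `p'`-elements
shows that it has order prime to `p`. -/
theorem pnilp_of_control (P : Sylow p G)
    (h : ∀ x ∈ P, ∀ g : G, g * x * g⁻¹ ∈ P → ∃ u ∈ P, g * x * g⁻¹ = u * x * u⁻¹) :
    HasNormalPComplement G p := by
  set K := Op p G with hK
  set Q := sylowInf P K with hQ
  have hQm : ∀ k : K, k ∈ Q ↔ (k : G) ∈ P := fun k => Iff.rfl
  have hfoc : (Q : Subgroup K).focalSubgroup = Q := by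
    have hA : IsPGroup p (Q ⧸ (Q : Subgroup K).focalSubgroupOf) := Q.2.to_quotient _
    have htriv : ∀ k : K, (Q : Subgroup K).transferFocal k = 1 := by
      rintro ⟨k, hk⟩
      have hker : Op p G ≤
          ((Q : Subgroup K).transferFocal.ker).map K.subtype := by
        rw [Op, closure_le]
        intro z hz
        refine ⟨⟨z, subset_closure hz⟩, ?_, rfl⟩
        refine hom_trivial_of_coprime hA _ ?_
        rw [← Subgroup.orderOf_coe]
        exact hz
      obtain ⟨k', hk', e⟩ := hker hk
      have : k' = ⟨k, hk⟩ := Subtype.ext e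
      exact this ▸ hk'
    have htop : (Q : Subgroup K).focalSubgroupOf = ⊤ := by
      rw [eq_top_iff]
      intro x _
      obtain ⟨k, hk⟩ := transferFocal_surjective Q (x : Q ⧸ (Q : Subgroup K).focalSubgroupOf)
      rw [htriv k] at hk
      exact (QuotientGroup.eq_one_iff x).1 hk.symm
    rw [← map_focalSubgroupOf, htop]
    ext x; simp
  set Q1 : Subgroup P := K.subgroupOf P with hQ1
  have hle : Q1 ≤ ⁅Q1, (⊤ : Subgroup P)⁆ := by
    intro x hx
    have hx' : (⟨x, hx⟩ : K) ∈ (Q : Subgroup K).focalSubgroup := by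
      rw [hfoc]; exact x.2
    have : ∃ hP : ((⟨x, hx⟩ : K) : G) ∈ P, (⟨_, hP⟩ : P) ∈ ⁅Q1, (⊤ : Subgroup P)⁆ := by
      rw [focalSubgroup_def] at hx'
      refine closure_induction (p := fun (k : K) _ => ∃ hP : (k : G) ∈ P, (⟨_, hP⟩ : P) ∈ ⁅Q1, (⊤ : Subgroup P)⁆)
        ?_ ?_ ?_ ?_ hx'
      · rintro g ⟨hg, x, hx, u, rfl⟩
        have hxP : (x : G) ∈ P := hx
        have hgP : (x : G) * u * (x : G)⁻¹ * (u : G)⁻¹ ∈ (P : Subgroup G) := hg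
        have h1 : (u : G) * (x : G)⁻¹ * (u : G)⁻¹ ∈ (P : Subgroup G) := by
          have := (P : Subgroup G).mul_mem (inv_mem hxP) hgP
          have e : (x : G)⁻¹ * ((x : G) * u * (x : G)⁻¹ * (u : G)⁻¹) =
            (u : G) * (x : G)⁻¹ * (u : G)⁻¹ := by group
          rwa [e] at this
        obtain ⟨v, hv, e⟩ := h _ (inv_mem hxP) u h1
        have hg' : ((x * u * x⁻¹ * u⁻¹ : K) : G) ∈ P := hg
        refine ⟨hg', ?_⟩
        have : (⟨((x * u * x⁻¹ * u⁻¹ : K) : G), hg'⟩ : (P : Subgroup G)) =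
            (⟨x, hxP⟩ : (P : Subgroup G)) * ⟨v, hv⟩ * (⟨x, hxP⟩ : (P : Subgroup G))⁻¹ * (⟨v, hv⟩ : (P : Subgroup G))⁻¹ := by
          apply Subtype.ext
          change (x : G) * u * (x : G)⁻¹ * (u : G)⁻¹ = x * v * (x : G)⁻¹ * v⁻¹
          rw [mul_assoc, mul_assoc, ← mul_assoc (u : G), e]; group
        change (⟨((x * u * x⁻¹ * u⁻¹ : K) : G), hg'⟩ : (P : Subgroup G)) ∈ _
        rw [this]
        exact commutator_mem_commutator (show _ ∈ Q1 from x.2) (mem_top _)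
      · exact ⟨P.one_mem, one_mem _⟩
      · rintro a b _ _ ⟨h1, h2⟩ ⟨h3, h4⟩
        exact ⟨(P : Subgroup G).mul_mem h1 h3, mul_mem h2 h4⟩
      · rintro a _ ⟨h1, h2⟩
        exact ⟨(P : Subgroup G).inv_mem h1, inv_mem h2⟩
    exact this.2
  have hb := comm_top_eq_bot P.2 Q1 hle
  have hQb : (Q : Subgroup K) = ⊥ := by
    rw [eq_bot_iff]
    intro k hk
    have : (⟨(k : G), hk⟩ : P) ∈ Q1 := k.2
    rw [hb, Subgroup.mem_bot] at this
    exact Subtype.ext (by simpa using congrArg Subtype.val this)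
  refine ⟨K, inferInstance, ?_, ?_⟩
  · have := Q.not_dvd_index
    rw [hQb, Subgroup.index_bot] at this
    exact ((Nat.Prime.coprime_iff_not_dvd hp.out).2 this).symm
  · exact (isPGroup_quot (C := K) fun z hz => subset_closure hz).exists_card_eq

/-- In a `p`-nilpotent subgroup `H ≥ P`, elements of `P` fused by `H` are fused by `P`. -/
lemma pnilp_fusion {H : Subgroup G} (hH : HasNormalPComplement H p) (P : Sylow p G) (hPH : P ≤ H)
    {x h : G} (hh : h ∈ H) (hx : x ∈ P) (hhx : h * x * h⁻¹ ∈ P) :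
    ∃ u ∈ P, h * x * h⁻¹ = u * x * u⁻¹ := by
  obtain ⟨N, hN, hNc, n, hn⟩ := hH
  obtain ⟨u, hu, c, hc, e⟩ := sylow_mul (P.subtype hPH) N (by
    intro z hz
    have hq : IsPGroup p (H ⧸ N) := IsPGroup.of_card (n := n) hn
    exact (QuotientGroup.eq_one_iff z).1 (hom_trivial_of_coprime hq (QuotientGroup.mk' N) hz)) ⟨h, hh⟩
  have hu' : (u : G) ∈ (P : Subgroup G) := hu
  have e' : h = u * c := congrArg Subtype.val e
  set d : H := c * ⟨x, hPH hx⟩ * c⁻¹ * ⟨x, hPH hx⟩⁻¹ with hd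
  have hdN : d ∈ N := by
    have := N.mul_mem hc (hN.conj_mem _ (inv_mem hc) ⟨x, hPH hx⟩)
    convert this using 1
    rw [hd]; group
  have hdP : (d : G) ∈ (P : Subgroup G) := by
    have h1 : (u : G)⁻¹ * (h * x * h⁻¹) * u * x⁻¹ ∈ (P : Subgroup G) :=
      mul_mem (mul_mem (mul_mem (inv_mem hu') hhx) hu') (inv_mem hx)
    convert h1 using 1
    rw [e', hd]
    push_cast
    group
  have hd1 : d = 1 := by
    obtain ⟨k, hk⟩ := P.2 ⟨d, hdP⟩
    have h1 : (d : G) ^ p ^ k = 1 := congrArg Subtype.val hk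
    have h2 : orderOf d ∣ p ^ k := by
      rw [← Subgroup.orderOf_coe]; exact orderOf_dvd_of_pow_eq_one h1
    have h3 : orderOf d ∣ Nat.card N := by
      have := orderOf_dvd_natCard (⟨d, hdN⟩ : N)
      rwa [Subgroup.orderOf_mk] at this
    exact orderOf_eq_one_iff.1 (Nat.eq_one_of_dvd_coprimes (hNc.pow_right k) h3 h2)
  refine ⟨u, hu', ?_⟩
  have h4 : (c : G) * x * (c : G)⁻¹ * x⁻¹ = 1 := by
    have := congrArg (Subtype.val) hd1
    exact this
  rw [mul_inv_eq_one] at h4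
  calc h * x * h⁻¹ = u * (c * x * (c : G)⁻¹) * (u : G)⁻¹ := by rw [e']; group
    _ = _ := by rw [h4]

/-- Elements of `P` fused in `G` are fused in `N(WW P)`. -/
lemma fc_elt (hp2 : p ≠ 2) (hodd : Odd (Nat.card G)) (P : Sylow p G) {x g : G} (hx : x ∈ P)
    (hg : g * x * g⁻¹ ∈ P) :
    ∃ h ∈ normalizer (WW (P : Subgroup G) : Set G), g * x * g⁻¹ = h * x * h⁻¹ := by
  obtain ⟨h, hh, hA⟩ := fc hp2 _ G rfl hodd P (zpowers x) (by rwa [zpowers_le]) g (by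
    rw [cj_le]
    rintro _ ⟨k, rfl⟩
    have := (P : Subgroup G).zpow_mem hg k
    rwa [conj_zpow] at this)
  exact ⟨h, hh, hA x (mem_zpowers x)⟩

/-- A group of odd order is `p`-nilpotent as soon as `N_G(WW P)` is. -/
theorem pnilp_of_normalizer (hp2 : p ≠ 2) (hodd : Odd (Nat.card G)) (P : Sylow p G)
    (h : HasNormalPComplement (normalizer (WW (P : Subgroup G) : Set G)) p) :
    HasNormalPComplement G p := by
  refine pnilp_of_control P fun x hx g hg => ?_
  obtain ⟨k, hk, e⟩ := fc_elt hp2 hodd P hx hg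
  rw [e] at hg ⊢
  exact pnilp_fusion h P (sylow_le_nWW _) hk hx hg

end
end Acd

/-! ### Rational classes of `p`-elements and characters with values in `μ_p` -/

namespace Acd
open Subgroup
open scoped Pointwise

/-- `g` is a rational `p`-element: it has `p`-power order and is conjugate to `g ^ (1 + p)`. Since
`1 + p` generates the group of units congruent to `1` modulo `p`, this says that all characters
of `G` take values in `ℚ(ζ_p)` at `g`. -/
def RP {G : Type} [Group G] (p : ℕ) (g : G) : Prop := (∃ k, g ^ p ^ k = 1) ∧ ∃ t, t * g * t⁻¹ = g ^ (1 + p)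

/-- The set of conjugacy classes of rational `p`-elements. -/
def RCl (p : ℕ) (G : Type) [Group G] : Set (ConjClasses G) := ConjClasses.mk '' {g | RP p g}

/-- The number of classes of rational `p`-elements. For odd `|G|` it equals the number of
`ℚ(ζ_p)`-valued irreducible characters (`card_irrK`). -/
noncomputable def rcl (p : ℕ) (G : Type) [Group G] : ℕ := Nat.card (RCl p G)

/-- The number of homomorphisms from `G` to the `p`-th roots of unity. For odd `|G|` it equals the
number of `ℚ(ζ_p)`-valued linear characters (`card_lin`). -/
noncomputable def lin (p : ℕ) (G : Type) [Group G] : ℕ := Nat.card (G →* rootsOfUnity p ℂ)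

section
variable {G : Type} [Group G] [Finite G] {p : ℕ} [hp : Fact p.Prime]

instance : Finite (G →* rootsOfUnity p ℂ) :=
  have : NeZero p := ⟨hp.out.ne_zero⟩
  Finite.of_injective (fun f => (f : G → rootsOfUnity p ℂ)) DFunLike.coe_injective

lemma lin_pos : 0 < lin p G := Nat.card_pos

lemma rou_pgroup : IsPGroup p (rootsOfUnity p ℂ) := fun x => ⟨1, by
  rw [pow_one]; exact Subtype.ext ((mem_rootsOfUnity p _).1 x.2)⟩

lemma zpowers_isPGroup {t : G} (ht : ∃ k, t ^ p ^ k = 1) : IsPGroup p (zpowers t) := by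
  obtain ⟨k, hk⟩ := ht
  rintro ⟨_, n, rfl⟩
  refine ⟨k, Subtype.ext ?_⟩
  change ((t ^ n) ^ p ^ k : G) = 1
  rw [← zpow_natCast, ← zpow_mul, mul_comm, zpow_mul, zpow_natCast, hk, one_zpow]

lemma pelt_of_mem {P : Subgroup G} (hP : IsPGroup p P) {x : G} (hx : x ∈ P) : ∃ k, x ^ p ^ k = 1 := by
  obtain ⟨k, hk⟩ := hP ⟨x, hx⟩
  exact ⟨k, congrArg Subtype.val hk⟩

lemma conj_pow' (g x : G) (n : ℕ) : (g * x * g⁻¹) ^ n = g * x ^ n * g⁻¹ := conj_pow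

lemma RP.conj {x : G} (h : RP p x) (g : G) : RP p (g * x * g⁻¹) := by
  obtain ⟨⟨k, hk⟩, t, ht⟩ := h
  refine ⟨⟨k, by rw [conj_pow', hk]; simp⟩, g * t * g⁻¹, ?_⟩
  rw [conj_pow', ← ht]; group

lemma mk_eq_iff {x y : G} : ConjClasses.mk x = ConjClasses.mk y ↔ ∃ g, g * x * g⁻¹ = y := by
  rw [ConjClasses.mk_eq_mk_iff_isConj, isConj_iff]

/-- The number of rational classes is at least that of a subgroup controlling fusion. -/
lemma rcl_le_of_control {H : Subgroup G} (P : Sylow p G) (hPH : P ≤ H)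
    (hc : ∀ x ∈ P, ∀ g : G, g * x * g⁻¹ ∈ P → ∃ h ∈ H, g * x * g⁻¹ = h * x * h⁻¹) :
    rcl p H ≤ rcl p G := by
  classical
  have hsur : ∀ c : RCl p H, ∃ x : H, RP p x ∧ (x : G) ∈ P ∧ ConjClasses.mk x = c := by
    rintro ⟨_, x, hx, rfl⟩
    obtain ⟨n, hn⟩ := cj_le_sylow (zpowers_isPGroup hx.1) (P.subtype hPH)
    exact ⟨n * x * n⁻¹, RP.conj hx n, cj_le.1 hn x (mem_zpowers x), (mk_eq_iff.2 ⟨n, rfl⟩).symm⟩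
  choose r hr1 hr2 hr3 using hsur
  refine Nat.card_le_card_of_injective (fun c : RCl p H => (⟨ConjClasses.mk (r c : G), (r c : G), ?_, rfl⟩ : RCl p G)) ?_
  · obtain ⟨⟨k, hk⟩, t, ht⟩ := hr1 c
    exact ⟨⟨k, congrArg Subtype.val hk⟩, t, congrArg Subtype.val ht⟩
  · intro c c' h
    obtain ⟨g, hg⟩ := mk_eq_iff.1 (congrArg Subtype.val h)
    obtain ⟨n, hn, e⟩ := hc _ (hr2 c) g (by rw [hg]; exact hr2 c')
    apply Subtype.ext
    rw [← hr3 c, ← hr3 c', mk_eq_iff]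
    exact ⟨⟨n, hn⟩, Subtype.ext (e.symm.trans hg)⟩

lemma lin_le {H : Subgroup G} (hH : ∀ f : G →* rootsOfUnity p ℂ, (∀ h ∈ H, f h = 1) → f = 1) :
    lin p G ≤ lin p H := by
  refine Nat.card_le_card_of_injective (fun f : G →* rootsOfUnity p ℂ => f.comp H.subtype) ?_
  intro f g hfg
  have : f * g⁻¹ = 1 := hH _ fun h hh => by
    have : f h = g h := DFunLike.congr_fun hfg (⟨h, hh⟩ : H)
    simp [this]
  exact mul_inv_eq_one.1 this

lemma hom_triv_of_sylow (P : Sylow p G) {A : Type} [Group A] (hA : IsPGroup p A) (f : G →* A)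
    (hf : ∀ x ∈ P, f x = 1) : f = 1 := by
  ext1 g
  obtain ⟨t, ht, c, hc, rfl⟩ := sylow_mul P f.ker (fun z hz => hom_trivial_of_coprime hA f hz) g
  rw [map_mul, hf t ht, MonoidHom.mem_ker.1 hc]; simp

/-- The element conjugating `y` to `y ^ (1 + p)` may be replaced by a power of `p`-power order,
because `1 + p` has `p`-power order modulo `p ^ k`. -/
lemma exists_pelt {y t : G} {k : ℕ} (hy : y ^ p ^ k = 1) (h : t * y * t⁻¹ = y ^ (1 + p)) :
    ∃ s : ℕ, (∃ j, (t ^ s) ^ p ^ j = 1) ∧ t ^ s * y * (t ^ s)⁻¹ = y ^ (1 + p) := by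
  have hpow : ∀ n : ℕ, t ^ n * y * (t ^ n)⁻¹ = y ^ ((1 + p) ^ n) := by
    intro n
    induction n with
    | zero => simp
    | succ n ih =>
      have e : t ^ (n+1) * y * (t ^ (n+1))⁻¹ = t * (t ^ n * y * (t ^ n)⁻¹) * t⁻¹ := by
        rw [pow_succ']; group
      rw [e, ih, ← conj_pow', h, ← pow_mul, pow_succ']
  obtain ⟨a, u, hu, e⟩ := Nat.exists_eq_pow_mul_and_not_dvd (orderOf_pos t).ne' p hp.out.ne_one
  have hcop : (p ^ k).Coprime u := ((Nat.Prime.coprime_iff_not_dvd hp.out).2 hu).pow_left k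
  obtain ⟨s, hs1, hs2⟩ := Nat.chineseRemainder hcop 1 0
  refine ⟨s, ⟨a, ?_⟩, ?_⟩
  · rw [← pow_mul]
    apply orderOf_dvd_iff_pow_eq_one.1
    rw [e, mul_comm]
    exact Nat.mul_dvd_mul ((Nat.modEq_zero_iff_dvd).1 hs2) (dvd_refl _)
  · rw [hpow]
    -- `1 + p` has `p`-power order modulo `p ^ k`
    have h1 : ((1 + p : ℕ) : ZMod (p ^ k)) ^ p ^ k = 1 := by
      have h2 := dvd_sub_pow_of_dvd_sub (R := ℤ) (p := p) (a := 1 + p) (b := 1) (by simp) k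
      have h3 : ((p ^ k : ℕ) : ℤ) ∣ (1 + p) ^ p ^ k - 1 ^ p ^ k :=
        (by push_cast; exact Dvd.intro _ (pow_succ _ _).symm : ((p ^ k : ℕ) : ℤ) ∣ (p : ℤ) ^ (k + 1)).trans h2
      have h4 := (ZMod.intCast_zmod_eq_zero_iff_dvd _ (p ^ k)).2 h3
      push_cast at h4 ⊢
      rw [one_pow] at h4
      exact sub_eq_zero.1 h4
    have h5 := pow_eq_pow_of_modEq hs1 h1
    rw [pow_one] at h5
    have h6 : (1 + p) ^ s ≡ 1 + p [MOD p ^ k] := by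
      rw [← ZMod.natCast_eq_natCast_iff]; push_cast at h5 ⊢; exact h5
    exact pow_eq_pow_of_modEq h6 hy

/-- A `p`-element `t` acts nilpotently on `V`, so iterating `v ↦ [t, v]` from outside `D` reaches a
last element outside `D`. -/
lemma iter_comm {V : Subgroup G} [V.Normal] (hV : IsPGroup p V) {t : G} (ht : ∃ k, t ^ p ^ k = 1)
    (D : Set G) (h1 : (1 : G) ∈ D) {v : G} (hv : v ∈ V) (hvD : v ∉ D) :
    ∃ v ∈ V, v ∉ D ∧ t * v * t⁻¹ * v⁻¹ ∈ D := by
  by_contra! hcon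
  set B := V ⊔ zpowers t with hB
  have hBp : IsPGroup p B := hV.to_sup_of_normal_left (zpowers_isPGroup ht)
  have hnil : Group.IsNilpotent B := hBp.isNilpotent
  obtain ⟨n, hn⟩ := (Subgroup.isNilpotent_iff_lowerCentralSeries B).1 hnil
  have htB : t ∈ B := (le_sup_right : _ ≤ B) (mem_zpowers t)
  have : ∀ n, ∃ v ∈ V, v ∉ D ∧ v ∈ B.lowerCentralSeries n := by
    intro n
    induction n with
    | zero => exact ⟨v, hv, hvD, (le_sup_left : V ≤ B) hv⟩
    | succ n ih =>
      obtain ⟨v, hv, hvD, hvn⟩ := ih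
      refine ⟨t * v * t⁻¹ * v⁻¹, V.mul_mem (Normal.conj_mem ‹_› v hv t) (inv_mem hv),
        hcon v hv hvD, ?_⟩
      have := commutator_mem_commutator hvn htB
      have h2 := inv_mem this
      rw [Subgroup.lowerCentralSeries_succ]
      convert h2 using 1
      change _ = (v * t * v⁻¹ * t⁻¹)⁻¹
      group
  obtain ⟨v, _, hvD, hvn⟩ := this n
  rw [hn, Subgroup.mem_bot] at hvn
  exact hvD (hvn ▸ h1)

/-- The set `[V, y]` of commutators with a fixed element is a subgroup of the abelian group `V`. -/
lemma Dmem {V : Subgroup G} (hab : ∀ a ∈ V, ∀ b ∈ V, Commute a b) [hVn : V.Normal] (y : G) :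
    ∃ D : Subgroup G, D ≤ V ∧ ∀ d, d ∈ D ↔ ∃ u ∈ V, y⁻¹ * u * y * u⁻¹ = d := by
  have hm : ∀ u ∈ V, y⁻¹ * u * y ∈ V := fun u hu => by
    have := hVn.conj_mem u hu y⁻¹
    rwa [inv_inv] at this
  let f : V →* G :=
    { toFun := fun u => y⁻¹ * u * y * (u : G)⁻¹
      map_one' := by simp
      map_mul' := by
        rintro ⟨a, ha⟩ ⟨b, hb⟩
        have h1 := hab _ (hm b hb) _ (inv_mem ha)
        have h2 := hab _ (mul_mem (hm b hb) (inv_mem hb)) _ (inv_mem ha)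
        change y⁻¹ * (a * b) * y * (a * b)⁻¹ = y⁻¹ * a * y * a⁻¹ * (y⁻¹ * b * y * b⁻¹)
        calc y⁻¹ * (a * b) * y * (a * b)⁻¹ = y⁻¹ * a * y * ((y⁻¹ * b * y * b⁻¹) * a⁻¹) := by group
          _ = _ := by rw [h2.eq]; group }
  refine ⟨f.range, ?_, ?_⟩
  · rintro _ ⟨u, rfl⟩
    exact V.mul_mem (hm u u.2) (inv_mem u.2)
  · intro d
    constructor
    · rintro ⟨u, rfl⟩; exact ⟨u, u.2, rfl⟩
    · rintro ⟨u, hu, rfl⟩; exact ⟨⟨u, hu⟩, rfl⟩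

/-- Each rational `y` in a complement acquires a second rational class `y v`. -/
lemma second_class {V Y : Subgroup G} [hVn : V.Normal] (hab : ∀ a ∈ V, ∀ b ∈ V, Commute a b)
    (hV : IsPGroup p V) (hVp : ∀ v ∈ V, v ^ p = 1) (hne : V ≠ ⊥) (hVY : V ⊓ Y = ⊥)
    (hfac : ∀ g : G, ∃ v ∈ V, ∃ b ∈ Y, g = v * b) {y : G} (hyY : y ∈ Y)
    {t : G} (ht : t * y * t⁻¹ = y ^ (1 + p)) (hy : ∃ k, y ^ p ^ k = 1) :
    ∃ v ∈ V, RP p (y * v) ∧ ¬ ∃ g, g * y * g⁻¹ = y * v := by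
  have hm : ∀ (g : G), ∀ u ∈ V, g * u * g⁻¹ ∈ V := fun g u hu => hVn.conj_mem u hu g
  have hm' : ∀ (g : G), ∀ u ∈ V, g⁻¹ * u * g ∈ V := fun g u hu => by
    have := hVn.conj_mem u hu g⁻¹
    rwa [inv_inv] at this
  obtain ⟨k, hk⟩ := hy
  obtain ⟨s, htp, hts⟩ := exists_pelt hk ht
  clear ht
  set t := t ^ s
  obtain ⟨D, hDV, hD⟩ := Dmem hab y
  -- `[V, y] < V`
  have hDlt : ∃ v ∈ V, v ∉ D := by
    by_contra! hcon
    have hsurj : Function.Surjective (fun u : V => (⟨y⁻¹ * u * y * (u : G)⁻¹,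
        mul_mem (hm' y u u.2) (inv_mem u.2)⟩ : V)) := by
      rintro ⟨v, hv⟩
      obtain ⟨u, hu, e⟩ := (hD v).1 (hcon v hv)
      exact ⟨⟨u, hu⟩, Subtype.ext e⟩
    have hinj := Finite.injective_iff_surjective.2 hsurj
    obtain ⟨⟨v0, hv0⟩, hv01'⟩ := Subgroup.ne_bot_iff_exists_ne_one.1 hne
    have hv01 : v0 ≠ 1 := fun h => hv01' (Subtype.ext h)
    obtain ⟨v, hv, hv1, hv2⟩ := iter_comm hV (t := y⁻¹) ⟨k, by rw [inv_pow, hk, inv_one]⟩ {1} rfl hv0 hv01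
    apply hv1
    rw [Set.mem_singleton_iff, inv_inv] at hv2
    have := @hinj ⟨v, hv⟩ 1 (Subtype.ext (by simpa using hv2))
    exact congrArg Subtype.val this
  obtain ⟨v0, hv0, hv0D⟩ := hDlt
  obtain ⟨v, hv, hvD, htv⟩ := iter_comm hV htp (D : Set G) D.one_mem hv0 hv0D
  -- conjugation by `y` acts trivially modulo `D`
  have hyD : ∀ w ∈ V, ∃ d ∈ D, y⁻¹ * w * y = w * d := by
    intro w hw
    refine ⟨y⁻¹ * w * y * w⁻¹, (hD _).2 ⟨w, hw, rfl⟩, ?_⟩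
    rw [(hab w hw _ (hDV ((hD _).2 ⟨w, hw, rfl⟩))).eq]; group
  have hynD : ∀ n : ℕ, ∀ w ∈ V, y⁻¹ ^ n * w * y ^ n * w⁻¹ ∈ D := by
    intro n w hw
    induction n with
    | zero => simp
    | succ n ih =>
      have h2 : y⁻¹ ^ n * w * y ^ n ∈ V := by rw [inv_pow]; exact hm' (y ^ n) w hw
      obtain ⟨d, hd, e⟩ := hyD _ h2
      have h1 : y⁻¹ ^ (n+1) * w * y ^ (n+1) * w⁻¹ = y⁻¹ * (y⁻¹ ^ n * w * y ^ n) * y * w⁻¹ := by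
        rw [pow_succ', pow_succ]; group
      rw [h1, e, mul_assoc, (hab d (hDV hd) _ (inv_mem hw)).eq, ← mul_assoc]
      exact D.mul_mem ih hd
  have hpw : ∀ n : ℕ, ∃ d ∈ D, (y * v) ^ n = y ^ n * v ^ n * d := by
    intro n
    induction n with
    | zero => exact ⟨1, D.one_mem, by simp⟩
    | succ n ih =>
      obtain ⟨d, hd, e⟩ := ih
      have hvn : v ^ n * d ∈ V := V.mul_mem (pow_mem hv n) (hDV hd)
      obtain ⟨d', hd', e'⟩ := hyD _ hvn
      refine ⟨d * d', D.mul_mem hd hd', ?_⟩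
      have e1 : (y * v) ^ (n+1) = y ^ (n+1) * (y⁻¹ * (v ^ n * d) * y) * v := by
        rw [pow_succ, e, pow_succ]; group
      rw [e1, e', mul_assoc, mul_assoc (v ^ n * d), (hab d' (hDV hd') v hv).eq, mul_assoc (v ^ n),
        ← mul_assoc d, (hab d (hDV hd) v hv).eq, pow_succ v]
      group
  -- `t` normalises `D`, and in fact `[V, y ^ (1 + p)] = D`
  have hDt : ∀ d ∈ D, ∃ u ∈ V, y⁻¹ ^ (1 + p) * u * y ^ (1 + p) * u⁻¹ = d := by
    have hle : cj t D ≤ D := by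
      refine cj_le.2 fun d hd => ?_
      obtain ⟨u, hu, rfl⟩ := (hD d).1 hd
      have := hynD (1 + p) _ (hm t u hu)
      rw [inv_pow, ← hts] at this
      convert this using 1
      group
    have heq : cj t D = D := Subgroup.eq_of_le_of_card_ge hle (card_cj t D).ge
    intro d hd
    rw [← heq, mem_cj, hD] at hd
    obtain ⟨u, hu, e⟩ := hd
    refine ⟨t * u * t⁻¹, hm t u hu, ?_⟩
    rw [inv_pow, ← hts]
    have : d = t * (t⁻¹ * d * t) * t⁻¹ := by group
    rw [this, ← e]; group
  refine ⟨v, hv, ⟨?_, ?_⟩, ?_⟩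
  · refine pelt_of_mem (P := V ⊔ zpowers y) (hV.to_sup_of_normal_left (zpowers_isPGroup ⟨k, hk⟩)) ?_
    exact mul_mem ((le_sup_right : _ ≤ V ⊔ zpowers y) (mem_zpowers y))
      ((le_sup_left : _ ≤ V ⊔ zpowers y) hv)
  · obtain ⟨d, hd, e⟩ := hpw (1 + p)
    rw [pow_add v, pow_one, hVp v hv, mul_one] at e
    set d' := t * v * t⁻¹ * v⁻¹ with hd'
    have htyv : t * (y * v) * t⁻¹ = y ^ (1 + p) * v * d' := by
      rw [mul_assoc _ v, (hab v hv d' (hDV htv)).eq, ← hts, hd']; group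
    obtain ⟨u, hu, hue⟩ := hDt (d * d'⁻¹) (D.mul_mem hd (D.inv_mem htv))
    refine ⟨u * t, ?_⟩
    have hvd : v * d' ∈ V := mul_mem hv (hDV htv)
    calc u * t * (y * v) * (u * t)⁻¹ = u * (t * (y * v) * t⁻¹) * u⁻¹ := by group
      _ = y ^ (1 + p) * (y⁻¹ ^ (1 + p) * u * y ^ (1 + p) * u⁻¹) * (u * (v * d') * u⁻¹) := by
        rw [htyv]; group
      _ = y ^ (1 + p) * (d * d'⁻¹) * (v * d') := by
        rw [hue, (hab u hu _ hvd).eq, mul_inv_cancel_right]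
      _ = y ^ (1 + p) * (v * d' * (d * d'⁻¹)) := by
        rw [mul_assoc, (hab (d * d'⁻¹) (hDV (D.mul_mem hd (D.inv_mem htv))) _ hvd).eq]
      _ = (y * v) ^ (1 + p) := by
        rw [e, (hab d (hDV hd) d'⁻¹ (hDV (D.inv_mem htv))).eq]; group
  · rintro ⟨g, hg⟩
    obtain ⟨u, hu, b, hb, rfl⟩ := hfac g
    have hb1 : y⁻¹ * (b * y * b⁻¹) ∈ V ⊓ Y := by
      refine ⟨?_, Y.mul_mem (Y.inv_mem hyY) (Y.mul_mem (Y.mul_mem hb hyY) (Y.inv_mem hb))⟩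
      have e : y⁻¹ * (b * y * b⁻¹) = (y⁻¹ * u⁻¹ * y) * v * u := by
        have : b * y * b⁻¹ = u⁻¹ * (u * b * y * (u * b)⁻¹) * u := by group
        rw [this, hg]; group
      change _ ∈ V
      rw [e]
      exact mul_mem (mul_mem (hm' y _ (inv_mem hu)) hv) hu
    rw [hVY, Subgroup.mem_bot, inv_mul_eq_one] at hb1
    apply hvD
    refine (hD v).2 ?_
    refine ⟨u, hu, ?_⟩
    have : u * b * y * (u * b)⁻¹ = u * (b * y * b⁻¹) * u⁻¹ := by group
    rw [this, ← hb1] at hg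
    have h3 : y⁻¹ * u * y * u⁻¹ = y⁻¹ * (u * y * u⁻¹) := by group
    rw [h3, hg]; group

/-- A nontrivial elementary abelian normal `p`-subgroup `V` with complement `Y` doubles the number of
rational classes of `Y`: each class of `y` contributes also the class of `y v` from `second_class`. -/
lemma rcl_double {V Y : Subgroup G} [hVn : V.Normal] (hab : ∀ a ∈ V, ∀ b ∈ V, Commute a b)
    (hV : IsPGroup p V) (hVp : ∀ v ∈ V, v ^ p = 1) (hne : V ≠ ⊥) (hVY : V ⊓ Y = ⊥)
    (hfac : ∀ g : G, ∃ v ∈ V, ∃ b ∈ Y, g = v * b) : 2 * rcl p Y ≤ rcl p G := by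
  classical
  have hm' : ∀ (g : G), ∀ u ∈ V, g⁻¹ * u * g ∈ V := fun g u hu => by
    have := hVn.conj_mem u hu g⁻¹
    rwa [inv_inv] at this
  have hrep : ∀ c : RCl p Y, ∃ y : Y, RP p (y : G) ∧ ConjClasses.mk y = c ∧
      ∃ v ∈ V, RP p ((y : G) * v) ∧ ¬ ∃ g, g * (y : G) * g⁻¹ = y * v := by
    rintro ⟨_, y, ⟨⟨k, hk⟩, t, ht⟩, rfl⟩
    have hk' : (y : G) ^ p ^ k = 1 := congrArg Subtype.val hk
    have ht' : (t : G) * y * (t : G)⁻¹ = (y : G) ^ (1 + p) := congrArg Subtype.val ht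
    exact ⟨y, ⟨⟨k, hk'⟩, t, ht'⟩, rfl, second_class hab hV hVp hne hVY hfac y.2 ht' ⟨k, hk'⟩⟩
  choose r hr1 hr2 v hv hv1 hv2 using hrep
  -- conjugacy modulo `V` of elements of `Y` is conjugacy in `Y`
  have key : ∀ c c' : RCl p Y, ∀ a ∈ V, ∀ b ∈ V, ∀ g : G, g * (r c * a) * g⁻¹ = r c' * b → c = c' := by
    intro c c' a ha b hb g hg
    obtain ⟨u, hu, z, hz, rfl⟩ := hfac g
    apply Subtype.ext
    rw [← hr2 c, ← hr2 c', mk_eq_iff]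
    refine ⟨⟨z, hz⟩, Subtype.ext ?_⟩
    change z * (r c : G) * z⁻¹ = r c'
    have h1 : (r c' : G)⁻¹ * (z * (r c : G) * z⁻¹) ∈ V ⊓ Y := by
      refine ⟨?_, Y.mul_mem (Y.inv_mem (r c').2) (Y.mul_mem (Y.mul_mem hz (r c).2) (Y.inv_mem hz))⟩
      have e : (r c' : G)⁻¹ * (z * (r c : G) * z⁻¹) =
          ((r c' : G)⁻¹ * u⁻¹ * (r c')) * b * u * (z * a⁻¹ * z⁻¹) := by
        have h2 : z * (r c : G) * z⁻¹ = u⁻¹ * (u * z * (r c * a) * (u * z)⁻¹) * u * (z * a⁻¹ * z⁻¹) := by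
          group
        rw [h2, hg]; group
      change _ ∈ V
      rw [e]
      exact mul_mem (mul_mem (mul_mem (hm' _ _ (inv_mem hu)) hb) hu) (hVn.conj_mem _ (inv_mem ha) z)
    rw [hVY, Subgroup.mem_bot, inv_mul_eq_one] at h1
    exact h1.symm
  have : Nat.card (RCl p Y ⊕ RCl p Y) ≤ rcl p G := by
    refine Nat.card_le_card_of_injective (Sum.elim
      (fun c => (⟨ConjClasses.mk (r c : G), _, hr1 c, rfl⟩ : RCl p G))
      (fun c => (⟨ConjClasses.mk ((r c : G) * v c), _, hv1 c, rfl⟩ : RCl p G))) ?_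
    rintro (c | c) (c' | c') h
    · obtain ⟨g, hg⟩ := mk_eq_iff.1 (congrArg Subtype.val h)
      rw [key c c' 1 V.one_mem 1 V.one_mem g (by simpa using hg)]
    · obtain ⟨g, hg⟩ := mk_eq_iff.1 (congrArg Subtype.val h)
      have := key c c' 1 V.one_mem (v c') (hv c') g (by simpa using hg)
      subst this
      exact absurd ⟨g, hg⟩ (hv2 c)
    · obtain ⟨g, hg⟩ := mk_eq_iff.1 (congrArg Subtype.val h.symm)
      have := key c' c 1 V.one_mem (v c) (hv c) g (by simpa using hg)
      subst this
      exact absurd ⟨g, hg⟩ (hv2 c')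
    · obtain ⟨g, hg⟩ := mk_eq_iff.1 (congrArg Subtype.val h)
      rw [key c c' (v c) (hv c) (v c') (hv c') g hg]
  rw [Nat.card_sum] at this
  rw [rcl]; omega

end
end Acd

/-! ### The bound `2 * lin ≤ rcl` for groups that are not `p`-nilpotent -/

namespace Acd
open Subgroup
open scoped Pointwise

section
variable {G : Type} [Group G] [Finite G] {p : ℕ} [hp : Fact p.Prime]

/-- If `Q` has order prime to `p` and `g Q g⁻¹ ≤ V Q` for an abelian normal `p`-subgroup `V`, then
`g` normalizes `Q` up to an element of `V`. This is the conjugacy part of the Schur–Zassenhaus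
theorem, obtained by averaging a cocycle over `Q`. -/
lemma conj_complement {V Q : Subgroup G} [hVn : V.Normal] (hab : ∀ a ∈ V, ∀ b ∈ V, Commute a b)
    (hV : IsPGroup p V) (hVQ : V ⊓ Q = ⊥) (hQ : (Nat.card Q).Coprime p) (g : G)
    (hg : ∀ q ∈ Q, ∃ a ∈ Q, a⁻¹ * (g * q * g⁻¹) ∈ V) :
    ∃ f ∈ V, f * g ∈ normalizer (Q : Set G) := by
  classical
  have : Fintype Q := Fintype.ofFinite Q
  letI : CommGroup V := { (inferInstance : Group V) with
    mul_comm := fun a b => Subtype.ext (hab a a.2 b b.2) }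
  choose α hαQ hαV using hg
  let A : Q → G := fun q => α q q.2
  have hAQ : ∀ q, A q ∈ Q := fun q => hαQ q q.2
  let δ : Q → V := fun q => ⟨(A q)⁻¹ * (g * q * g⁻¹), hαV q q.2⟩
  have hA : ∀ q : Q, g * (q : G) * g⁻¹ = A q * δ q := fun q => by
    change _ = A q * ((A q)⁻¹ * (g * q * g⁻¹)); group
  have hAm : ∀ a b : Q, A (a * b) = A a * A b := by
    intro a b
    have h1 : (A (a * b))⁻¹ * (A a * A b) ∈ V ⊓ Q := by
      refine ⟨?_, Q.mul_mem (Q.inv_mem (hAQ _)) (Q.mul_mem (hAQ _) (hAQ _))⟩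
      have e : (A (a * b))⁻¹ * (A a * A b) =
          δ (a * b) * ((δ b : G)⁻¹ * ((A b)⁻¹ * (δ a : G)⁻¹ * A b)) := by
        have h2 : A a * δ a * (A b * δ b) = A (a * b) * δ (a * b) := by
          rw [← hA, ← hA, ← hA]; push_cast; group
        have h3 : (δ (a * b) : G) = (A (a * b))⁻¹ * (A a * δ a * (A b * δ b)) := by rw [h2]; group
        rw [h3]; group
      change _ ∈ V
      rw [e]
      refine V.mul_mem (δ _).2 (V.mul_mem (V.inv_mem (δ _).2) ?_)
      have := hVn.conj_mem _ (V.inv_mem (δ a).2) (A b)⁻¹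
      rwa [inv_inv] at this
    rw [hVQ, Subgroup.mem_bot, inv_mul_eq_one] at h1
    exact h1
  have hδ : ∀ a b : Q, δ (a * b) = MulAut.conjNormal (A b)⁻¹ (δ a) * δ b := by
    intro a b
    apply Subtype.ext
    push_cast
    rw [MulAut.conjNormal_apply, inv_inv]
    have h2 : A a * δ a * (A b * δ b) = A (a * b) * δ (a * b) := by
      rw [← hA, ← hA, ← hA]; push_cast; group
    rw [hAm] at h2
    have h3 : (δ (a * b) : G) = (A a * A b)⁻¹ * (A a * δ a * (A b * δ b)) := by rw [h2]; group
    rw [h3]; group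
  set e : V := ∏ a, δ a with he
  have hcp : p.Coprime (Fintype.card Q) := by rw [← Nat.card_eq_fintype_card]; exact hQ.symm
  have heq : ∀ b : Q, e = MulAut.conjNormal (A b)⁻¹ e * δ b ^ Fintype.card Q := by
    intro b
    have h1 : e = ∏ a, δ (a * b) := (Equiv.prod_comp (Equiv.mulRight b) δ).symm
    have h2 : ∏ a, δ (a * b) = ∏ a, MulAut.conjNormal (A b)⁻¹ (δ a) * δ b :=
      Finset.prod_congr rfl fun a _ => hδ a b
    rw [Finset.prod_mul_distrib, Finset.prod_const, Finset.card_univ] at h2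
    have h3 : MulAut.conjNormal (A b)⁻¹ e = ∏ a, MulAut.conjNormal (A b)⁻¹ (δ a) := by
      rw [he, map_prod]
    rw [h3, ← h2, ← h1]
  obtain ⟨f, hf⟩ := (hV.powEquiv hcp).surjective e
  have hf' : f ^ Fintype.card Q = e := hf
  have hfe : ∀ b : Q, f = MulAut.conjNormal (A b)⁻¹ f * δ b := by
    intro b
    apply (hV.powEquiv hcp).injective
    change f ^ Fintype.card Q = (_ * _) ^ Fintype.card Q
    rw [mul_pow, ← map_pow, hf', ← heq b]
  refine ⟨f, f.2, mem_norm_iff.2 fun q hq => ?_⟩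
  have h1 := congrArg Subtype.val (hfe ⟨q, hq⟩)
  push_cast at h1
  rw [MulAut.conjNormal_apply, inv_inv] at h1
  have h2 := hA ⟨q, hq⟩
  have h3 : (δ ⟨q, hq⟩ : G) = (A ⟨q, hq⟩)⁻¹ * (f : G)⁻¹ * A ⟨q, hq⟩ * f := by
    have : (δ ⟨q, hq⟩ : G) = ((A ⟨q, hq⟩)⁻¹ * f * A ⟨q, hq⟩)⁻¹ * f := by
      exact eq_inv_mul_of_mul_eq h1.symm
    rw [this]; group
  have h4 : f * g * q * (f * g)⁻¹ = A ⟨q, hq⟩ := by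
    calc f * g * q * (f * g)⁻¹ = f * (g * q * g⁻¹) * (f : G)⁻¹ := by group
      _ = f * (A ⟨q, hq⟩ * δ ⟨q, hq⟩) * (f : G)⁻¹ := by rw [← h2]
      _ = _ := by rw [h3]; group
  rw [h4]; exact hAQ _

/-- If `V` is a minimal normal abelian `p`-subgroup and `G / V` is `p`-nilpotent while `G` is not,
then `Y = N_G(Q)` complements `V`, where `Q` is a complement of `V` in the preimage `K` of the
normal `p`-complement of `G / V`. Moreover homomorphisms from `G` to `μ_p` are determined by their
restriction to `Y`. -/
lemma exists_complement {V : Subgroup G} [hVn : V.Normal] (hab : ∀ a ∈ V, ∀ b ∈ V, Commute a b)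
    (hV : IsPGroup p V) (hne : V ≠ ⊥)
    (hmin : ∀ N : Subgroup G, N.Normal → N ≤ V → N = ⊥ ∨ N = V)
    (hq : HasNormalPComplement (G ⧸ V) p) (hG : ¬ HasNormalPComplement G p) :
    ∃ Y : Subgroup G, V ⊓ Y = ⊥ ∧ (∀ g : G, ∃ v ∈ V, ∃ b ∈ Y, g = v * b) ∧
      ∀ f : G →* rootsOfUnity p ℂ, (∀ y ∈ Y, f y = 1) → f = 1 := by
  obtain ⟨N, hN, hNc, n, hn⟩ := hq
  set π := QuotientGroup.mk' V with hπ
  set K : Subgroup G := N.comap π with hK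
  have hKn : K.Normal := hN.comap π
  have hVK : V ≤ K := by
    intro v hv
    have : π v = 1 := (QuotientGroup.eq_one_iff v).2 hv
    change π v ∈ N
    rw [this]; exact N.one_mem
  obtain ⟨m, hm⟩ := hV.exists_card_eq
  have hKcard : Nat.card K = Nat.card N * Nat.card V := by
    have h1 := Subgroup.card_mul_index K
    have h2 := Subgroup.card_mul_index N
    have h3 : K.index = N.index := Subgroup.index_comap_of_surjective N (QuotientGroup.mk'_surjective V)
    have h4 := Subgroup.card_eq_card_quotient_mul_card_subgroup V
    rw [h4, ← h2, h3] at h1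
    have h5 : 0 < N.index := Nat.pos_of_ne_zero Subgroup.index_ne_zero_of_finite
    apply Nat.eq_of_mul_eq_mul_right h5
    rw [h1]; ring
  set V0 := V.subgroupOf K with hV0
  have hV0c : Nat.card V0 = Nat.card V := Nat.card_congr (Subgroup.subgroupOfEquivOfLe hVK).toEquiv
  have hV0i : V0.index = Nat.card N := by
    have h1 := Subgroup.card_mul_index V0
    rw [hV0c, hKcard, mul_comm (Nat.card N)] at h1
    exact Nat.eq_of_mul_eq_mul_left Nat.card_pos h1
  obtain ⟨H, hH⟩ := Subgroup.exists_right_complement'_of_coprime (N := V0) (by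
    rw [hV0c, hV0i, hm]; exact hNc.symm.pow_left m)
  set Q := H.map K.subtype with hQd
  have hQK : Q ≤ K := by rintro _ ⟨x, _, rfl⟩; exact x.2
  have hQcard : Nat.card Q = Nat.card N := by
    rw [← hV0i, hH.symm.index_eq_card]
    exact Subgroup.card_map_of_injective K.subtype_injective
  have hQc : (Nat.card Q).Coprime p := by rw [hQcard]; exact hNc
  have hVQ : V ⊓ Q = ⊥ := by
    rw [eq_bot_iff]
    rintro _ ⟨hx, ⟨x, hx', rfl⟩⟩
    have : x ∈ V0 ⊓ H := ⟨hx, hx'⟩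
    rw [hH.disjoint.eq_bot] at this
    rw [Subgroup.mem_bot] at this ⊢
    rw [this]; rfl
  have hfacK : ∀ k ∈ K, ∃ a ∈ Q, a⁻¹ * k ∈ V := by
    intro k hk
    obtain ⟨⟨q, v⟩, hqv⟩ := hH.symm.2 ⟨k, hk⟩
    have e : (q : K) * v = ⟨k, hk⟩ := hqv
    refine ⟨(q : K), ⟨q, q.2, rfl⟩, ?_⟩
    have e' : ((q : K) : G) * (v : K) = k := congrArg Subtype.val e
    have : ((q : K) : G)⁻¹ * k = (v : K) := by rw [← e']; group
    rw [this]; exact v.2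
  have hQg : ∀ g : G, ∀ q ∈ Q, ∃ a ∈ Q, a⁻¹ * (g * q * g⁻¹) ∈ V := fun g q hq =>
    hfacK _ (hKn.conj_mem q (hQK hq) g)
  -- elements of `V` commuting with `Q` centralise `K`
  have hcK : ∀ v ∈ V, (∀ q ∈ Q, Commute v q) → v ∈ V ⊓ centralizer (K : Set G) := by
    intro v hv hvq
    refine ⟨hv, fun k hk => ?_⟩
    obtain ⟨a, ha, hak⟩ := hfacK k hk
    have h1 : k = a * (a⁻¹ * k) := by group
    rw [h1]
    exact ((hvq a ha).mul_right (hab v hv _ hak)).eq.symm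
  have hC : V ⊓ centralizer (K : Set G) = ⊥ := by
    refine (hmin _ inferInstance inf_le_left).resolve_right fun hCV => hG ?_
    have hcomm : ∀ v ∈ V, ∀ q ∈ Q, Commute q v := by
      intro v hv q hq
      rw [← hCV] at hv
      exact hv.2 q (hQK hq)
    have hQn : Q.Normal := by
      constructor
      intro q hq g
      obtain ⟨a, ha, hv⟩ := hQg g q hq
      set v := a⁻¹ * (g * q * g⁻¹) with hvd
      have h1 : g * q * g⁻¹ = a * v := by rw [hvd]; group
      have h2 : ∀ x ∈ Q, x ^ Nat.card Q = 1 := fun x hx => by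
        have := pow_card_eq_one' (x := (⟨x, hx⟩ : Q))
        exact congrArg Subtype.val this
      have h3 : v ^ Nat.card Q = 1 := by
        have h4 : (g * q * g⁻¹) ^ Nat.card Q = 1 := by rw [conj_pow', h2 q hq]; simp
        rw [h1, (hcomm v hv a ha).mul_pow, h2 a ha, one_mul] at h4
        exact h4
      obtain ⟨k, hk⟩ := pelt_of_mem hV hv
      have h5 := Nat.eq_one_of_dvd_coprimes (hQc.pow_right k) (orderOf_dvd_of_pow_eq_one h3)
        (orderOf_dvd_of_pow_eq_one hk)
      rw [orderOf_eq_one_iff] at h5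
      rw [h1, h5, mul_one]; exact ha
    refine ⟨Q, hQn, hQc, n + m, ?_⟩
    have h1 := Subgroup.card_mul_index Q
    have h2 := Subgroup.card_mul_index N
    have h4 := Subgroup.card_eq_card_quotient_mul_card_subgroup V
    rw [h4, ← h2, hQcard, hn, hm, mul_assoc, ← pow_add] at h1
    exact Nat.eq_of_mul_eq_mul_left Nat.card_pos h1
  refine ⟨normalizer (Q : Set G), ?_, ?_, ?_⟩
  · rw [eq_bot_iff, ← hC]
    rintro v ⟨hv, hvN⟩
    refine hcK v hv fun q hq => ?_
    have h1 : v * q * v⁻¹ * q⁻¹ ∈ V ⊓ Q := by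
      refine ⟨?_, Q.mul_mem (mem_norm_iff.1 hvN q hq) (Q.inv_mem hq)⟩
      have : v * q * v⁻¹ * q⁻¹ = v * (q * v⁻¹ * q⁻¹) := by group
      change _ ∈ V
      rw [this]; exact V.mul_mem hv (hVn.conj_mem _ (V.inv_mem hv) q)
    rw [hVQ, Subgroup.mem_bot, mul_inv_eq_one, mul_inv_eq_iff_eq_mul] at h1
    exact h1
  · intro g
    obtain ⟨f, hf, hfg⟩ := conj_complement hab hV hVQ hQc g (hQg g)
    exact ⟨f⁻¹, V.inv_mem hf, f * g, hfg, by group⟩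
  · intro f hf
    have hker : f.ker ⊓ V = V := by
      refine (hmin _ inferInstance inf_le_right).resolve_left fun hb => hne ?_
      rw [eq_bot_iff, ← hC]
      intro v hv
      refine hcK v hv fun q hq => ?_
      have h1 : v * q * v⁻¹ * q⁻¹ ∈ f.ker ⊓ V := by
        refine ⟨?_, ?_⟩
        · change f (v * q * v⁻¹ * q⁻¹) = 1
          simp only [map_mul, map_inv]
          rw [mul_comm (f v) (f q)]; group
        · have : v * q * v⁻¹ * q⁻¹ = v * (q * v⁻¹ * q⁻¹) := by group
          change _ ∈ V
          rw [this]; exact V.mul_mem hv (hVn.conj_mem _ (V.inv_mem hv) q)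
      rw [hb, Subgroup.mem_bot, mul_inv_eq_one, mul_inv_eq_iff_eq_mul] at h1
      exact h1
    ext1 g
    obtain ⟨u, hu, hug⟩ := conj_complement hab hV hVQ hQc g (hQg g)
    have h1 : f u = 1 := by
      rw [← hker] at hu; exact hu.1
    have h2 := hf _ hug
    rw [map_mul, h1, one_mul] at h2
    rw [h2]; rfl

lemma exists_min_normal {W : Subgroup G} (hW : W.Normal) (hne : W ≠ ⊥) :
    ∃ V : Subgroup G, V.Normal ∧ V ≠ ⊥ ∧ V ≤ W ∧
      ∀ N : Subgroup G, N.Normal → N ≤ V → N = ⊥ ∨ N = V := by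
  obtain ⟨V, ⟨h1, h2, h3⟩, hmin⟩ := Set.Finite.exists_minimal
    (s := {V : Subgroup G | V.Normal ∧ V ≠ ⊥ ∧ V ≤ W}) (Set.toFinite _) ⟨W, hW, hne, le_rfl⟩
  refine ⟨V, h1, h2, h3, fun N hN hNV => ?_⟩
  by_cases hb : N = ⊥
  · exact Or.inl hb
  · exact Or.inr (le_antisymm hNV (hmin ⟨hN, hb, hNV.trans h3⟩ hNV))

lemma exp_p_of_min {V : Subgroup G} [hVn : V.Normal] (hab : ∀ a ∈ V, ∀ b ∈ V, Commute a b)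
    (hV : IsPGroup p V) (hne : V ≠ ⊥)
    (hmin : ∀ N : Subgroup G, N.Normal → N ≤ V → N = ⊥ ∨ N = V) : ∀ v ∈ V, v ^ p = 1 := by
  let E : Subgroup G :=
    { carrier := {v | v ∈ V ∧ v ^ p = 1}
      one_mem' := ⟨V.one_mem, one_pow _⟩
      mul_mem' := by
        rintro a b ⟨ha, ha'⟩ ⟨hb, hb'⟩
        exact ⟨V.mul_mem ha hb, by rw [(hab a ha b hb).mul_pow, ha', hb', one_mul]⟩
      inv_mem' := by
        rintro a ⟨ha, ha'⟩
        exact ⟨V.inv_mem ha, by rw [inv_pow, ha', inv_one]⟩ }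
  have hE : E.Normal := by
    constructor
    rintro n ⟨hn, hn'⟩ g
    exact ⟨hVn.conj_mem n hn g, by rw [conj_pow', hn']; simp⟩
  have hEV : E = V := by
    refine (hmin E hE fun v hv => hv.1).resolve_left fun hb => ?_
    have : Nontrivial V := (Subgroup.nontrivial_iff_ne_bot V).2 hne
    obtain ⟨n, hn0, hn⟩ := hV.nontrivial_iff_card.1 this
    obtain ⟨x, hx⟩ := exists_prime_orderOf_dvd_card' (G := V) p (by
      rw [hn]; exact dvd_pow_self _ hn0.ne')
    have h1 : (x : G) ∈ E := ⟨x.2, by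
      have := pow_orderOf_eq_one (x : G)
      rwa [Subgroup.orderOf_coe, hx] at this⟩
    rw [hb, Subgroup.mem_bot] at h1
    have : x = 1 := Subtype.ext h1
    rw [this, orderOf_one] at hx
    exact hp.out.one_lt.ne hx
  intro v hv
  rw [← hEV] at hv
  exact hv.2

end

/-- A group of odd order that is not `p`-nilpotent satisfies `2 * lin ≤ rcl`, given that the ratio
`rcl / lin` does not increase under quotients. The proof is by induction on the order. If
`N_G(WW P)` is proper, it is not `p`-nilpotent and controls fusion, so the bound passes up to `G`.
Otherwise there is a minimal normal subgroup `V ≤ WW P`; either `G / V` is not `p`-nilpotent and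
the ratio bound applies, or `V` has a complement and `rcl_double` applies. -/
theorem claimC {p : ℕ} [hp : Fact p.Prime] (hp2 : p ≠ 2)
    (hratio : ∀ (G Q : Type) [Group G] [Finite G] [Group Q] [Finite Q] (f : G →* Q),
      Function.Surjective f → Odd (Nat.card G) → lin p G * rcl p Q ≤ rcl p G * lin p Q) :
    ∀ (n : ℕ) (G : Type) [Group G] [Finite G], Nat.card G = n → Odd n →
      ¬ HasNormalPComplement G p → 2 * lin p G ≤ rcl p G := by
  intro n
  induction n using Nat.strong_induction_on with
  | _ n ih =>
  intro G _ _ hn hodd hG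
  obtain ⟨P⟩ : Nonempty (Sylow p G) := inferInstance
  set W := WW (P : Subgroup G) with hW
  have hPb : (P : Subgroup G) ≠ ⊥ := by
    intro h
    apply hG
    refine ⟨⊤, inferInstance, ?_, 0, by simp⟩
    have := P.not_dvd_index
    rw [h, Subgroup.index_bot] at this
    rw [Subgroup.card_top]
    exact ((Nat.Prime.coprime_iff_not_dvd hp.out).2 this).symm
  by_cases hH : normalizer (W : Set G) = ⊤
  swap
  · have hlt : Nat.card (normalizer (W : Set G)) < n := by
      rw [← hn]
      exact lt_of_le_of_ne (Subgroup.card_le_card_group _)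
        fun h => hH (Subgroup.eq_top_of_card_eq _ h)
    have h1 := ih _ hlt (normalizer (W : Set G)) rfl
      (hodd.of_dvd_nat (hn ▸ Subgroup.card_subgroup_dvd_card _))
      (fun h => hG (pnilp_of_normalizer hp2 (hn ▸ hodd) P h))
    have h2 : rcl p (normalizer (W : Set G)) ≤ rcl p G :=
      rcl_le_of_control P (sylow_le_nWW _) fun x hx g hg => fc_elt hp2 (hn ▸ hodd) P hx hg
    have h3 : lin p G ≤ lin p (normalizer (W : Set G)) :=
      lin_le fun f hf => hom_triv_of_sylow P rou_pgroup f fun x hx => hf x (sylow_le_nWW _ hx)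
    omega
  have hWn : W.Normal := normalizer_eq_top_iff.1 hH
  obtain ⟨V, hVn, hVne, hVW, hmin⟩ := exists_min_normal hWn (WW_ne_bot P.2 hPb)
  have hab : ∀ a ∈ V, ∀ b ∈ V, Commute a b := fun a ha b hb =>
    (WW_adm (P : Subgroup G)).2.2.1 a (hVW ha) b (hVW hb)
  have hVp : IsPGroup p V := P.2.to_le (hVW.trans (WW_le _))
  by_cases hq : HasNormalPComplement (G ⧸ V) p
  swap
  · have h4 := Subgroup.card_eq_card_quotient_mul_card_subgroup V
    have h5 : 1 < Nat.card V := (Subgroup.one_lt_card_iff_ne_bot _).2 hVne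
    have h6 : 0 < Nat.card (G ⧸ V) := Nat.card_pos
    have h1 := ih (Nat.card (G ⧸ V)) (by nlinarith) (G ⧸ V) rfl
      (hodd.of_dvd_nat (hn ▸ Subgroup.card_quotient_dvd_card _)) hq
    have h2 := hratio G (G ⧸ V) (QuotientGroup.mk' V) (QuotientGroup.mk'_surjective V) (hn ▸ hodd)
    have h3 : 0 < lin p (G ⧸ V) := lin_pos
    refine Nat.le_of_mul_le_mul_right ?_ h3
    calc 2 * lin p G * lin p (G ⧸ V) = lin p G * (2 * lin p (G ⧸ V)) := by ring
      _ ≤ lin p G * rcl p (G ⧸ V) := Nat.mul_le_mul_left _ h1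
      _ ≤ _ := h2
  obtain ⟨Y, hVY, hfac, hY⟩ := exists_complement hab hVp hVne hmin hq hG
  have h1 := rcl_double hab hVp (exp_p_of_min hab hVp hVne hmin) hVne hVY hfac
  have h2 : lin p G ≤ lin p Y := lin_le hY
  have hYodd : Odd (Nat.card Y) := hodd.of_dvd_nat (hn ▸ Subgroup.card_subgroup_dvd_card _)
  have h3 : lin p Y ≤ rcl p Y := by
    have h4 := hratio Y Unit 1 (fun _ => ⟨1, rfl⟩) hYodd
    have h5 : lin p Unit = 1 := by
      rw [lin, Nat.card_eq_one_iff_unique]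
      exact ⟨⟨fun f g => MonoidHom.ext fun x => by rw [Subsingleton.elim x 1, map_one, map_one]⟩, ⟨1⟩⟩
    have h6 : 1 ≤ rcl p Unit := by
      have : Nonempty (RCl p Unit) := ⟨⟨_, 1, ⟨⟨0, rfl⟩, 1, rfl⟩, rfl⟩⟩
      exact Nat.card_pos
    nlinarith
  omega

end Acd

/-! ### Field automorphisms of `ℂ` and cyclotomic fields -/

namespace Acd

/-- Automorphisms of subfields of `ℂ` extend to `ℂ`, through a transcendence basis. -/
lemma ext_aut {F : Type} [Field F] [Algebra F ℂ] (K : IntermediateField F ℂ) (τ : K ≃+* K) :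
    ∃ σ : ℂ ≃+* ℂ, ∀ x : K, σ x = τ x := by
  obtain ⟨s, hs⟩ := exists_isTranscendenceBasis K ℂ
  letI := IsAlgClosed.isAlgClosure_of_transcendence_basis ((↑) : s → ℂ) hs
  let e : Algebra.adjoin K (Set.range ((↑) : s → ℂ)) ≃+* Algebra.adjoin K (Set.range ((↑) : s → ℂ)) :=
    hs.1.aevalEquiv.symm.toRingEquiv.trans
      ((MvPolynomial.mapEquiv s τ).trans hs.1.aevalEquiv.toRingEquiv)
  refine ⟨IsAlgClosure.equivOfEquiv ℂ ℂ e, fun x => ?_⟩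
  have h1 := IsAlgClosure.equivOfEquiv_algebraMap ℂ ℂ e (algebraMap K _ x)
  have h2 : e (algebraMap K _ x) = algebraMap K _ (τ x) := by
    change hs.1.aevalEquiv (MvPolynomial.mapEquiv s τ (hs.1.aevalEquiv.symm (algebraMap K _ x))) = _
    rw [AlgEquiv.commutes, MvPolynomial.mapEquiv_apply, MvPolynomial.algebraMap_eq, MvPolynomial.map_C,
      ← MvPolynomial.algebraMap_eq]
    exact AlgEquiv.commutes _ _
  rw [h2] at h1
  exact h1

lemma cyc_adjoin {F : Type} [Field F] [Algebra F ℂ] {N : ℕ} [NeZero N] {ζ : ℂ}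
    (hζ : IsPrimitiveRoot ζ N) :
    IsCyclotomicExtension {N} F (IntermediateField.adjoin F {ζ}) := by
  change IsCyclotomicExtension {N} F (IntermediateField.adjoin F {ζ}).toSubalgebra
  have hIntg : IsIntegral F ζ := ⟨Polynomial.X ^ N - 1, Polynomial.monic_X_pow_sub_C 1 (NeZero.ne N),
    by simp [hζ.pow_eq_one]⟩
  rw [IntermediateField.adjoin_simple_toSubalgebra_of_isAlgebraic hIntg.isAlgebraic]
  exact hζ.adjoin_isCyclotomicExtension F

/-- Every `k` prime to `N` is realized by an automorphism of `ℂ` acting as `z ↦ z ^ k` on the `N`-th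
roots of unity. -/
lemma gal_aut {N k : ℕ} (hN : 0 < N) (hk : k.Coprime N) :
    ∃ σ : ℂ ≃+* ℂ, ∀ z : ℂ, z ^ N = 1 → σ z = z ^ k := by
  have : NeZero N := ⟨hN.ne'⟩
  obtain ⟨ζ, hζ⟩ : ∃ ζ : ℂ, IsPrimitiveRoot ζ N := ⟨_, Complex.isPrimitiveRoot_exp N hN.ne'⟩
  let K : IntermediateField ℚ ℂ := IntermediateField.adjoin ℚ {ζ}
  have hK : IsCyclotomicExtension {N} ℚ K := cyc_adjoin hζ
  have hζ' := IsCyclotomicExtension.zeta_spec N ℚ K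
  have hz := hζ'.pow_of_coprime k hk
  have hirr := Polynomial.cyclotomic.irreducible_rat hN
  let τ : K ≃ₐ[ℚ] K := IsCyclotomicExtension.fromZetaAut hz hirr
  have hτ : τ _ = _ := IsCyclotomicExtension.fromZetaAut_spec hz hirr
  obtain ⟨σ, hσ⟩ := ext_aut K τ.toRingEquiv
  refine ⟨σ, fun z hz1 => ?_⟩
  have hζ'' := hζ'.map_of_injective (f := algebraMap K ℂ) (algebraMap K ℂ).injective
  obtain ⟨i, -, rfl⟩ := hζ''.eq_pow_of_pow_eq_one hz1
  rw [map_pow, pow_right_comm]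
  congr 1
  have := hσ (IsCyclotomicExtension.zeta N ℚ K)
  erw [hτ] at this
  exact this

/-- A sum of `N`-th roots of unity fixed by all automorphisms `z ↦ z ^ k` with `k ≡ 1` modulo `p`
lies in `ℚ(ζ_p)`, by Galois theory for `ℚ(ζ_N)` over `ℚ(ζ_p)`. -/
lemma fixed_mem {p N : ℕ} (hp : p.Prime) (hN : 0 < N) (hpN : p ∣ N) {d : ℕ} (e : Fin d → ℂ)
    (he : ∀ i, e i ^ N = 1)
    (h : ∀ (σ : ℂ ≃+* ℂ) (k : ℕ), k ≡ 1 [MOD p] → k.Coprime N →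
      (∀ z : ℂ, z ^ N = 1 → σ z = z ^ k) → σ (∑ i, e i) = ∑ i, e i) :
    ∑ i, e i ∈ Qzeta p := by
  have : NeZero N := ⟨hN.ne'⟩
  obtain ⟨ζ, hζ⟩ : ∃ ζ : ℂ, IsPrimitiveRoot ζ N := ⟨_, Complex.isPrimitiveRoot_exp N hN.ne'⟩
  let K : IntermediateField (Qzeta p) ℂ := IntermediateField.adjoin (Qzeta p) {ζ}
  have hK : IsCyclotomicExtension {N} (Qzeta p) K := cyc_adjoin hζ
  have hgal : IsGalois (Qzeta p) K := IsCyclotomicExtension.isGalois {N} (Qzeta p) K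
  have hfin : FiniteDimensional (Qzeta p) K := IsCyclotomicExtension.finiteDimensional {N} (Qzeta p) K
  have hζK : ζ ∈ K := IntermediateField.mem_adjoin_simple_self _ ζ
  have hxK : ∑ i, e i ∈ K := by
    refine sum_mem fun i _ => ?_
    obtain ⟨j, -, hj⟩ := hζ.eq_pow_of_pow_eq_one (he i)
    rw [← hj]; exact pow_mem hζK j
  have hmem : (⟨_, hxK⟩ : K) ∈ (⊥ : IntermediateField (Qzeta p) K) := by
    rw [IsGalois.mem_bot_iff_fixed]
    intro τ
    obtain ⟨σ, hσ⟩ := ext_aut K τ.toRingEquiv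
    have hσζ : IsPrimitiveRoot (σ ζ) N := hζ.map_of_injective σ.injective
    obtain ⟨k, -, hk⟩ := hζ.eq_pow_of_pow_eq_one hσζ.pow_eq_one
    have hkc : k.Coprime N := by
      rw [← hk] at hσζ
      exact (hζ.pow_iff_coprime hN k).1 hσζ
    have hall : ∀ z : ℂ, z ^ N = 1 → σ z = z ^ k := by
      intro z hz
      obtain ⟨j, -, rfl⟩ := hζ.eq_pow_of_pow_eq_one hz
      rw [map_pow, ← hk, pow_right_comm]
    have hk1 : k ≡ 1 [MOD p] := by
      have hc' := hpN
      obtain ⟨c, hc⟩ := hpN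
      have hprim : IsPrimitiveRoot (ζ ^ c) p := hζ.pow hN (by rw [hc, mul_comm])
      have h1 : ζ ^ c ∈ Qzeta p := Subfield.subset_closure hprim.pow_eq_one
      have h2 : σ (ζ ^ c) = ζ ^ c := by
        have h3 := hσ (algebraMap (Qzeta p) K ⟨_, h1⟩)
        have h4 : τ.toRingEquiv (algebraMap (Qzeta p) K ⟨_, h1⟩) = algebraMap (Qzeta p) K ⟨_, h1⟩ :=
          τ.commutes _
        rw [h4] at h3
        exact h3
      rw [hall _ (by rw [← pow_mul, mul_comm, pow_mul, hζ.pow_eq_one, one_pow])] at h2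
      have hk0 : 1 ≤ k := by
        rcases Nat.eq_zero_or_pos k with rfl | h0
        · rw [Nat.coprime_zero_left] at hkc
          have : p ≤ N := Nat.le_of_dvd hN hc'
          have := hp.two_le
          omega
        · exact h0
      have h5 : (ζ ^ c) ^ (k - 1) = 1 := by
        apply mul_right_cancel₀ (hprim.ne_zero hp.ne_zero)
        rw [← pow_succ, Nat.sub_add_cancel hk0, h2, one_mul]
      exact ((Nat.modEq_iff_dvd' hk0).2 (hprim.dvd_of_pow_eq_one _ h5)).symm
    apply Subtype.ext
    have := h σ k hk1 hkc hall
    exact (hσ ⟨_, hxK⟩).symm.trans this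
  obtain ⟨y, hy⟩ := IntermediateField.mem_bot.1 hmem
  have := congrArg (algebraMap K ℂ) hy
  have h6 : (y : ℂ) = ∑ i, e i := this
  rw [← h6]; exact y.2

end Acd

/-! ### Simultaneous diagonalization -/

namespace Acd
open Module

lemma sim_diag {ι : Type} {d n : ℕ} (hn : 0 < n) (A : ι → Matrix (Fin d) (Fin d) ℂ)
    (hc : ∀ i j, Commute (A i) (A j)) (hA : ∀ i, A i ^ n = 1) :
    ∃ (U V : Matrix (Fin d) (Fin d) ℂ) (w : ι → Fin d → ℂ), V * U = 1 ∧ U * V = 1 ∧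
      (∀ i, A i = U * Matrix.diagonal (w i) * V) := by
  classical
  let f : ι → End ℂ (Fin d → ℂ) := fun i => Matrix.toLin' (A i)
  have hfn : ∀ i, f i ^ n = 1 := fun i => by
    change Matrix.toLin' (A i) ^ n = 1
    rw [← Matrix.toLin'_pow, hA]; exact Matrix.toLin'_one
  have hss : ∀ i, (f i).IsSemisimple := fun i => by
    refine End.isSemisimple_of_squarefree_aeval_eq_zero (p := Polynomial.X ^ n - 1) ?_ ?_
    · exact (Polynomial.separable_X_pow_sub_C (1 : ℂ) (by exact_mod_cast hn.ne') one_ne_zero).squarefree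
    · simp [hfn i]
  have hmg : ∀ i μ, (f i).maxGenEigenspace μ = (f i).eigenspace μ := fun i μ =>
    (hss i).isFinitelySemisimple.maxGenEigenspace_eq_eigenspace μ
  have hjoint := End.iSup_iInf_maxGenEigenspace_eq_top_of_iSup_maxGenEigenspace_eq_top_of_commute f
    (fun i j _ => by
      change Matrix.toLin' (A i) ∘ₗ Matrix.toLin' (A j) = Matrix.toLin' (A j) ∘ₗ Matrix.toLin' (A i)
      rw [← Matrix.toLin'_mul, (hc i j).eq, Matrix.toLin'_mul])
    (fun i => by simp_rw [hmg]; exact (hss i).iSup_eigenspace_eq_top)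
  simp_rw [hmg] at hjoint
  let S : Set (Fin d → ℂ) := ⋃ χ : ι → ℂ, ((⨅ i, (f i).eigenspace (χ i) : Submodule ℂ (Fin d → ℂ)) : Set _)
  have hS : ⊤ ≤ Submodule.span ℂ S := by
    rw [Submodule.span_iUnion]
    simp only [Submodule.span_eq]
    exact hjoint.ge
  let b0 := Basis.ofSpan hS
  have hb0 : ∀ i, b0 i ∈ S := fun i => Basis.ofSpan_subset hS ⟨i, rfl⟩
  have hfin : Fintype ((linearIndepOn_empty ℂ id).extend (Set.empty_subset S)) :=
    FiniteDimensional.fintypeBasisIndex b0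
  let b : Basis (Fin d) ℂ (Fin d → ℂ) := b0.reindex (Fintype.equivOfCardEq (by
    rw [← Module.finrank_eq_card_basis b0]; simp))
  have hb : ∀ j, ∃ χ : ι → ℂ, ∀ i, f i (b j) = χ i • b j := by
    intro j
    have h1 : b j ∈ S := by rw [Basis.reindex_apply]; exact hb0 _
    obtain ⟨χ, hχ⟩ := Set.mem_iUnion.1 h1
    refine ⟨χ, fun i => ?_⟩
    exact End.mem_eigenspace_iff.1 ((Submodule.mem_iInf _).1 hχ i)
  choose χ hχ using hb
  have hUV := (Pi.basisFun ℂ (Fin d)).toMatrix_mul_toMatrix_flip b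
  have hVU := b.toMatrix_mul_toMatrix_flip (Pi.basisFun ℂ (Fin d))
  set U := (Pi.basisFun ℂ (Fin d)).toMatrix b with hU
  set V := b.toMatrix (Pi.basisFun ℂ (Fin d)) with hV
  refine ⟨U, V, fun i j => χ j i, hVU, hUV, fun i => ?_⟩
  have h1 : A i * U = U * Matrix.diagonal (fun j => χ j i) := by
    ext k j
    rw [Matrix.mul_diagonal]
    have h2 := congrFun (hχ j i) k
    simp only [f, Matrix.toLin'_apply, Matrix.mulVec, dotProduct, Pi.smul_apply, smul_eq_mul] at h2
    rw [Matrix.mul_apply]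
    simp only [hU, Basis.toMatrix_apply, Pi.basisFun_repr]
    rw [h2, mul_comm]
  rw [← h1, mul_assoc, hUV, mul_one]

lemma conj_diag_pow {d : ℕ} {U V : Matrix (Fin d) (Fin d) ℂ} (hVU : V * U = 1) (hUV : U * V = 1)
    (e : Fin d → ℂ) (k : ℕ) :
    (U * Matrix.diagonal e * V) ^ k = U * Matrix.diagonal (fun i => e i ^ k) * V := by
  induction k with
  | zero => simp [hUV]
  | succ k ih =>
    rw [pow_succ, ih]
    have : U * Matrix.diagonal (fun i => e i ^ k) * V * (U * Matrix.diagonal e * V) =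
      U * (Matrix.diagonal (fun i => e i ^ k) * (V * U) * Matrix.diagonal e) * V := by
        simp only [mul_assoc]
    rw [this, hVU, mul_one, Matrix.diagonal_mul_diagonal]
    simp only [pow_succ]

lemma eig {d n : ℕ} (hn : 0 < n) (A : Matrix (Fin d) (Fin d) ℂ) (hA : A ^ n = 1) :
    ∃ e : Fin d → ℂ, (∀ i, e i ^ n = 1) ∧ (∀ k, (A ^ k).trace = ∑ i, e i ^ k) ∧
      ∀ k, (∀ i, e i ^ k = 1) → A ^ k = 1 := by
  obtain ⟨U, V, w, hVU, hUV, h⟩ := sim_diag hn (fun _ : Unit => A) (fun _ _ => rfl) (fun _ => hA)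
  have h := h ()
  refine ⟨w (), fun i => ?_, fun k => ?_, fun k h1 => ?_⟩
  · rw [h, conj_diag_pow hVU hUV] at hA
    have h2 : Matrix.diagonal (fun i => w () i ^ n) = 1 := by
      calc _ = (V * U) * Matrix.diagonal (fun i => w () i ^ n) * (V * U) := by rw [hVU]; simp
        _ = V * (U * Matrix.diagonal (fun i => w () i ^ n) * V) * U := by simp only [mul_assoc]
        _ = 1 := by rw [hA, mul_one, hVU]
    have := congrFun (congrFun h2 i) i
    simpa using this
  · conv_lhs => rw [h, conj_diag_pow hVU hUV, Matrix.trace_mul_comm, ← mul_assoc, hVU, one_mul]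
    simp [Matrix.trace]
  · rw [h, conj_diag_pow hVU hUV, show (fun i => w () i ^ k) = fun _ => 1 from funext h1]
    simp [hUV]

end Acd

/-! ### Irreducible characters: orthogonality and completeness -/

namespace Acd
open Module

/-- Irreducible characters are the traces of matrix representations having norm one. -/
lemma mem_Irr_iff {G : Type} [Group G] [Fintype G] {χ : G → ℂ} :
    χ ∈ Irr G ↔ ∃ (d : ℕ) (M : G →* Matrix (Fin d) (Fin d) ℂ), (∀ g, χ g = (M g).trace) ∧
      ∑ g, χ g * χ g⁻¹ = Nat.card G := by
  classical
  constructor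
  · rintro ⟨V, hV, rfl⟩
    let b := finBasis ℂ V
    refine ⟨finrank ℂ V, (LinearMap.toMatrixAlgEquiv b).toMulEquiv.toMonoidHom.comp V.ρ, fun g => ?_, ?_⟩
    · exact LinearMap.trace_eq_matrix_trace ℂ b (V.ρ g)
    · exact (FDRep.simple_iff_char_is_norm_one V).1 hV
  · rintro ⟨d, M, hM, h⟩
    let ρ : G →* ((Fin d → ℂ) →ₗ[ℂ] (Fin d → ℂ)) :=
      (Matrix.toLinAlgEquiv').toMulEquiv.toMonoidHom.comp M
    have hch : χ = (FDRep.of ρ).character := by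
      funext g
      rw [hM]
      exact (Matrix.trace_toLin'_eq (M g)).symm
    refine ⟨FDRep.of ρ, (FDRep.simple_iff_char_is_norm_one _).2 ?_, hch⟩
    rw [← hch]; exact h

section
variable {G : Type} [Group G] [Fintype G] {χ ψ : G → ℂ}

lemma irr_conj (hχ : χ ∈ Irr G) (g h : G) : χ (h * g * h⁻¹) = χ g := by
  obtain ⟨V, _, rfl⟩ := hχ
  exact FDRep.char_conj V g h

lemma irr_norm (hχ : χ ∈ Irr G) : ∑ g, χ g * χ g⁻¹ = Nat.card G := (mem_Irr_iff.1 hχ).choose_spec.choose_spec.2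

lemma irr_orth (hχ : χ ∈ Irr G) (hψ : ψ ∈ Irr G) (hne : χ ≠ ψ) : ∑ g, χ g * ψ g⁻¹ = 0 := by
  classical
  obtain ⟨V, hV, rfl⟩ := hχ
  obtain ⟨W, hW, rfl⟩ := hψ
  have h0 : (Nat.card G : ℂ) ≠ 0 := by exact_mod_cast Nat.card_pos.ne'
  haveI : Invertible (Nat.card G : ℂ) := invertibleOfNonzero h0
  have h1 := FDRep.char_orthonormal V W
  rw [if_neg] at h1
  · simpa [h0] using h1
  · rintro ⟨i⟩
    exact hne (FDRep.char_iso i)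

lemma char_mem_Irr {V : Type*} [AddCommGroup V] [Module ℂ V] [FiniteDimensional ℂ V]
    (ρ : Representation ℂ G V) [ρ.IsIrreducible] : ρ.character ∈ Irr G := by
  classical
  rw [mem_Irr_iff]
  let b := finBasis ℂ V
  refine ⟨finrank ℂ V, (LinearMap.toMatrixAlgEquiv b).toMulEquiv.toMonoidHom.comp ρ, fun g => ?_, ?_⟩
  · exact LinearMap.trace_eq_matrix_trace ℂ b (ρ g)
  · have h0 : (Nat.card G : ℂ) ≠ 0 := by exact_mod_cast Nat.card_pos.ne'
    haveI : Invertible (Nat.card G : ℂ) := invertibleOfNonzero h0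
    have h1 := Representation.char_orthonormal ρ ρ
    rw [if_pos ⟨Representation.Equiv.refl ρ⟩, inv_mul_eq_one₀ h0] at h1
    exact h1.symm

/-- By Schur's lemma, a class function orthogonal to an irreducible character acts as zero on the
corresponding representation. -/
lemma irred_zero {V : Type*} [AddCommGroup V] [Module ℂ V] [FiniteDimensional ℂ V]
    (ρ : Representation ℂ G V) [ρ.IsIrreducible] {f : G → ℂ} (hf : ∀ g h, f (h * g * h⁻¹) = f g)
    (h : ∑ g, f g * ρ.character g⁻¹ = 0) : ∑ g, f g • ρ g⁻¹ = 0 := by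
  classical
  set T : V →ₗ[ℂ] V := ∑ g, f g • ρ g⁻¹ with hT
  have hcomm : ∀ x, T ∘ₗ ρ x = ρ x ∘ₗ T := by
    intro x
    have e1 : T ∘ₗ ρ x = T * ρ x := rfl
    have e2 : ρ x ∘ₗ T = ρ x * T := rfl
    rw [e1, e2, hT, Finset.sum_mul, Finset.mul_sum]
    rw [← Equiv.sum_comp (MulAut.conj x).toEquiv]
    refine Finset.sum_congr rfl fun g _ => ?_
    change f (x * g * x⁻¹) • ρ (x * g * x⁻¹)⁻¹ * ρ x = ρ x * (f g • ρ g⁻¹)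
    rw [hf, smul_mul_assoc, mul_smul_comm, ← map_mul, ← map_mul]
    congr 2; group
  let F : ρ.IntertwiningMap ρ := ⟨T, hcomm⟩
  obtain ⟨c, hc⟩ := (Representation.IsIrreducible.algebraMap_intertwiningMap_bijective_of_isAlgClosed
    (ρ := ρ)).2 F
  have hTc : T = c • LinearMap.id := by
    ext v
    have := congrArg (fun F : ρ.IntertwiningMap ρ => F v) hc
    exact this.symm
  have htr : LinearMap.trace ℂ V T = 0 := by
    rw [hT, map_sum, ← h]
    refine Finset.sum_congr rfl fun g _ => ?_
    rw [map_smul]; rfl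
  rw [hTc, map_smul, smul_eq_mul, LinearMap.trace_id] at htr
  rcases mul_eq_zero.1 htr with h1 | h1
  · rw [hTc, h1, zero_smul]
  · have h2 : finrank ℂ V = 0 := by exact_mod_cast h1
    have := Module.finrank_zero_iff.1 h2
    exact Subsingleton.elim _ _

lemma simple_kill {S : Type} [AddCommGroup S] [Module ℂ S] [Module (MonoidAlgebra ℂ G) S]
    [IsScalarTower ℂ (MonoidAlgebra ℂ G) S]
    [hs : IsSimpleModule (MonoidAlgebra ℂ G) S] {f : G → ℂ} (hf : ∀ g h, f (h * g * h⁻¹) = f g)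
    (h : ∀ χ ∈ Irr G, ∑ g, f g * χ g⁻¹ = 0) (s : S) :
    (∑ g, MonoidAlgebra.single g⁻¹ (f g) : MonoidAlgebra ℂ G) • s = 0 := by
  classical
  let ρ : Representation ℂ G S := Representation.ofModule' (k := ℂ) (G := G) S
  have hρ : ∀ (r : MonoidAlgebra ℂ G) (x : S), ρ.asAlgebraHom r x = r • x := by
    intro r x
    have : ρ.asAlgebraHom = Algebra.lsmul ℂ ℂ S :=
      (MonoidAlgebra.lift ℂ (S →ₗ[ℂ] S) G).apply_symm_apply _
    rw [this]; rfl
  let e : ρ.asModule ≃ₗ[MonoidAlgebra ℂ G] S :=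
    { ρ.asModuleEquiv.toAddEquiv with
      map_smul' := fun r x => (Representation.asModuleEquiv_map_smul ρ r x).trans (hρ r _) }
  have hirr : ρ.IsIrreducible :=
    (Representation.irreducible_iff_isSimpleModule_asModule ρ).2 (IsSimpleModule.congr e)
  haveI hfg : Module.Finite ℂ (MonoidAlgebra ℂ G) := inferInstance
  have hfd : FiniteDimensional ℂ S := Module.Finite.trans (MonoidAlgebra ℂ G) _
  have h1 := irred_zero ρ hf (h _ (char_mem_Irr ρ))
  have h2 : ρ.asAlgebraHom (∑ g, MonoidAlgebra.single g⁻¹ (f g) : MonoidAlgebra ℂ G) = 0 := by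
    rw [← h1, map_sum]
    exact Finset.sum_congr rfl fun g _ => Representation.asAlgebraHom_single ρ _ _
  rw [← hρ, h2]; rfl

/-- A class function orthogonal to all irreducible characters vanishes: the corresponding element of
the group algebra kills every simple module, so it lies in the Jacobson radical, which is zero. -/
lemma complete {f : G → ℂ} (hf : ∀ g h, f (h * g * h⁻¹) = f g)
    (h : ∀ χ ∈ Irr G, ∑ g, f g * χ g⁻¹ = 0) (x : G) : f x = 0 := by
  classical
  have ha : (∑ g, MonoidAlgebra.single g⁻¹ (f g) : MonoidAlgebra ℂ G) ∈
      Ring.jacobson (MonoidAlgebra ℂ G) := by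
    rw [Ring.jacobson_eq_sInf_isMaximal, Submodule.mem_sInf]
    intro m hm
    have hm' : Ideal.IsMaximal m := hm
    have hs : IsSimpleModule (MonoidAlgebra ℂ G) (MonoidAlgebra ℂ G ⧸ m) :=
      isSimpleModule_iff_isCoatom.2 hm'.out
    have h4 := simple_kill (S := MonoidAlgebra ℂ G ⧸ m) hf h (Submodule.Quotient.mk 1)
    rw [← Submodule.Quotient.mk_smul, Submodule.Quotient.mk_eq_zero] at h4
    simpa using h4
  haveI : NeZero (Nat.card G : ℂ) := ⟨by exact_mod_cast Nat.card_pos.ne'⟩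
  rw [IsSemisimpleRing.jacobson_eq_bot] at ha
  have h5 := congrArg (fun b : MonoidAlgebra ℂ G => b.coeff x⁻¹) ((Submodule.mem_bot _).1 ha)
  simpa [Finsupp.single_apply] using h5

end
end Acd

/-! ### The exponent `m` -/

namespace Acd
open Module

/-- The data defining the exponent `m` for a group of odd order `n`: `p n = p ^ a n'` with `n'` prime
to `p`, `m ≡ 1 + p` modulo `p ^ a` and `m ≡ -1` modulo `n'`. The extra factor `p` ensures that the
`p n`-th roots of unity include the `p`-th ones even when `p` does not divide `n`. -/
structure Dat (p n a n' m : ℕ) : Prop where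
  hp : p.Prime
  hp2 : p ≠ 2
  hn : Odd n
  ha : 1 ≤ a
  hN : p * n = p ^ a * n'
  hco : n'.Coprime p
  h1 : m ≡ 1 + p [MOD p ^ a]
  h2 : m + 1 ≡ 0 [MOD n']

lemma exists_dat {p n : ℕ} (hp : p.Prime) (hp2 : p ≠ 2) (hn : Odd n) : ∃ a n' m, Dat p n a n' m := by
  have hn0 : p * n ≠ 0 := mul_ne_zero hp.ne_zero hn.pos.ne'
  obtain ⟨a, n', h, hN⟩ := Nat.exists_eq_pow_mul_and_not_dvd hn0 p hp.ne_one
  have hco : n'.Coprime p := ((Nat.Prime.coprime_iff_not_dvd hp).2 h).symm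
  have ha : 1 ≤ a := by
    rcases Nat.eq_zero_or_pos a with rfl | h'
    · exfalso; apply h; rw [pow_zero, one_mul] at hN; rw [← hN]; exact dvd_mul_right _ _
    · exact h'
  have hn'0 : 0 < n' := Nat.pos_of_ne_zero (by rintro rfl; simp at h)
  obtain ⟨m, h1, h2⟩ := Nat.chineseRemainder (n := p ^ a) (m := n') (hco.symm.pow_left a) (1 + p) (n' - 1)
  refine ⟨a, n', m, hp, hp2, hn, ha, hN, hco, h1, ?_⟩
  have := h2.add_right 1
  rw [Nat.sub_add_cancel hn'0] at this
  exact this.trans (by simp [Nat.ModEq])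

namespace Dat
variable {p n a n' m : ℕ}

lemma N_pos (D : Dat p n a n' m) : 0 < p * n := Nat.mul_pos D.hp.pos D.hn.pos

lemma odd_n' (D : Dat p n a n' m) : Odd n' := by
  have h : Odd (p * n) := (D.hp.odd_of_ne_two D.hp2).mul D.hn
  rw [D.hN] at h
  exact (Nat.odd_mul.1 h).2

lemma p_dvd (D : Dat p n a n' m) : p ∣ p ^ a := dvd_pow_self p (by have := D.ha; omega)

lemma m_modp (D : Dat p n a n' m) : m ≡ 1 [MOD p] := by
  have := (D.h1.of_dvd D.p_dvd)
  exact this.trans (by simp [Nat.ModEq])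

lemma m_cop (D : Dat p n a n' m) : m.Coprime (p * n) := by
  rw [D.hN]
  refine Nat.Coprime.mul_right (Nat.Coprime.pow_right _ ?_) ?_
  · have := D.m_modp.gcd_eq
    rw [Nat.gcd_one_left] at this
    exact this
  · have hd : n' ∣ m + 1 := (Nat.modEq_zero_iff_dvd).1 D.h2
    exact Nat.Coprime.coprime_dvd_right hd (by simp)

/-- The power `s = m ^ p ^ (a - 1)` is congruent to `1` modulo `p ^ a` and to `-1` modulo `n'`. -/
lemma s_props (D : Dat p n a n' m) : m ^ p ^ (a - 1) ≡ 1 [MOD p ^ a] ∧ m ^ p ^ (a - 1) + 1 ≡ 0 [MOD n'] := by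
  constructor
  · have h : (p : ℤ) ∣ (m : ℤ) - 1 := by
      have := (Nat.modEq_iff_dvd.1 D.m_modp.symm)
      simpa using this
    have h2 := dvd_sub_pow_of_dvd_sub (R := ℤ) h (a - 1)
    rw [Nat.sub_add_cancel D.ha, one_pow] at h2
    refine (Nat.modEq_iff_dvd.2 ?_).symm
    push_cast; exact h2
  · have hodd : Odd (p ^ (a - 1)) := (D.hp.odd_of_ne_two D.hp2).pow
    have hd : n' ∣ m + 1 := (Nat.modEq_zero_iff_dvd).1 D.h2
    refine Nat.modEq_zero_iff_dvd.2 (hd.trans ?_)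
    have := hodd.nat_add_dvd_pow_add_pow m 1
    simpa using this

lemma s_sq (D : Dat p n a n' m) : (m ^ p ^ (a - 1)) * (m ^ p ^ (a - 1)) ≡ 1 [MOD p * n] := by
  rw [D.hN]
  refine (Nat.modEq_and_modEq_iff_modEq_mul (D.hco.symm.pow_left a)).1 ⟨?_, ?_⟩
  · exact D.s_props.1.mul D.s_props.1
  · set s := m ^ p ^ (a - 1)
    have hd : (n' : ℤ) ∣ s + 1 := by exact_mod_cast (Nat.modEq_zero_iff_dvd).1 D.s_props.2
    refine (Nat.modEq_iff_dvd.2 ?_).symm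
    push_cast
    have : (s : ℤ) * s - 1 = (s + 1) * (s - 1) := by ring
    rw [this]; exact hd.mul_right _

/-- Modulo `p ^ a`, the exponent `m` generates the units congruent to `1` modulo `p`. -/
lemma pow_j (D : Dat p n a n' m) {k : ℕ} (hk : k ≡ 1 [MOD p]) : ∃ j, k ≡ m ^ j [MOD p ^ a] := by
  obtain ⟨b, rfl⟩ : ∃ b, a = b + 1 := ⟨a - 1, by have := D.ha; omega⟩
  haveI : NeZero (p ^ (b + 1)) := ⟨pow_ne_zero _ D.hp.ne_zero⟩
  have hcop : ∀ k : ℕ, k ≡ 1 [MOD p] → k.Coprime (p ^ (b + 1)) := fun k hk => by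
    refine Nat.Coprime.pow_right _ ?_
    have := hk.gcd_eq
    rwa [Nat.gcd_one_left] at this
  let x : (ZMod (p ^ (b + 1)))ˣ := ZMod.unitOfCoprime k (hcop k hk)
  let y : (ZMod (p ^ (b + 1)))ˣ := ZMod.unitOfCoprime m (hcop m D.m_modp)
  have hy : orderOf y = p ^ b := by
    rw [← orderOf_units]
    have : ((y : (ZMod (p ^ (b + 1)))ˣ) : ZMod (p ^ (b + 1))) = 1 + p := by
      rw [ZMod.coe_unitOfCoprime]
      have := (ZMod.natCast_eq_natCast_iff _ _ _).2 D.h1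
      rw [this]; push_cast; rfl
    rw [this]
    exact ZMod.orderOf_one_add_prime D.hp D.hp2 b
  have hx : x ^ p ^ b = 1 := by
    apply Units.ext
    rw [Units.val_pow_eq_pow_val, ZMod.coe_unitOfCoprime, Units.val_one]
    have h : (p : ℤ) ∣ (k : ℤ) - 1 := by
      have := (Nat.modEq_iff_dvd.1 hk.symm)
      simpa using this
    have h2 := dvd_sub_pow_of_dvd_sub (R := ℤ) h b
    rw [one_pow] at h2
    have h3 := (ZMod.intCast_zmod_eq_zero_iff_dvd ((k : ℤ) ^ p ^ b - 1) (p ^ (b + 1))).2 (by exact_mod_cast h2)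
    push_cast at h3
    exact sub_eq_zero.1 h3
  haveI := ZMod.isCyclic_units_of_prime_pow p D.hp D.hp2 (b + 1)
  have hmem : x ∈ Subgroup.zpowers y := by
    classical
    have hle := IsCyclic.card_pow_eq_one_le (α := (ZMod (p ^ (b + 1)))ˣ) (n := p ^ b) (pow_pos D.hp.pos _)
    have hsub : (Finset.univ.filter fun z => z ∈ Subgroup.zpowers y) ⊆
        (Finset.univ.filter fun z : (ZMod (p ^ (b + 1)))ˣ => z ^ p ^ b = 1) := by
      intro z hz
      simp only [Finset.mem_filter, Finset.mem_univ, true_and] at hz ⊢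
      obtain ⟨i, rfl⟩ := Subgroup.mem_zpowers_iff.1 hz
      rw [← zpow_natCast, ← zpow_mul, mul_comm, zpow_mul, zpow_natCast, ← hy, pow_orderOf_eq_one, one_zpow]
    have hc : (Finset.univ.filter fun z => z ∈ Subgroup.zpowers y).card = p ^ b := by
      rw [← hy, ← Nat.card_zpowers, Nat.card_eq_fintype_card, Fintype.card_subtype]
    have heq := Finset.eq_of_subset_of_card_le hsub (by rw [hc]; exact hle)
    have : x ∈ (Finset.univ.filter fun z : (ZMod (p ^ (b + 1)))ˣ => z ^ p ^ b = 1) := by simp [hx]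
    rw [← heq] at this
    simpa using this
  obtain ⟨j, hj⟩ := (mem_zpowers_iff_mem_range_orderOf.1 hmem |> Finset.mem_image.1)
  refine ⟨j, (ZMod.natCast_eq_natCast_iff _ _ _).1 ?_⟩
  have := congrArg (fun u : (ZMod (p ^ (b + 1)))ˣ => (u : ZMod (p ^ (b + 1)))) hj.2
  simp only [Units.val_pow_eq_pow_val] at this
  rw [ZMod.coe_unitOfCoprime, ZMod.coe_unitOfCoprime] at this
  push_cast
  exact this.symm

end Dat
end Acd

/-! ### Column orthogonality, Galois action and a parity argument -/

namespace Acd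
open Module

section
variable {G : Type} [Group G] [Fintype G] {χ ψ : G → ℂ}

instance irr_finite : Finite (Irr G) := by
  have hn : (Nat.card G : ℂ) ≠ 0 := by exact_mod_cast Nat.card_pos.ne'
  have hli : LinearIndependent ℂ (fun χ : Irr G => χ.1) := by
    rw [linearIndependent_iff']
    intro s c hc χ hχ
    have h1 : ∑ g, (∑ ψ ∈ s, c ψ • ψ.1) g * χ.1 g⁻¹ = 0 := by
      rw [hc]; simp
    have h2 : ∑ g, (∑ ψ ∈ s, c ψ • ψ.1) g * χ.1 g⁻¹ = ∑ ψ ∈ s, c ψ * ∑ g, ψ.1 g * χ.1 g⁻¹ := by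
      simp_rw [Finset.sum_apply, Finset.sum_mul, Finset.mul_sum]
      rw [Finset.sum_comm]
      refine Finset.sum_congr rfl fun ψ _ => Finset.sum_congr rfl fun g _ => ?_
      simp [mul_assoc]
    rw [h2, Finset.sum_eq_single_of_mem χ hχ, irr_norm χ.2] at h1
    · exact (mul_eq_zero.1 h1).resolve_right hn
    · intro ψ _ hne
      rw [irr_orth ψ.2 χ.2 (fun h => hne (Subtype.ext h)), mul_zero]
  exact hli.finite

noncomputable instance irr_fintype : Fintype (Irr G) := Fintype.ofFinite _

/-- The number of elements conjugating `x` to `y`. -/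
noncomputable def cnt (x y : G) : ℕ := Nat.card {h : G // h * x * h⁻¹ = y}

lemma cnt_conj (x y v w : G) : cnt (v * x * v⁻¹) (w * y * w⁻¹) = cnt x y := by
  refine Nat.card_congr ⟨fun h => ⟨w⁻¹ * h.1 * v, ?_⟩, fun h => ⟨w * h.1 * v⁻¹, ?_⟩, ?_, ?_⟩
  · obtain ⟨h, hh⟩ := h
    have : w⁻¹ * h * v * x * (w⁻¹ * h * v)⁻¹ = w⁻¹ * (h * (v * x * v⁻¹) * h⁻¹) * w := by group
    rw [this, hh]; group
  · obtain ⟨h, hh⟩ := h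
    have : w * h * v⁻¹ * (v * x * v⁻¹) * (w * h * v⁻¹)⁻¹ = w * (h * x * h⁻¹) * w⁻¹ := by group
    rw [this, hh]
  · rintro ⟨h, hh⟩; ext; simp [mul_assoc]
  · rintro ⟨h, hh⟩; ext; simp [mul_assoc]

lemma sum_cnt (x : G) (F : G → ℂ) : ∑ g, (cnt x g : ℂ) * F g = ∑ h, F (h * x * h⁻¹) := by
  classical
  rw [← Finset.sum_fiberwise (s := Finset.univ) (g := fun h : G => h * x * h⁻¹) (f := fun h => F (h * x * h⁻¹))]
  refine Finset.sum_congr rfl fun g _ => ?_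
  rw [Finset.sum_congr rfl (g := fun _ => F g) (fun h hh => by rw [(Finset.mem_filter.1 hh).2])]
  rw [Finset.sum_const, nsmul_eq_mul, cnt, Nat.card_eq_fintype_card, Fintype.card_subtype]

/-- Second orthogonality relation. -/
lemma col_orth (x g : G) : ∑ χ : Irr G, χ.1 x⁻¹ * χ.1 g = cnt x g := by
  have hn : (Nat.card G : ℂ) ≠ 0 := by exact_mod_cast Nat.card_pos.ne'
  have key := complete (f := fun g => ∑ χ : Irr G, χ.1 x⁻¹ * χ.1 g - cnt x g) ?_ ?_ g
  · exact sub_eq_zero.1 key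
  · intro g h
    have : cnt x (h * g * h⁻¹) = cnt x g := by
      have := cnt_conj x g 1 h
      simpa using this
    simp only [this]
    congr 1
    exact Finset.sum_congr rfl fun χ _ => by rw [irr_conj χ.2]
  · intro ψ hψ
    simp_rw [sub_mul]
    rw [Finset.sum_sub_distrib, sum_cnt x (fun g => ψ g⁻¹)]
    have h1 : ∑ g, (∑ χ : Irr G, χ.1 x⁻¹ * χ.1 g) * ψ g⁻¹ =
        ∑ χ : Irr G, χ.1 x⁻¹ * ∑ g, χ.1 g * ψ g⁻¹ := by
      simp_rw [Finset.sum_mul, Finset.mul_sum]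
      rw [Finset.sum_comm]
      simp [mul_assoc]
    rw [h1, Finset.sum_eq_single (⟨ψ, hψ⟩ : Irr G), irr_norm hψ]
    · have : ∀ h : G, ψ (h * x * h⁻¹)⁻¹ = ψ x⁻¹ := fun h => by
        rw [← irr_conj hψ x⁻¹ h]; congr 1; group
      simp only [this]; simp [mul_comm]
    · intro χ _ hne
      rw [irr_orth χ.2 hψ (fun h => hne (Subtype.ext h)), mul_zero]
    · simp

lemma irr_map (σ : ℂ ≃+* ℂ) (hχ : χ ∈ Irr G) : (fun g => σ (χ g)) ∈ Irr G := by
  obtain ⟨d, M, hM, h⟩ := mem_Irr_iff.1 hχ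
  refine mem_Irr_iff.2 ⟨d, (σ.toRingHom.mapMatrix : Matrix (Fin d) (Fin d) ℂ →+* _).toMonoidHom.comp M,
    fun g => ?_, ?_⟩
  · rw [hM]
    simp [Matrix.trace]
  · have := congrArg σ h
    rw [map_sum, map_natCast] at this
    rw [← this]
    simp

lemma irr_eig {N : ℕ} (hN : 0 < N) (hd : Nat.card G ∣ N) (hχ : χ ∈ Irr G) (g : G) : ∃ (d : ℕ) (e : Fin d → ℂ),
    (∀ i, e i ^ N = 1) ∧ ∀ k, χ (g ^ k) = ∑ i, e i ^ k := by
  obtain ⟨d, M, hM, h⟩ := mem_Irr_iff.1 hχ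
  obtain ⟨e, h1, h2, -⟩ := eig hN (M g) (by
    obtain ⟨c, rfl⟩ := hd
    rw [← map_pow, pow_mul, pow_card_eq_one', one_pow, map_one])
  exact ⟨d, e, h1, fun k => by rw [hM, map_pow, h2]⟩

lemma irr_gal {N : ℕ} (hN : 0 < N) (hd : Nat.card G ∣ N) (hχ : χ ∈ Irr G) {σ : ℂ ≃+* ℂ} {k : ℕ}
    (hσ : ∀ z : ℂ, z ^ N = 1 → σ z = z ^ k) (g : G) : σ (χ g) = χ (g ^ k) := by
  obtain ⟨d, e, h1, h2⟩ := irr_eig hN hd hχ g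
  have := h2 1
  simp only [pow_one] at this
  rw [this, map_sum, h2 k]
  exact Finset.sum_congr rfl fun i _ => hσ _ (h1 i)

lemma irr_int (hχ : χ ∈ Irr G) (g : G) : IsIntegral ℤ (χ g) := by
  obtain ⟨d, e, h1, h2⟩ := irr_eig (Nat.card_pos (α := G)) dvd_rfl hχ g
  have := h2 1
  simp only [pow_one] at this
  rw [this]
  refine IsIntegral.sum _ fun i _ => ?_
  refine ⟨Polynomial.X ^ Nat.card G - 1, ?_, ?_⟩
  · exact Polynomial.monic_X_pow_sub_C 1 Nat.card_pos.ne'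
  · have h3 := h1 i
    rw [Nat.card_eq_fintype_card] at h3
    simp [h3]

/-- A sum of algebraic integers invariant under an involution is congruent modulo `2` to the sum over
the fixed points. -/
lemma parity {α : Type*} [Fintype α] [DecidableEq α] (t : α → α) (ht : ∀ x, t (t x) = x) (F : α → ℂ)
    (hF : ∀ x, F (t x) = F x) (hi : ∀ x, IsIntegral ℤ (F x)) :
    ∃ w : ℂ, IsIntegral ℤ w ∧ ∑ x, F x = ∑ x with t x = x, F x + 2 * w := by
  have key : ∀ (n : ℕ) (s : Finset α), s.card = n → (∀ x ∈ s, t x ∈ s) → (∀ x ∈ s, t x ≠ x) →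
      ∃ w : ℂ, IsIntegral ℤ w ∧ ∑ x ∈ s, F x = 2 * w := by
    intro n
    induction n using Nat.strong_induction_on with
    | _ n ih =>
    intro s hn hs hne
    rcases s.eq_empty_or_nonempty with rfl | ⟨x, hx⟩
    · exact ⟨0, isIntegral_zero, by simp⟩
    · have hx2 : t x ∈ s.erase x := Finset.mem_erase.2 ⟨hne x hx, hs x hx⟩
      have hc1 := Finset.card_erase_of_mem hx
      have hpos := Finset.card_pos.2 ⟨x, hx⟩
      have hc := Finset.card_erase_of_mem hx2
      obtain ⟨w, hw, hw2⟩ := ih ((s.erase x).erase (t x)).card (by omega) _ rfl (by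
        intro y hy
        simp only [Finset.mem_erase] at hy ⊢
        refine ⟨fun h => hy.2.1 ?_, fun h => hy.1 ?_, hs y hy.2.2⟩
        · rw [← ht y, h, ht]
        · rw [← h, ht]) (fun y hy => hne y (Finset.mem_of_mem_erase (Finset.mem_of_mem_erase hy)))
      refine ⟨F x + w, (hi x).add hw, ?_⟩
      rw [← Finset.add_sum_erase _ _ hx, ← Finset.add_sum_erase _ _ hx2, hw2, hF]
      ring
  obtain ⟨w, hw, hw2⟩ := key _ (Finset.univ.filter fun x => ¬ t x = x) rfl (by
    intro x hx; simp only [Finset.mem_filter, Finset.mem_univ, true_and] at hx ⊢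
    rw [ht]; exact fun h => hx h.symm) (by simp)
  exact ⟨w, hw, by rw [← Finset.sum_filter_add_sum_filter_not _ (fun x => t x = x), hw2]⟩

lemma not_two_int {n : ℕ} (hn : Odd n) {w : ℂ} (hw : IsIntegral ℤ w) : (n : ℂ) ≠ 2 * w := by
  intro h
  have hq : w = algebraMap ℚ ℂ (n / 2 : ℚ) := by
    push_cast; rw [h]; simp
  rw [hq, isIntegral_algebraMap_iff (algebraMap ℚ ℂ).injective] at hw
  obtain ⟨z, hz⟩ := IsIntegrallyClosed.isIntegral_iff.1 hw
  have : (n : ℚ) = 2 * z := by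
    have hz' : (z : ℚ) = n / 2 := by simpa using hz
    rw [hz']; ring
  have h3 : (n : ℤ) = 2 * z := by exact_mod_cast this
  obtain ⟨k, rfl⟩ := hn
  omega

end
end Acd

/-! ### Characterization of the `ℚ(ζ_p)`-valued characters by the power map `g ↦ g ^ m` -/

namespace Acd
open Module

section
variable {G : Type} [Group G] [Fintype G] {χ ψ : G → ℂ} {p a n' m : ℕ}

/-- A Galois twist `χ(g^k)` of an irreducible character is irreducible. -/
lemma irr_twist {N : ℕ} (hN : 0 < N) (hd : Nat.card G ∣ N) (hχ : χ ∈ Irr G) {k : ℕ} (hk : k.Coprime N) :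
    (fun g => χ (g ^ k)) ∈ Irr G := by
  obtain ⟨σ, hσ⟩ := gal_aut hN hk
  have := irr_map σ hχ
  simpa only [irr_gal hN hd hχ hσ] using this

lemma pow_mod {N : ℕ} (hd : Nat.card G ∣ N) {j k : ℕ} (h : j ≡ k [MOD N]) (g : G) : g ^ j = g ^ k := by
  rw [pow_eq_pow_iff_modEq]
  exact h.of_dvd ((orderOf_dvd_natCard g).trans hd)

lemma fix_iter (h : ∀ g, χ (g ^ m) = χ g) (j : ℕ) (g : G) : χ (g ^ m ^ j) = χ g := by
  induction j with
  | zero => simp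
  | succ j ih => rw [pow_succ, pow_mul, h, ih]

/-- The values in `ℚ(ζ_p)` are fixed by `z ↦ z ^ m` since `m ≡ 1` modulo `p`. -/
lemma irrK_fix (D : Dat p (Nat.card G) a n' m) (hχ : χ ∈ IrrK G (Qzeta p)) (g : G) : χ (g ^ m) = χ g := by
  obtain ⟨σ, hσ⟩ := gal_aut D.N_pos D.m_cop
  rw [← irr_gal D.N_pos (dvd_mul_left _ _) hχ.1 hσ]
  have hle : Qzeta p ≤ RingHom.eqLocusField σ.toRingHom (RingHom.id ℂ) := by
    refine Subfield.closure_le.2 fun z hz => ?_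
    change σ z = z
    have hz' : z ^ p = 1 := hz
    rw [hσ z (by rw [pow_mul, hz', one_pow])]
    have := D.m_modp
    rw [pow_eq_pow_mod m hz', this, ← pow_eq_pow_mod 1 hz', pow_one]
  exact hle (hχ.2 g)

/-- An irreducible character invariant under the power map `m` is `ℚ(ζ_p)`-valued. Otherwise
`ψ(g) = χ(g ^ k)` is a different irreducible character for some `k ≡ 1` modulo `p`, and
`|G| = ∑ (χ(g) - ψ(g)) χ(g⁻¹)`. The summand is invariant under the involution `g ↦ g ^ s`, whose
fixed points are the `p`-elements, where `χ` and `ψ` agree; so `|G|` would be even. -/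
lemma irrK_of_fix (D : Dat p (Nat.card G) a n' m) (hχ : χ ∈ Irr G) (h : ∀ g, χ (g ^ m) = χ g) :
    χ ∈ IrrK G (Qzeta p) := by
  classical
  have hd : Nat.card G ∣ p * Nat.card G := dvd_mul_left _ _
  have hk : ∀ k, k ≡ 1 [MOD p] → k.Coprime (p * Nat.card G) → ∀ g, χ (g ^ k) = χ g := by
    intro k hk hkc
    by_contra hcon
    set s := m ^ p ^ (a - 1) with hs
    have hss : ∀ g : G, (g ^ s) ^ s = g := fun g => by
      rw [← pow_mul, pow_mod hd D.s_sq, pow_one]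
    have hχs : ∀ g, χ (g ^ s) = χ g := fun g => fix_iter h _ g
    obtain ⟨w, hw, hw2⟩ := parity (fun g : G => g ^ s) hss (fun g => (χ g - χ (g ^ k)) * χ g⁻¹)
      (fun g => by
        change (χ (g ^ s) - χ ((g ^ s) ^ k)) * χ (g ^ s)⁻¹ = _
        rw [hχs, ← pow_mul, mul_comm s k, pow_mul, hχs, ← inv_pow, hχs])
      (fun g => ((irr_int hχ _).sub (irr_int hχ _)).mul (irr_int hχ _))
    have hfix : ∑ g with g ^ s = g, (χ g - χ (g ^ k)) * χ g⁻¹ = 0 := by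
      refine Finset.sum_eq_zero fun g hg => ?_
      have hg' : g ^ s = g := (Finset.mem_filter.1 hg).2
      have hmod : s ≡ 1 [MOD orderOf g] := by
        rw [← pow_eq_pow_iff_modEq, pow_one]; exact hg'
      have hc : (orderOf g).Coprime n' := by
        rw [Nat.coprime_iff_gcd_eq_one]
        set q := (orderOf g).gcd n'
        have h1 : s + 1 ≡ 1 + 1 [MOD q] := (hmod.of_dvd (Nat.gcd_dvd_left _ _)).add_right 1
        have h2 : s + 1 ≡ 0 [MOD q] := D.s_props.2.of_dvd (Nat.gcd_dvd_right _ _)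
        have h3 : q ∣ 2 := (Nat.modEq_zero_iff_dvd).1 (h1.symm.trans h2)
        have h4 : Odd q := Odd.of_dvd_nat D.odd_n' (Nat.gcd_dvd_right _ _)
        rcases (Nat.dvd_prime Nat.prime_two).1 h3 with h | h
        · exact h
        · rw [h] at h4; exact absurd h4 (by decide)
      have hdv : orderOf g ∣ p ^ a := by
        have : orderOf g ∣ p ^ a * n' := D.hN ▸ (orderOf_dvd_natCard g).trans hd
        exact hc.dvd_of_dvd_mul_right this
      obtain ⟨j, hj⟩ := D.pow_j hk
      have : g ^ k = g ^ m ^ j := by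
        rw [pow_eq_pow_iff_modEq]; exact hj.of_dvd hdv
      rw [this, fix_iter h, sub_self, zero_mul]
    rw [hfix, zero_add] at hw2
    simp_rw [sub_mul] at hw2
    rw [Finset.sum_sub_distrib, irr_norm hχ, irr_orth (irr_twist D.N_pos hd hχ hkc) hχ, sub_zero] at hw2
    · exact not_two_int D.hn hw hw2
    · intro h'
      exact hcon fun g => congrFun h' g
  refine ⟨hχ, fun g => ?_⟩
  obtain ⟨d, e, h1, h2⟩ := irr_eig D.N_pos hd hχ g
  have h3 := h2 1
  simp only [pow_one] at h3
  rw [h3]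
  refine fixed_mem D.hp D.N_pos (dvd_mul_right _ _) e h1 fun σ k hk1 hk2 hσ => ?_
  rw [← h3, irr_gal D.N_pos hd hχ hσ, hk k hk1 hk2]

/-- The rational `p`-elements are exactly the elements conjugate to their `m`-th power: if `g` is
conjugate to `g ^ m`, then the `p'`-element `g ^ p ^ a` is conjugate to its inverse, hence trivial in
a group of odd order. -/
lemma RP_iff (D : Dat p (Nat.card G) a n' m) (g : G) : RP p g ↔ ∃ h, h * g * h⁻¹ = g ^ m := by
  have hd : Nat.card G ∣ p * Nat.card G := dvd_mul_left _ _
  have hdv : ∀ k, g ^ p ^ k = 1 → g ^ m = g ^ (1 + p) := by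
    intro k hk
    rw [pow_eq_pow_iff_modEq]
    refine D.h1.of_dvd ?_
    have h1 : orderOf g ∣ p ^ a * n' := D.hN ▸ (orderOf_dvd_natCard g).trans hd
    have h2 : orderOf g ∣ p ^ k := orderOf_dvd_of_pow_eq_one hk
    exact (Nat.Coprime.coprime_dvd_left h2 (D.hco.symm.pow_left k)).dvd_of_dvd_mul_right h1
  constructor
  · rintro ⟨⟨k, hk⟩, t, ht⟩
    exact ⟨t, by rw [ht, hdv k hk]⟩
  · rintro ⟨h, hh⟩
    have hone : g ^ p ^ a = 1 := by
      set y := g ^ p ^ a with hy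
      have hyn : y ^ n' = 1 := by
        rw [hy, ← pow_mul, ← D.hN, pow_mul', pow_card_eq_one', one_pow]
      have hym : y ^ m = y⁻¹ := by
        rw [eq_inv_iff_mul_eq_one, ← pow_succ]
        obtain ⟨c, hc⟩ := (Nat.modEq_zero_iff_dvd).1 D.h2
        rw [hc, pow_mul, hyn, one_pow]
      have h1 : h * y * h⁻¹ = y⁻¹ := by
        rw [← hym, hy, ← conj_pow, hh, ← pow_mul, ← pow_mul, mul_comm]
      have h2 : ∀ k, h ^ (2 * k) * y * (h ^ (2 * k))⁻¹ = y := by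
        intro k
        induction k with
        | zero => simp
        | succ k ih =>
          have : h ^ (2 * (k + 1)) * y * (h ^ (2 * (k + 1)))⁻¹ =
              h ^ (2 * k) * (h * (h * y * h⁻¹) * h⁻¹) * (h ^ (2 * k))⁻¹ := by
            rw [mul_add, pow_add]; group
          rw [this, h1]
          have : h * y⁻¹ * h⁻¹ = (h * y * h⁻¹)⁻¹ := by group
          rw [this, h1, inv_inv, ih]
      have hsq : ∀ z : G, z * z = 1 → z = 1 := by
        intro z hz
        have h3 : orderOf z ∣ 2 := orderOf_dvd_of_pow_eq_one (by rw [pow_two, hz])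
        have h4 : Odd (orderOf z) := Odd.of_dvd_nat D.hn (orderOf_dvd_natCard z)
        rcases (Nat.dvd_prime Nat.prime_two).1 h3 with h | h
        · exact orderOf_eq_one_iff.1 h
        · rw [h] at h4; exact absurd h4 (by decide)
      obtain ⟨k, hk⟩ := D.hn
      have h3 := h2 (k + 1)
      have h4 : h ^ (2 * (k + 1)) = h := by
        have : 2 * (k + 1) = Nat.card G + 1 := by omega
        rw [this, pow_succ, pow_card_eq_one', one_mul]
      rw [h4, h1] at h3
      apply hsq
      nth_rw 1 [← h3]; simp
    refine ⟨⟨a, hone⟩, h, by rw [hh, hdv a hone]⟩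

end
end Acd

/-! ### Counting the `ℚ(ζ_p)`-valued characters and the linear ones among them -/

namespace Acd
open Module

lemma Dat.dvd_pa {p n a n' m r : ℕ} (D : Dat p n a n' m) (hr : r ∣ p * n) (h : m ≡ 1 [MOD r]) :
    r ∣ p := by
  have hc : r.Coprime n' := by
    rw [Nat.coprime_iff_gcd_eq_one]
    set q := r.gcd n'
    have h1 : m + 1 ≡ 1 + 1 [MOD q] := (h.of_dvd (Nat.gcd_dvd_left _ _)).add_right 1
    have h2 : m + 1 ≡ 0 [MOD q] := D.h2.of_dvd (Nat.gcd_dvd_right _ _)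
    have h3 : q ∣ 2 := (Nat.modEq_zero_iff_dvd).1 (h1.symm.trans h2)
    have h4 : Odd q := Odd.of_dvd_nat D.odd_n' (Nat.gcd_dvd_right _ _)
    rcases (Nat.dvd_prime Nat.prime_two).1 h3 with h | h
    · exact h
    · rw [h] at h4; exact absurd h4 (by decide)
  have h5 : r ∣ p ^ a := by
    rw [D.hN] at hr
    exact hc.dvd_of_dvd_mul_right hr
  have h6 := (D.h1.of_dvd h5).symm.trans h
  have h7 : 1 + p ≡ 1 + 0 [MOD r] := by simpa using h6
  exact (Nat.modEq_zero_iff_dvd).1 (Nat.ModEq.add_left_cancel' 1 h7)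

section
variable {G : Type} [Group G] [Fintype G] {χ ψ : G → ℂ} {p a n' m : ℕ}

/-- Each rational class contributes `|G|` to the count of pairs `(g, h)` with `h g h⁻¹ = g ^ m`. -/
lemma sum_cnt_pow (D : Dat p (Nat.card G) a n' m) : ∑ g : G, (cnt g (g ^ m) : ℂ) = Nat.card G * rcl p G := by
  classical
  haveI := Fact.mk D.hp
  rw [← Finset.sum_fiberwise (s := Finset.univ) (g := fun g : G => ConjClasses.mk g)]
  have h1 : ∀ c : ConjClasses G, ∑ g with ConjClasses.mk g = c, (cnt g (g ^ m) : ℂ) =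
      if c ∈ RCl p G then (Nat.card G : ℂ) else 0 := by
    intro c
    split_ifs with hc
    · obtain ⟨x, hx, rfl⟩ := hc
      have h2 := sum_cnt x (fun g => if ConjClasses.mk g = ConjClasses.mk x then (1 : ℂ) else 0)
      simp only [mul_ite, mul_one, mul_zero] at h2
      rw [← Finset.sum_filter] at h2
      have h3 : ∀ h : G, (if ConjClasses.mk (h * x * h⁻¹) = ConjClasses.mk x then (1 : ℂ) else 0) = 1 :=
        fun h => if_pos (mk_eq_iff.2 ⟨h, rfl⟩).symm
      simp only [h3] at h2
      rw [Finset.sum_const, Finset.card_univ, nsmul_one, ← Nat.card_eq_fintype_card] at h2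
      rw [← h2]
      refine Finset.sum_congr rfl fun g hg => ?_
      obtain ⟨v, rfl⟩ := mk_eq_iff.1 (Finset.mem_filter.1 hg).2.symm
      obtain ⟨h, hh⟩ := (RP_iff D _).1 (RP.conj hx v)
      rw [← hh]
      have := cnt_conj x (v * x * v⁻¹) v h
      rw [this]
    · refine Finset.sum_eq_zero fun g hg => ?_
      rw [Nat.cast_eq_zero, cnt, Nat.card_eq_zero]
      left
      refine ⟨fun h => hc ⟨g, (RP_iff D g).2 ⟨h.1, h.2⟩, (Finset.mem_filter.1 hg).2⟩⟩
  rw [Finset.sum_congr rfl fun c _ => h1 c, ← Finset.sum_filter, Finset.sum_const, nsmul_eq_mul, mul_comm]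
  have : rcl p G = (Finset.univ.filter fun c => c ∈ RCl p G).card := by
    rw [rcl, Nat.card_eq_fintype_card, Fintype.card_subtype]
  rw [this]

/-- Both sides are computed from `∑ χ(g ^ m) χ(g⁻¹)` over `χ` and `g`: summing over `g` first counts
the characters fixed by the power map `m`, summing over `χ` first counts the rational classes. -/
lemma card_irrK_dat (D : Dat p (Nat.card G) a n' m) : Nat.card (IrrK G (Qzeta p)) = rcl p G := by
  classical
  have hn : (Nat.card G : ℂ) ≠ 0 := by exact_mod_cast Nat.card_pos.ne'
  have h1 : ∑ χ : Irr G, ∑ g, χ.1 (g ^ m) * χ.1 g⁻¹ = Nat.card G * rcl p G := by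
    rw [Finset.sum_comm, ← sum_cnt_pow D]
    refine Finset.sum_congr rfl fun g _ => ?_
    rw [← col_orth]
    exact Finset.sum_congr rfl fun χ _ => mul_comm _ _
  have h2 : ∀ χ : Irr G, ∑ g, χ.1 (g ^ m) * χ.1 g⁻¹ =
      if χ.1 ∈ IrrK G (Qzeta p) then (Nat.card G : ℂ) else 0 := by
    intro χ
    split_ifs with h
    · simp_rw [irrK_fix D h]
      exact irr_norm χ.2
    · refine irr_orth (irr_twist D.N_pos (dvd_mul_left _ _) χ.2 D.m_cop) χ.2 fun h' => h ?_
      exact irrK_of_fix D χ.2 fun g => congrFun h' g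
  rw [Finset.sum_congr rfl fun c _ => h2 c, ← Finset.sum_filter, Finset.sum_const, nsmul_eq_mul, mul_comm] at h1
  have h3 := mul_left_cancel₀ hn h1
  have h4 : Nat.card (IrrK G (Qzeta p)) = (Finset.univ.filter fun χ : Irr G => χ.1 ∈ IrrK G (Qzeta p)).card := by
    rw [← Fintype.card_subtype, ← Nat.card_eq_fintype_card]
    exact Nat.card_congr ⟨fun χ => ⟨⟨χ.1, χ.2.1⟩, χ.2⟩, fun χ => ⟨χ.1.1, χ.2⟩, fun _ => rfl, fun _ => rfl⟩
  rw [h4]; exact_mod_cast h3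

/-- For odd `|G|` there are as many `ℚ(ζ_p)`-valued irreducible characters as classes of rational
`p`-elements. -/
lemma card_irrK (hp : p.Prime) (hp2 : p ≠ 2) (hodd : Odd (Nat.card G)) :
    Nat.card (IrrK G (Qzeta p)) = rcl p G := by
  obtain ⟨a, n', m, D⟩ := exists_dat hp hp2 hodd
  exact card_irrK_dat D

/-- Irreducible degrees are odd: by the parity argument for `g ↦ g⁻¹`, `χ(1)² ≡ |G|` modulo `2`. -/
lemma irr_deg (hodd : Odd (Nat.card G)) (hχ : χ ∈ Irr G) : ∃ d : ℕ, Odd d ∧ χ 1 = d := by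
  classical
  obtain ⟨d, M, hM, h⟩ := mem_Irr_iff.1 hχ
  have h1 : χ 1 = d := by rw [hM, map_one, Matrix.trace_one, Fintype.card_fin]
  refine ⟨d, ?_, h1⟩
  by_contra hd
  obtain ⟨c, hc⟩ := Nat.not_odd_iff_even.1 hd
  obtain ⟨w, hw, hw2⟩ := parity (fun g : G => g⁻¹) inv_inv (fun g => χ g * χ g⁻¹)
    (fun g => by simp [mul_comm]) (fun g => (irr_int hχ _).mul (irr_int hχ _))
  have hf : (Finset.univ.filter fun g : G => g⁻¹ = g) = {1} := by
    ext z
    simp only [Finset.mem_filter, Finset.mem_univ, true_and, Finset.mem_singleton]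
    constructor
    · intro hz
      have h3 : orderOf z ∣ 2 := orderOf_dvd_of_pow_eq_one (by rw [pow_two]; nth_rw 1 [← hz]; simp)
      have h4 : Odd (orderOf z) := Odd.of_dvd_nat hodd (orderOf_dvd_natCard z)
      rcases (Nat.dvd_prime Nat.prime_two).1 h3 with h | h
      · exact orderOf_eq_one_iff.1 h
      · rw [h] at h4; exact absurd h4 (by decide)
    · rintro rfl; simp
  rw [hf, Finset.sum_singleton, h, inv_one, h1, hc] at hw2
  refine not_two_int hodd (w := c * (c + c) + w) ?_ (by rw [hw2]; push_cast; ring)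
  have hci : IsIntegral ℤ (c : ℂ) := isIntegral_algebraMap (x := (c : ℤ))
  exact (hci.mul (hci.add hci)).add hw

lemma one_irr : (fun _ => 1) ∈ Irr G :=
  mem_Irr_iff.2 ⟨1, 1, fun g => by simp, by simp⟩

lemma twist_mem {Q : Type} [Group Q] [Fintype Q] (f : G →* Q) (hf : Function.Surjective f)
    (l : G →* rootsOfUnity p ℂ) {χ : Q → ℂ} (hχ : χ ∈ IrrK Q (Qzeta p)) :
    (fun g => ((l g : ℂˣ) : ℂ) * χ (f g)) ∈ IrrK G (Qzeta p) := by
  classical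
  obtain ⟨d, M, hM, h⟩ := mem_Irr_iff.1 hχ.1
  refine ⟨mem_Irr_iff.2 ⟨d, ⟨⟨fun g => ((l g : ℂˣ) : ℂ) • M (f g), by simp⟩, fun x y => ?_⟩, fun g => ?_, ?_⟩, fun g => ?_⟩
  · simp only [map_mul, Subgroup.coe_mul, Units.val_mul]
    rw [smul_mul_smul_comm]
  · change _ = Matrix.trace (((l g : ℂˣ) : ℂ) • M (f g))
    rw [Matrix.trace_smul, hM]; rfl
  · have e1 : ∀ g : G, ((l g : ℂˣ) : ℂ) * χ (f g) * (((l g⁻¹ : ℂˣ) : ℂ) * χ (f g⁻¹)) = χ (f g) * χ (f g)⁻¹ := by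
      intro g
      rw [map_inv, map_inv]
      have : ((l g : ℂˣ) : ℂ) * (((l g)⁻¹ : rootsOfUnity p ℂ) : ℂˣ) = 1 := by simp
      linear_combination χ (f g) * χ (f g)⁻¹ * this
    rw [Finset.sum_congr rfl fun g _ => e1 g]
    rw [← Finset.sum_fiberwise (s := Finset.univ) (g := fun g : G => f g)]
    have e2 : ∀ q : Q, ∑ g with f g = q, χ (f g) * χ (f g)⁻¹ = Nat.card f.ker * (χ q * χ q⁻¹) := by
      intro q
      rw [Finset.sum_congr rfl (g := fun _ => χ q * χ q⁻¹) (fun g hg => by rw [(Finset.mem_filter.1 hg).2])]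
      rw [Finset.sum_const, nsmul_eq_mul]
      congr 2
      obtain ⟨x, rfl⟩ := hf q
      rw [← Fintype.card_subtype, ← Nat.card_eq_fintype_card]
      refine Nat.card_congr ⟨fun g => ⟨x⁻¹ * g.1, ?_⟩, fun g => ⟨x * g.1, ?_⟩, fun g => by simp, fun g => by simp⟩
      · rw [MonoidHom.mem_ker, map_mul, g.2]; simp
      · rw [map_mul, (MonoidHom.mem_ker).1 g.2, mul_one]
    rw [Finset.sum_congr rfl fun q _ => e2 q, ← Finset.mul_sum, h]
    have := Subgroup.card_mul_index f.ker
    rw [Subgroup.index_ker, MonoidHom.range_eq_top.2 hf, Subgroup.card_top] at this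
    rw [← this]; push_cast; ring
  · refine mul_mem (Subfield.subset_closure ?_) (hχ.2 _)
    have := (mem_rootsOfUnity p _).1 (l g).2
    change ((l g : ℂˣ) : ℂ) ^ p = 1
    rw [← Units.val_pow_eq_pow_val, this]; rfl

lemma lin_mem (l : G →* rootsOfUnity p ℂ) : (fun g => ((l g : ℂˣ) : ℂ)) ∈ IrrK G (Qzeta p) := by
  have := twist_mem (MonoidHom.id G) Function.surjective_id l (χ := fun _ => 1) ⟨one_irr, fun _ => one_mem _⟩
  simpa using this

/-- A `ℚ(ζ_p)`-valued linear character has values in `μ_p`, as its values are fixed by `z ↦ z ^ m`. -/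
lemma exists_lin (hp : p.Prime) (hp2 : p ≠ 2) (hodd : Odd (Nat.card G)) (hχ : χ ∈ IrrK G (Qzeta p))
    (h1 : χ 1 = 1) : ∃ l : G →* rootsOfUnity p ℂ, χ = fun g => ((l g : ℂˣ) : ℂ) := by
  obtain ⟨a, n', m, D⟩ := exists_dat hp hp2 hodd
  obtain ⟨d, M, hM, -⟩ := mem_Irr_iff.1 hχ.1
  have hd : d = 1 := by
    rw [hM, map_one, Matrix.trace_one, Fintype.card_fin] at h1
    exact_mod_cast h1
  subst hd
  have hmul : ∀ x y, χ (x * y) = χ x * χ y := by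
    intro x y
    rw [hM, hM, hM, map_mul]; simp [Matrix.trace, Matrix.mul_apply]
  let F : G →* ℂ := ⟨⟨χ, h1⟩, hmul⟩
  have hp1 : ∀ g, χ g ^ p = 1 := by
    intro g
    have e1 : (F.toHomUnits g) ^ p = 1 := by
      rw [← orderOf_dvd_iff_pow_eq_one]
      refine D.dvd_pa ?_ ?_
      · exact ((orderOf_map_dvd F.toHomUnits g).trans (orderOf_dvd_natCard g)).trans (dvd_mul_left _ _)
      · rw [← pow_eq_pow_iff_modEq, pow_one, ← map_pow]
        ext
        exact irrK_fix D hχ g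
    have := congrArg Units.val e1
    simpa [F] using this
  refine ⟨F.toHomUnits.codRestrict _ fun g => ?_, ?_⟩
  · rw [mem_rootsOfUnity]
    ext
    simpa [F] using hp1 g
  · rfl

lemma card_lin (hp : p.Prime) (hp2 : p ≠ 2) (hodd : Odd (Nat.card G)) :
    Nat.card {χ : IrrK G (Qzeta p) // χ.1 1 = 1} = lin p G := by
  refine (Nat.card_congr (Equiv.ofBijective (fun l : G →* rootsOfUnity p ℂ =>
    (⟨⟨fun g => ((l g : ℂˣ) : ℂ), lin_mem l⟩, by simp⟩ : {χ : IrrK G (Qzeta p) // χ.1 1 = 1})) ⟨?_, ?_⟩)).symm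
  · intro l l' h
    have h' : (fun g => ((l g : ℂˣ) : ℂ)) = fun g => ((l' g : ℂˣ) : ℂ) :=
      congrArg (fun x : {χ : IrrK G (Qzeta p) // χ.1 1 = 1} => x.1.1) h
    ext g
    exact congrFun h' g
  · rintro ⟨⟨χ, hχ⟩, h1⟩
    obtain ⟨l, hl⟩ := exists_lin hp hp2 hodd hχ h1
    exact ⟨l, by simp [hl]⟩

/-- The ratio `rcl / lin` does not increase under quotients: twisting the inflations of the
`ℚ(ζ_p)`-valued characters of `Q` by the linear ones of `G` gives a map to the
`ℚ(ζ_p)`-valued characters of `G` with fibres of size at most `lin p Q`. -/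
lemma ratio (hp : p.Prime) (hp2 : p ≠ 2) (Q : Type) [Group Q] [Fintype Q] (f : G →* Q)
    (hf : Function.Surjective f) (hodd : Odd (Nat.card G)) :
    lin p G * rcl p Q ≤ rcl p G * lin p Q := by
  classical
  haveI := Fact.mk hp
  have hQ : Odd (Nat.card Q) := Odd.of_dvd_nat hodd (Subgroup.card_dvd_of_surjective f hf)
  rw [← card_irrK hp hp2 hodd, ← card_irrK hp hp2 hQ, lin, ← Nat.card_prod]
  haveI : Finite (IrrK G (Qzeta p)) := Finite.Set.subset (Irr G) (fun _ h => h.1)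
  haveI : Finite (IrrK Q (Qzeta p)) := Finite.Set.subset (Irr Q) (fun _ h => h.1)
  haveI := Fintype.ofFinite (IrrK G (Qzeta p))
  haveI := Fintype.ofFinite (IrrK Q (Qzeta p))
  haveI := Fintype.ofFinite (G →* rootsOfUnity p ℂ)
  haveI := Fintype.ofFinite (Q →* rootsOfUnity p ℂ)
  let Φ : (G →* rootsOfUnity p ℂ) × IrrK Q (Qzeta p) → IrrK G (Qzeta p) := fun a =>
    ⟨fun g => ((a.1 g : ℂˣ) : ℂ) * a.2.1 (f g), twist_mem f hf a.1 a.2.2⟩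
  have hΦ : ∀ a b, Φ a = Φ b → ∀ g, ((a.1 g : ℂˣ) : ℂ) * a.2.1 (f g) = ((b.1 g : ℂˣ) : ℂ) * b.2.1 (f g) :=
    fun a b h g => congrFun (congrArg Subtype.val h) g
  have hinj : ∀ a b, Φ a = Φ b → a.1 = b.1 → a = b := by
    rintro ⟨l, χ, hχ⟩ ⟨l', χ', hχ'⟩ h h1
    have h2 := hΦ _ _ h
    simp only at h1 h2
    subst h1
    have : χ = χ' := by
      funext q
      obtain ⟨g, rfl⟩ := hf q
      exact mul_left_cancel₀ (Units.ne_zero _) (h2 g)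
    subst this; rfl
  have hnu : ∀ a b, Φ a = Φ b → ∃ v : Q →* rootsOfUnity p ℂ, a.1 = b.1 * v.comp f := by
    intro a b h
    have h2 := hΦ _ _ h
    have h10 : a.2.1 1 = b.2.1 1 := by simpa using h2 1
    obtain ⟨d, hd, hd1⟩ := irr_deg hQ b.2.2.1
    have hker : f.ker ≤ (b.1⁻¹ * a.1).ker := by
      intro k hk
      have h3 := h2 k
      rw [(MonoidHom.mem_ker).1 hk, h10, hd1] at h3
      have h4 := mul_right_cancel₀ (by exact_mod_cast hd.pos.ne') h3
      have h5 : a.1 k = b.1 k := by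
        ext; exact h4
      rw [MonoidHom.mem_ker, MonoidHom.mul_apply, MonoidHom.inv_apply, h5]; simp
    let v := f.liftOfSurjective hf ⟨b.1⁻¹ * a.1, hker⟩
    refine ⟨v, ?_⟩
    have hv : v.comp f = b.1⁻¹ * a.1 := MonoidHom.liftOfRightInverse_comp f _ _ ⟨b.1⁻¹ * a.1, hker⟩
    rw [hv, mul_inv_cancel_left]
  have key := Finset.card_le_mul_card_image_of_maps_to (s := Finset.univ) (t := Finset.univ)
    (f := Φ) (fun _ _ => Finset.mem_univ _) (lin p Q) (fun b _ => ?_)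
  · rw [Finset.card_univ, Finset.card_univ, ← Nat.card_eq_fintype_card, ← Nat.card_eq_fintype_card,
      mul_comm (lin p Q)] at key
    exact key
  · rcases (Finset.univ.filter fun a => Φ a = b).eq_empty_or_nonempty with h | ⟨a0, ha0⟩
    · rw [h]; simp
    · have hb := (Finset.mem_filter.1 ha0).2
      have hex : ∀ a : {a // Φ a = b}, ∃ v : Q →* rootsOfUnity p ℂ, a.1.1 = a0.1 * v.comp f :=
        fun a => hnu _ _ (a.2.trans hb.symm)
      choose v hv using hex
      rw [← Fintype.card_subtype, lin, Nat.card_eq_fintype_card]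
      refine Fintype.card_le_of_injective v fun a a' h => ?_
      refine Subtype.ext (hinj _ _ (a.2.trans a'.2.symm) ?_)
      rw [hv, hv, h]

end
end Acd

/-! ### Matrices of size three and of `p`-power order -/

namespace Acd
open Module

lemma geom_root {q : ℕ} {z : ℂ} (hz : z ^ q = 1) (h1 : z ≠ 1) : ∑ j ∈ Finset.range q, z ^ j = 0 := by
  have := geom_sum_mul z q
  rw [hz, sub_self] at this
  exact (mul_eq_zero.1 this).resolve_right (sub_ne_zero.2 h1)

/-- Families of roots of unity with equal power sums have the same values. -/
lemma detect {q d : ℕ} (hq : 0 < q) (e f : Fin d → ℂ) (he : ∀ i, e i ^ q = 1) (hf : ∀ i, f i ^ q = 1)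
    (h : ∀ j, ∑ i, e i ^ j = ∑ i, f i ^ j) (l : Fin d) : ∃ i, e i = f l := by
  classical
  by_contra hcon
  push Not at hcon
  have hl : f l ≠ 0 := fun h0 => by
    have := hf l; rw [h0, zero_pow hq.ne'] at this; exact zero_ne_one this
  have hsw : ∀ u : Fin d → ℂ, ∑ j ∈ Finset.range q, (∑ i, u i ^ j) * (f l)⁻¹ ^ j =
      ∑ i, ∑ j ∈ Finset.range q, (u i * (f l)⁻¹) ^ j := by
    intro u
    simp_rw [Finset.sum_mul, ← mul_pow]
    rw [Finset.sum_comm]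
  have hroot : ∀ u : ℂ, u ^ q = 1 → (u * (f l)⁻¹) ^ q = 1 := fun u hu => by
    rw [mul_pow, hu, inv_pow, hf l]; simp
  have h1 : ∑ i, ∑ j ∈ Finset.range q, (e i * (f l)⁻¹) ^ j = 0 := by
    refine Finset.sum_eq_zero fun i _ => geom_root (hroot _ (he i)) fun h' => hcon i ?_
    exact (mul_inv_eq_one₀ hl).1 h'
  have h2 : ∀ i, ∑ j ∈ Finset.range q, (f i * (f l)⁻¹) ^ j = if f i = f l then (q : ℂ) else 0 := by
    intro i
    split_ifs with hi
    · rw [hi, mul_inv_cancel₀ hl]; simp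
    · exact geom_root (hroot _ (hf i)) fun h' => hi ((mul_inv_eq_one₀ hl).1 h')
  rw [← hsw, Finset.sum_congr rfl (fun j _ => by rw [h j]), hsw, Finset.sum_congr rfl (fun i _ => h2 i),
    ← Finset.sum_filter, Finset.sum_const, nsmul_eq_mul, mul_eq_zero] at h1
  rcases h1 with h1 | h1
  · have : (Finset.univ.filter fun i => f i = f l).card = 0 := by exact_mod_cast h1
    rw [Finset.card_eq_zero] at this
    exact Finset.notMem_empty l (this ▸ Finset.mem_filter.2 ⟨Finset.mem_univ _, rfl⟩)
  · exact hq.ne' (by exact_mod_cast h1)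

/-- A `3 × 3` matrix of `p`-power order whose eigenvalues are permuted by `z ↦ z ^ (1 + p)` has order
dividing `p`: each eigenvalue has an orbit of size at most `3 < p`, whereas the orbit of a root of
unity of order `p ^ k` has size divisible by `p` for `k ≥ 2`. -/
lemma exp_p {p k : ℕ} (hp : p.Prime) (hp5 : 5 ≤ p) (A : Matrix (Fin 3) (Fin 3) ℂ) (hA : A ^ p ^ k = 1)
    (htr : ∀ j, (A ^ j).trace = ((A ^ (1 + p)) ^ j).trace) : A ^ p = 1 := by
  classical
  have hq : 0 < p ^ k := pow_pos hp.pos _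
  obtain ⟨e, h1, h2, h3⟩ := eig hq A hA
  have hcl : ∀ l, ∃ i, e i = e l ^ (1 + p) := by
    refine detect hq e (fun i => e i ^ (1 + p)) h1 (fun i => by
      rw [← pow_mul, mul_comm, pow_mul, h1, one_pow]) fun j => ?_
    rw [← h2, htr, ← pow_mul, h2]
    simp_rw [pow_mul]
  have hep : ∀ i, e i ^ p = 1 := by
    intro i
    have hit : ∀ j : ℕ, ∃ l, e l = e i ^ (1 + p) ^ j := by
      intro j
      induction j with
      | zero => exact ⟨i, by simp⟩
      | succ j ih =>
        obtain ⟨l, hl⟩ := ih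
        obtain ⟨l', hl'⟩ := hcl l
        exact ⟨l', by rw [hl', hl, pow_succ (1 + p) j, pow_mul]⟩
    choose L hL using hit
    obtain ⟨x, y, hxy, hLxy⟩ := Fintype.exists_ne_map_eq_of_card_lt (fun j : Fin 4 => L j) (by simp)
    have hord : orderOf (e i) ∣ p ^ k := orderOf_dvd_of_pow_eq_one (h1 i)
    have key : ∀ x y : ℕ, x < y → y < 4 → L x = L y → e i ^ p = 1 := by
      intro x y hlt hy4 hL'
      obtain ⟨c, rfl⟩ : ∃ c, y = x + (c + 1) := ⟨y - x - 1, by omega⟩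
      have he : e i ^ (1 + p) ^ x = e i ^ (1 + p) ^ (x + (c + 1)) := by rw [← hL, ← hL, hL']
      have hne : e i ≠ 0 := fun h0 => by
        have := h1 i; rw [h0, zero_pow hq.ne'] at this; exact zero_ne_one this
      have hcop : (orderOf (e i)).Coprime ((1 + p) ^ x) := by
        refine Nat.Coprime.pow_right _ (Nat.Coprime.coprime_dvd_left hord (Nat.Coprime.pow_left _ ?_))
        simp
      set u : ℂˣ := Units.mk0 _ hne with hu
      have huo : orderOf u = orderOf (e i) := by rw [← orderOf_units]; rfl
      have he' : u ^ (1 + p) ^ x = u ^ (1 + p) ^ (x + (c + 1)) := by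
        ext; simpa [u] using he
      rw [pow_eq_pow_iff_modEq, huo, pow_add] at he'
      have h3 : (1 + p) ^ x * 1 ≡ (1 + p) ^ x * (1 + p) ^ (c + 1) [MOD orderOf (e i)] := by simpa using he'
      have h4 := Nat.ModEq.cancel_left_of_coprime hcop h3
      have h5 : orderOf (e i) ∣ (1 + p) ^ (c + 1) - 1 :=
        (Nat.modEq_iff_dvd' (Nat.one_le_pow _ _ (by omega))).1 h4
      have hpn : ∀ t : ℕ, 0 < t → t < p → ¬ p ∣ t := fun t h0 ht h => absurd (Nat.le_of_dvd h0 h) (by omega)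
      have hfin : ∀ t : ℕ, (1 + p) ^ (c + 1) - 1 = p * t → ¬ p ∣ t → e i ^ p = 1 := by
        intro t ht hpt
        rw [ht] at h5
        have : (orderOf (e i)).Coprime t := Nat.Coprime.coprime_dvd_left hord
          (Nat.Coprime.pow_left _ ((Nat.Prime.coprime_iff_not_dvd hp).2 hpt))
        exact orderOf_dvd_iff_pow_eq_one.1 (this.dvd_of_dvd_mul_right h5)
      have hc3 : c = 0 ∨ c = 1 ∨ c = 2 := by omega
      rcases hc3 with rfl | rfl | rfl
      · exact hfin 1 (by simp) (hpn 1 (by omega) (by omega))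
      · refine hfin (p + 2) ?_ ?_
        · rw [Nat.sub_eq_iff_eq_add (Nat.one_le_pow _ _ (by omega))]; ring
        · intro h; exact hpn 2 (by omega) (by omega) ((Nat.dvd_add_right dvd_rfl).1 h)
      · refine hfin (p * (p + 3) + 3) ?_ ?_
        · rw [Nat.sub_eq_iff_eq_add (Nat.one_le_pow _ _ (by omega))]; ring
        · intro h; exact hpn 3 (by omega) (by omega) ((Nat.dvd_add_right (dvd_mul_right _ _)).1 h)
    rcases lt_or_gt_of_ne (fun h => hxy (Fin.ext h) : (x : ℕ) ≠ y) with h | h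
    · exact key x y h y.2 hLxy
    · exact key y x h x.2 hLxy.symm
  exact h3 p hep

/-- The Heisenberg relation `X Y = Z Y X` with `Z` central of order `p` forces dimension at least `p`:
`X` moves an eigenvector of `Y` through `p` distinct eigenvalues. -/
lemma no_heis {p : ℕ} (hp : p.Prime) (hp5 : 5 ≤ p) (X Y Z : Matrix (Fin 3) (Fin 3) ℂ)
    (hX : X ^ p = 1) (hY : Y ^ p = 1) (hZ : Z ^ p = 1) (hZY : Commute Z Y) (hZX : Commute Z X)
    (h : X * Y = Z * Y * X) : Z = 1 := by
  classical
  haveI := Fact.mk hp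
  by_contra hne
  obtain ⟨U, V, w, hVU, hUV, hw⟩ := sim_diag hp.pos (fun b : Bool => if b then Z else Y)
    (by rintro (_ | _) (_ | _) <;> simp [hZY, hZY.symm]) (by rintro (_ | _) <;> simp [hY, hZ])
  have hwZ := hw true
  have hwY := hw false
  simp only [if_true, Bool.false_eq_true, if_false] at hwZ hwY
  obtain ⟨i, hi⟩ : ∃ i, w true i ≠ 1 := by
    by_contra hcon
    push Not at hcon
    rw [show w true = fun _ => 1 from funext hcon] at hwZ
    apply hne; rw [hwZ]; simp [hUV]
  set v : Fin 3 → ℂ := U.mulVec (Pi.single i 1) with hv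
  have hev : ∀ b, (if b then Z else Y).mulVec v = w b i • v := by
    intro b
    rw [hw b, hv, Matrix.mulVec_mulVec, mul_assoc, hVU, mul_one, ← Matrix.mulVec_mulVec]
    rw [show (Matrix.diagonal (w b)).mulVec (Pi.single i 1) = w b i • (Pi.single i 1 : Fin 3 → ℂ) by
      ext j; rw [Matrix.mulVec_diagonal]; by_cases hj : j = i
      · subst hj; simp
      · simp [hj], Matrix.mulVec_smul]
  have hZv := hev true
  have hYv := hev false
  simp only [if_true, Bool.false_eq_true, if_false] at hZv hYv
  have hv0 : v ≠ 0 := by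
    intro h0
    have : V.mulVec v = Pi.single i 1 := by rw [hv, Matrix.mulVec_mulVec, hVU, Matrix.one_mulVec]
    rw [h0, Matrix.mulVec_zero] at this
    simpa using congrFun this i
  set μ := w true i
  set b := w false i
  have hpow : ∀ (A : Matrix (Fin 3) (Fin 3) ℂ) (c : ℂ), A.mulVec v = c • v → ∀ k : ℕ, (A ^ k).mulVec v = c ^ k • v := by
    intro A c hA k
    induction k with
    | zero => simp
    | succ k ih => rw [pow_succ, ← Matrix.mulVec_mulVec, hA, Matrix.mulVec_smul, ih, smul_smul, pow_succ, mul_comm]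
  have hroot : ∀ (A : Matrix (Fin 3) (Fin 3) ℂ) (c : ℂ), A.mulVec v = c • v → A ^ p = 1 → c ^ p = 1 := by
    intro A c hA hAp
    have := hpow A c hA p
    rw [hAp, Matrix.one_mulVec] at this
    have h2 : (c ^ p - 1) • v = 0 := by rw [sub_smul, ← this, one_smul, sub_self]
    exact sub_eq_zero.1 ((smul_eq_zero.1 h2).resolve_right hv0)
  have hμ := hroot Z μ hZv hZ
  have hb := hroot Y b hYv hY
  have hμ0 : μ ≠ 0 := fun h0 => by rw [h0, zero_pow hp.ne_zero] at hμ; exact zero_ne_one hμ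
  have hb0 : b ≠ 0 := fun h0 => by rw [h0, zero_pow hp.ne_zero] at hb; exact zero_ne_one hb
  have hXv : ∀ k : ℕ, Z.mulVec ((X ^ k).mulVec v) = μ • (X ^ k).mulVec v := by
    intro k
    rw [Matrix.mulVec_mulVec, (hZX.pow_right k).eq, ← Matrix.mulVec_mulVec, hZv, Matrix.mulVec_smul]
  have hXY : ∀ k : ℕ, Y.mulVec ((X ^ k).mulVec v) = (b * μ⁻¹ ^ k) • (X ^ k).mulVec v := by
    intro k
    induction k with
    | zero => simp [hYv]
    | succ k ih =>
      set u := (X ^ k).mulVec v with hu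
      have e1 : (X ^ (k + 1)).mulVec v = X.mulVec u := by rw [pow_succ', ← Matrix.mulVec_mulVec]
      have e2 := hXv (k + 1)
      rw [e1] at e2 ⊢
      have e3 : Z.mulVec (Y.mulVec (X.mulVec u)) = X.mulVec (Y.mulVec u) := by
        simp only [Matrix.mulVec_mulVec, h, mul_assoc]
      rw [ih, Matrix.mulVec_smul] at e3
      have e4 : Y.mulVec (Z.mulVec (X.mulVec u)) = (b * μ⁻¹ ^ k) • X.mulVec u := by
        rw [← e3, Matrix.mulVec_mulVec, ← hZY.eq, ← Matrix.mulVec_mulVec]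
      rw [e2, Matrix.mulVec_smul] at e4
      have e5 := congrArg (fun y => μ⁻¹ • y) e4
      simp only [smul_smul, inv_mul_cancel₀ hμ0, one_smul] at e5
      rw [e5]; congr 1; rw [pow_succ]; ring
  have hX0 : ∀ k : ℕ, (X ^ k).mulVec v ≠ 0 := by
    intro k h0
    have : ((X ^ (p - 1)) ^ k).mulVec ((X ^ k).mulVec v) = v := by
      rw [Matrix.mulVec_mulVec, ← ((Commute.refl X).pow_left (p - 1)).mul_pow, ← pow_succ, Nat.sub_add_cancel hp.pos, hX, one_pow, Matrix.one_mulVec]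
    rw [h0, Matrix.mulVec_zero] at this
    exact hv0 this.symm
  have hli := Module.End.eigenvectors_linearIndependent' (Matrix.toLin' Y) (fun k : Fin 4 => b * μ⁻¹ ^ (k : ℕ))
    (by
      intro x y hxy
      have hxy' : μ⁻¹ ^ (x : ℕ) = μ⁻¹ ^ (y : ℕ) := mul_left_cancel₀ hb0 hxy
      have ho : orderOf (μ⁻¹) = p := orderOf_eq_prime (by rw [inv_pow, hμ, inv_one]) (fun h' => hi (inv_eq_one.1 h'))
      have h4 : ∀ z : Fin 4, (z : ℕ) < orderOf (μ⁻¹) := fun z => by rw [ho]; omega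
      exact Fin.ext (pow_injOn_Iio_orderOf (h4 x) (h4 y) hxy'))
    (fun k => (X ^ (k : ℕ)).mulVec v) (fun k => by
      rw [Module.End.hasEigenvector_iff, Module.End.mem_eigenspace_iff]
      exact ⟨by rw [Matrix.toLin'_apply, hXY], hX0 _⟩)
  have := hli.fintype_card_le_finrank
  simp at this

end Acd

/-! ### Sylow subgroups of linear groups of degree three -/

namespace Acd
open Module

section
variable {G : Type} [Group G] [Finite G] {p : ℕ} [hp : Fact p.Prime]

/-- A `p`-subgroup of exponent `p` of a linear group of degree `3 < p` is abelian. -/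
lemma p_sub_comm (hp5 : 5 ≤ p) (M : G →* Matrix (Fin 3) (Fin 3) ℂ) (hM : Function.Injective M)
    {P : Subgroup G} (hP : IsPGroup p P) (hexp : ∀ x ∈ P, x ^ p = 1) (x y : P) : x * y = y * x := by
  by_contra hcon
  have hZ : Subgroup.center P ≠ ⊤ := fun h => hcon ((Subgroup.mem_center_iff.1 (h ▸ Subgroup.mem_top y : y ∈ Subgroup.center P) x))
  haveI : Nontrivial (P ⧸ Subgroup.center P) := QuotientGroup.nontrivial_iff.2 hZ
  have hQ : IsPGroup p (P ⧸ Subgroup.center P) := hP.to_quotient _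
  haveI := hQ.center_nontrivial
  obtain ⟨⟨q, hq⟩, hq1⟩ := exists_ne (1 : Subgroup.center (P ⧸ Subgroup.center P))
  obtain ⟨y, rfl⟩ := QuotientGroup.mk_surjective q
  have hy : y ∉ Subgroup.center P := fun h => hq1 (Subtype.ext ((QuotientGroup.eq_one_iff y).2 h))
  rw [Subgroup.mem_center_iff] at hy
  push Not at hy
  obtain ⟨x, hx⟩ := hy
  set z := x * y * x⁻¹ * y⁻¹ with hz
  have hzc : z ∈ Subgroup.center P := by
    rw [← QuotientGroup.eq_one_iff]
    have := Subgroup.mem_center_iff.1 hq (x : P ⧸ Subgroup.center P)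
    rw [hz]
    simp only [QuotientGroup.mk_mul, QuotientGroup.mk_inv]
    rw [this]; group
  have hzc' := Subgroup.mem_center_iff.1 hzc
  have hpow : ∀ u : P, M (u : G) ^ p = 1 := fun u => by rw [← map_pow, hexp u u.2, map_one]
  have hco : ∀ u : P, Commute (M (z : G)) (M (u : G)) := fun u => by
    have h1 := hzc' u
    have h2 : (u : G) * z = z * u := by exact_mod_cast congrArg Subtype.val h1
    change M _ * M _ = M _ * M _
    rw [← map_mul, ← map_mul, h2]
  have h1 := no_heis hp.out hp5 (M x) (M y) (M z) (hpow x) (hpow y) (hpow z) (hco y) (hco x) (by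
    rw [← map_mul, ← map_mul, ← map_mul]
    congr 1
    rw [hz]; push_cast; group)
  have h2 : (z : G) = 1 := hM (h1.trans (map_one M).symm)
  have h3 : z = 1 := Subtype.ext h2
  apply hx
  rw [hz, mul_inv_eq_one, mul_inv_eq_iff_eq_mul] at h3
  exact h3

/-- `N_G(P) / C_G(P)` is cyclic of order dividing three: it permutes faithfully the three weights
of `P`, and it has odd order. -/
lemma norm_act (hodd : Odd (Nat.card G)) (M : G →* Matrix (Fin 3) (Fin 3) ℂ) (hM : Function.Injective M)
    {P : Subgroup G} (hab : ∀ x y : P, x * y = y * x) :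
    ∃ n ∈ Subgroup.normalizer (P : Set G), (∀ x ∈ P, n ^ 3 * x * (n ^ 3)⁻¹ = x) ∧
      ∀ l ∈ Subgroup.normalizer (P : Set G), ∃ i : Fin 3, ∀ x ∈ P, l * x * l⁻¹ = n ^ (i : ℕ) * x * (n ^ (i : ℕ))⁻¹ := by
  classical
  obtain ⟨U, V, w, hVU, hUV, hw⟩ := sim_diag (Nat.card_pos (α := G)) (fun x : P => M x)
    (fun x y => by
      have h : (x : G) * y = y * x := congrArg Subtype.val (hab x y)
      change M _ * M _ = M _ * M _
      rw [← map_mul, ← map_mul, h])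
    (fun x => by rw [← map_pow, pow_card_eq_one', map_one])
  let lam : Fin 3 → P → ℂ := fun i x => w x i
  let S : Set (P → ℂ) := Set.range lam
  let θ := P.normalizerMonoidHom
  have hθ : ∀ (n : Subgroup.normalizer (P : Set G)) (x : P), ((θ n x : P) : G) = n * x * (n : G)⁻¹ := fun n x => rfl
  have hcl : ∀ f ∈ θ.range, ∀ v ∈ S, (fun x => v (f x)) ∈ S := by
    rintro _ ⟨n, rfl⟩ _ ⟨i, rfl⟩
    set T := V * M n * U with hT
    have hTinv : T * (V * M (n : G)⁻¹ * U) = 1 := by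
      calc T * (V * M (n : G)⁻¹ * U) = V * (M n * (U * V) * M (n : G)⁻¹) * U := by rw [hT]; simp only [mul_assoc]
        _ = 1 := by rw [hUV, mul_one, ← map_mul, mul_inv_cancel, map_one, mul_one, hVU]
    obtain ⟨j, hj⟩ : ∃ j, T i j ≠ 0 := by
      by_contra hcon
      push Not at hcon
      have := congrFun (congrFun hTinv i) i
      rw [Matrix.mul_apply, Finset.sum_eq_zero fun j _ => by rw [hcon j, zero_mul]] at this
      simp at this
    refine ⟨j, funext fun x => ?_⟩
    have e1 : M (θ n x : P) * M n = M n * M x := by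
      rw [hθ, ← map_mul, ← map_mul]; congr 1; group
    have e2 : Matrix.diagonal (w (θ n x)) * T = T * Matrix.diagonal (w x) := by
      have h1 := hw (θ n x)
      have h2 := hw x
      calc Matrix.diagonal (w (θ n x)) * T = (V * U) * Matrix.diagonal (w (θ n x)) * (V * M n * U) := by
            rw [hVU, one_mul]
        _ = V * ((U * Matrix.diagonal (w (θ n x)) * V) * M n) * U := by simp only [mul_assoc]
        _ = V * (M n * (U * Matrix.diagonal (w x) * V)) * U := by rw [← h1, e1, ← h2]
        _ = T * Matrix.diagonal (w x) * (V * U) := by rw [hT]; simp only [mul_assoc]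
        _ = _ := by rw [hVU, mul_one]
    have e3 := congrFun (congrFun e2 i) j
    rw [Matrix.diagonal_mul, Matrix.mul_diagonal, mul_comm] at e3
    exact (mul_left_cancel₀ hj e3).symm
  let T : θ.range →* Equiv.Perm S :=
    { toFun := fun f =>
        { toFun := fun v => ⟨fun x => v.1 ((f⁻¹).1 x), hcl _ (f⁻¹).2 v.1 v.2⟩
          invFun := fun v => ⟨fun x => v.1 (f.1 x), hcl _ f.2 v.1 v.2⟩
          left_inv := fun v => by ext x; simp
          right_inv := fun v => by ext x; simp }
      map_one' := by ext v x; simp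
      map_mul' := fun f g => by ext v x; simp }
  have hTinj : Function.Injective T := by
    rw [injective_iff_map_eq_one]
    intro f hf
    have h1 : ∀ (i : Fin 3) (x : P), lam i ((f⁻¹).1 x) = lam i x := fun i x => by
      have := congrArg (fun π : Equiv.Perm S => (π ⟨lam i, i, rfl⟩).1 x) hf
      exact this
    have h2 : ∀ x : P, (f⁻¹).1 x = x := fun x => by
      have h3 : w ((f⁻¹).1 x) = w x := funext fun i => h1 i x
      have h4 : M ((f⁻¹).1 x : P) = M x := by
        have a1 := hw ((f⁻¹).1 x)
        have a2 := hw x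
        rw [a1, a2, h3]
      exact Subtype.ext (hM h4)
    have : f⁻¹ = 1 := Subtype.ext (MulEquiv.ext h2)
    exact inv_eq_one.1 this
  have hB6 : Nat.card θ.range ∣ 6 := by
    have h1 := Subgroup.card_dvd_of_injective T hTinj
    rw [Nat.card_perm] at h1
    have h2 : Nat.card S ≤ 3 := by
      have := Finite.card_range_le lam
      simpa using this
    exact h1.trans (Nat.factorial_dvd_factorial h2)
  have hBodd : Odd (Nat.card θ.range) := by
    refine Odd.of_dvd_nat hodd ((Subgroup.card_range_dvd θ).trans (Subgroup.card_subgroup_dvd_card _))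
  have hB3 : Nat.card θ.range ∣ 3 := by
    have : (Nat.card θ.range).Coprime 2 := Nat.Coprime.symm ((Nat.coprime_two_left).2 hBodd)
    exact this.dvd_of_dvd_mul_left (show Nat.card θ.range ∣ 2 * 3 from hB6)
  haveI : IsCyclic θ.range := by
    rcases (Nat.dvd_prime Nat.prime_three).1 hB3 with h | h
    · haveI := (Nat.card_eq_one_iff_unique.1 h).1
      exact isCyclic_of_subsingleton
    · haveI : Fact (Nat.Prime 3) := ⟨Nat.prime_three⟩
      exact isCyclic_of_prime_card h
  obtain ⟨⟨_, n, rfl⟩, hgen⟩ := IsCyclic.exists_generator (α := θ.range)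
  have hord : orderOf (θ n) ∣ 3 := by
    have h1 := orderOf_dvd_natCard (⟨θ n, n, rfl⟩ : θ.range)
    have h2 : orderOf (⟨θ n, n, rfl⟩ : θ.range) = orderOf (θ n) := (Subgroup.orderOf_coe _).symm
    rw [h2] at h1
    exact h1.trans hB3
  refine ⟨n, n.2, fun x hx => ?_, fun l hl => ?_⟩
  · have h1 : θ (n ^ 3) = 1 := by rw [map_pow]; exact orderOf_dvd_iff_pow_eq_one.1 hord
    have h2 := hθ (n ^ 3) ⟨x, hx⟩
    rw [h1] at h2
    exact_mod_cast h2.symm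
  · have h1 := hgen ⟨θ ⟨l, hl⟩, _, rfl⟩
    obtain ⟨i, hi, hi2⟩ := (mem_zpowers_iff_mem_range_orderOf.1 h1 |> Finset.mem_image.1)
    have h2 : orderOf (⟨θ n, n, rfl⟩ : θ.range) = orderOf (θ n) := (Subgroup.orderOf_coe _).symm
    rw [Finset.mem_range, h2] at hi
    have h3 : i < 3 := hi.trans_le (Nat.le_of_dvd (by norm_num) hord)
    refine ⟨⟨i, h3⟩, fun x hx => ?_⟩
    have h4 : θ (n ^ i) = θ ⟨l, hl⟩ := by
      rw [map_pow]; exact congrArg Subtype.val hi2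
    have h5 := hθ ⟨l, hl⟩ ⟨x, hx⟩
    rw [← h4, hθ] at h5
    exact_mod_cast h5.symm

end
end Acd

/-! ### Counting classes when the Sylow subgroup is elementary abelian -/

namespace Acd
open Module

/-- A finite abelian group of exponent dividing `p` has as many characters as elements. -/
lemma lin_eq_card {A : Type} [hA : Group A] [Finite A] {p : ℕ} (hab : ∀ x y : A, x * y = y * x)
    (hexp : ∀ x : A, x ^ p = 1) : lin p A = Nat.card A := by
  letI : CommGroup A := { hA with mul_comm := hab }
  haveI : NeZero (Monoid.exponent A) := ⟨Monoid.exponent_ne_zero_of_finite⟩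
  rw [← CommGroup.card_monoidHom_of_hasEnoughRootsOfUnity A ℂ]
  refine Nat.card_congr ⟨fun f => (rootsOfUnity p ℂ).subtype.comp f,
    fun f => f.codRestrict (rootsOfUnity p ℂ) fun x => ?_, fun f => ?_, fun f => ?_⟩
  · rw [mem_rootsOfUnity, ← map_pow, hexp, map_one]
  · ext; rfl
  · ext; rfl

/-- If the fibres of `f` have at most three elements and those through `C` are singletons, then
`|α| + 2 |C| ≤ 3 |β|`. -/
lemma fibre_count {α β : Type} [Finite α] [Finite β] (f : α → β) (C : Set α)
    (h3 : ∀ x : α, ∃ u : Fin 3 → α, ∀ y, f x = f y → ∃ i, y = u i)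
    (h1 : ∀ x ∈ C, ∀ y, f x = f y → x = y) :
    Nat.card α + 2 * Nat.card C ≤ 3 * Nat.card β := by
  classical
  haveI := Fintype.ofFinite α
  haveI := Fintype.ofFinite β
  have e1 : Nat.card α = ∑ b : β, (Finset.univ.filter fun a => f a = b).card := by
    rw [Nat.card_eq_fintype_card]
    exact Finset.card_eq_sum_card_fiberwise (fun x _ => Finset.mem_univ _)
  have e2 : Nat.card C = ∑ b : β, (C.toFinset.filter fun a => f a = b).card := by
    rw [Nat.card_eq_fintype_card, ← Set.toFinset_card]
    exact Finset.card_eq_sum_card_fiberwise (fun x _ => Finset.mem_univ _)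
  rw [e1, e2, Finset.mul_sum, ← Finset.sum_add_distrib, Nat.card_eq_fintype_card, mul_comm 3,
    ← Finset.card_univ, ← smul_eq_mul]
  refine Finset.sum_le_card_nsmul _ _ _ fun b _ => ?_
  have hsub : (C.toFinset.filter fun a => f a = b) ⊆ (Finset.univ.filter fun a => f a = b) :=
    Finset.filter_subset_filter _ (Finset.subset_univ _)
  rcases (C.toFinset.filter fun a => f a = b).eq_empty_or_nonempty with he | ⟨x, hx⟩
  · rw [he, Finset.card_empty, mul_zero, add_zero]
    rcases (Finset.univ.filter fun a => f a = b).eq_empty_or_nonempty with he' | ⟨x, hx⟩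
    · rw [he']; simp
    · obtain ⟨u, hu⟩ := h3 x
      have hxb := (Finset.mem_filter.1 hx).2
      refine (Finset.card_le_card (t := Finset.univ.image u) fun y hy => ?_).trans
        (Finset.card_image_le.trans (by simp))
      obtain ⟨i, hi⟩ := hu y (hxb.trans (Finset.mem_filter.1 hy).2.symm)
      exact Finset.mem_image.2 ⟨i, Finset.mem_univ _, hi.symm⟩
  · have hx' := Finset.mem_filter.1 hx
    have h2 : (Finset.univ.filter fun a => f a = b).card ≤ 1 := by
      refine (Finset.card_le_card (t := {x}) fun y hy => ?_).trans (by simp)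
      rw [Finset.mem_singleton]
      exact (h1 x (Set.mem_toFinset.1 hx'.1) y (hx'.2.trans (Finset.mem_filter.1 hy).2.symm)).symm
    have := Finset.card_le_card hsub
    omega

section
variable {G : Type} [Group G] [Finite G] {p : ℕ} [hp : Fact p.Prime]

lemma rcl_le_sylow (P : Sylow p G) : rcl p G ≤ Nat.card P := by
  have hsur : ∀ c : RCl p G, ∃ x : P, ConjClasses.mk (x : G) = c := by
    rintro ⟨_, x, hx, rfl⟩
    obtain ⟨n, hn⟩ := cj_le_sylow (zpowers_isPGroup hx.1) P
    exact ⟨⟨n * x * n⁻¹, cj_le.1 hn x (Subgroup.mem_zpowers x)⟩, (mk_eq_iff.2 ⟨n, rfl⟩).symm⟩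
  choose r hr using hsur
  refine Nat.card_le_card_of_injective r fun c c2 h => Subtype.ext ?_
  rw [← hr c, ← hr c2, h]

/-- If `N_G(P) = C_G(P)` and `P` has exponent `p`, the transfer `G → P` is surjective and provides
as many linear characters as there are rational classes. -/
lemma centr_case (P : Sylow p G) (hP : Subgroup.normalizer (P : Set G) ≤ Subgroup.centralizer P)
    (hexp : ∀ x ∈ P, x ^ p = 1) : rcl p G ≤ lin p G := by
  refine (rcl_le_sylow P).trans ?_
  have hab : ∀ x y : (P : Subgroup G), x * y = y * x := fun a b =>
    Subtype.ext (hP (Subgroup.le_normalizer b.2) a a.2)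
  rw [← lin_eq_card (p := p) hab (fun x => Subtype.ext (hexp x x.2))]
  have hs : Function.Surjective (MonoidHom.transferSylow P hP) := by
    intro y
    obtain ⟨x, hx⟩ := (P.2.powEquiv' P.not_dvd_index).surjective y
    exact ⟨x, (MonoidHom.transferSylow_eq_pow P hP x x.2).trans hx⟩
  exact Nat.card_le_card_of_injective (fun f : (P : Subgroup G) →* rootsOfUnity p ℂ => f.comp (MonoidHom.transferSylow P hP))
    fun f f' h => (MonoidHom.cancel_right hs).1 h

/-- If `N_G(P)` acts on the elementary abelian group `P` as a group generated by an element `n` of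
order three, put `C = C_P(n)`. Then `lin ≤ |C|`, and `|P| + 2 |C| ≤ 3 rcl` by counting orbits.
Since `|P| ≡ |C|` modulo `3` and `p ≡ 2` modulo `3`, the index of `C` in `P` is at least `p²`. -/
lemma noncentr_case (hp3 : p % 3 = 2) (P : Sylow p G) (hab : ∀ x y : (P : Subgroup G), x * y = y * x)
    (hexp : ∀ x ∈ P, x ^ p = 1) {n : G} (hn : n ∈ Subgroup.normalizer (P : Set G))
    (hn3 : ∀ x ∈ P, n ^ 3 * x * (n ^ 3)⁻¹ = x)
    (hN : ∀ l ∈ Subgroup.normalizer (P : Set G), ∃ i : Fin 3, ∀ x ∈ P,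
      l * x * l⁻¹ = n ^ (i : ℕ) * x * (n ^ (i : ℕ))⁻¹)
    (hne : ∃ x ∈ P, n * x * n⁻¹ ≠ x) : (p ^ 2 + 2) * lin p G ≤ 3 * rcl p G := by
  classical
  have hnP : ∀ x ∈ P, n * x * n⁻¹ ∈ P := fun x hx => (Subgroup.mem_normalizer_iff.1 hn x).1 hx
  have hniP : ∀ i : ℕ, ∀ x ∈ P, n ^ i * x * (n ^ i)⁻¹ ∈ P := fun i x hx =>
    (Subgroup.mem_normalizer_iff.1 (pow_mem hn i) x).1 hx
  let C : Subgroup G := (P : Subgroup G) ⊓ Subgroup.centralizer {n}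
  have hC : ∀ x, x ∈ C ↔ x ∈ P ∧ n * x * n⁻¹ = x := by
    intro x
    rw [Subgroup.mem_inf, Subgroup.mem_centralizer_singleton_iff, mul_inv_eq_iff_eq_mul, eq_comm (a := x * n)]
    rfl
  have hCi : ∀ x ∈ C, ∀ i : ℕ, n ^ i * x * (n ^ i)⁻¹ = x := by
    intro x hx i
    have h : Commute n x := by
      have := ((hC x).1 hx).2
      rwa [mul_inv_eq_iff_eq_mul] at this
    rw [(h.pow_left i).eq, mul_inv_cancel_right]
  -- `f x ^ 3` is the value of `f` at the norm of `x`, which lies in `C`, and `3` is prime to `p`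
  have hlin : lin p G ≤ Nat.card C := by
    have hCab : ∀ x y : C, x * y = y * x := fun x y => by
      have h : (x : G) * y = y * x :=
        congrArg Subtype.val (hab ⟨x, ((hC x).1 x.2).1⟩ ⟨y, ((hC y).1 y.2).1⟩)
      exact Subtype.ext h
    rw [← lin_eq_card (p := p) hCab (fun x => Subtype.ext (hexp x ((hC x).1 x.2).1))]
    refine lin_le fun f hf => hom_triv_of_sylow P rou_pgroup f fun x hx => ?_
    have hy : x * (n * x * n⁻¹) * (n ^ 2 * x * (n ^ 2)⁻¹) ∈ C := by
      have h1 := hniP 1 x hx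
      have h2 := hniP 2 x hx
      rw [pow_one] at h1
      refine (hC _).2 ⟨mul_mem (mul_mem hx h1) h2, ?_⟩
      have h3 := hn3 x hx
      have e : n * (x * (n * x * n⁻¹) * (n ^ 2 * x * (n ^ 2)⁻¹)) * n⁻¹ =
          ((n * x * n⁻¹) * (n ^ 2 * x * (n ^ 2)⁻¹)) * (n ^ 3 * x * (n ^ 3)⁻¹) := by
        simp only [pow_succ, pow_zero, one_mul]; group
      rw [e, h3, mul_assoc x]
      exact congrArg Subtype.val (hab ⟨_, mul_mem h1 h2⟩ ⟨x, hx⟩)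
    have h1 := hf _ hy
    have h3 : f x ^ 3 = 1 := by
      simp only [map_mul, map_inv, map_pow] at h1
      rw [← h1, mul_comm (f n), mul_comm (f n ^ 2), mul_inv_cancel_right, mul_inv_cancel_right]
      simp [pow_succ]
    have hpp : f x ^ p = 1 := by rw [← map_pow, hexp x hx, map_one]
    have hg : Nat.gcd 3 p = 1 := by
      rw [← Nat.coprime_iff_gcd_eq_one, Nat.Prime.coprime_iff_not_dvd Nat.prime_three]; omega
    have := pow_gcd_eq_one.2 ⟨h3, hpp⟩
    rwa [hg, pow_one] at this
  -- Burnside: fusion in the abelian group `P` is controlled by its normaliser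
  have hfus : ∀ x y : G, x ∈ P → y ∈ P → ConjClasses.mk x = ConjClasses.mk y →
      ∃ i : Fin 3, y = n ^ (i : ℕ) * x * (n ^ (i : ℕ))⁻¹ := by
    intro x y hx hy hxy
    obtain ⟨g, hg⟩ := mk_eq_iff.1 hxy
    haveI : IsMulCommutative P := ⟨⟨hab⟩⟩
    obtain ⟨l, hl, e⟩ := P.conj_eq_normalizer_conj_of_mem x g⁻¹ hx (by rw [inv_inv, hg]; exact hy)
    obtain ⟨i, hi⟩ := hN l⁻¹ (inv_mem hl)
    refine ⟨i, ?_⟩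
    rw [← hi x hx, inv_inv, ← e, inv_inv, hg]
  -- every element of `P` is rational, because `P` has exponent `p`
  have hcount := fibre_count (α := (P : Subgroup G)) (β := RCl p G)
    (fun x => ⟨ConjClasses.mk (x : G), x, ⟨pelt_of_mem P.2 x.2, 1, by
      rw [pow_add, pow_one, hexp x x.2]; simp⟩, rfl⟩) {x | (x : G) ∈ C} ?_ ?_
  rotate_left
  · intro x
    refine ⟨fun i => ⟨_, hniP i x x.2⟩, fun y hy => ?_⟩
    obtain ⟨i, hi⟩ := hfus x y x.2 y.2 (congrArg Subtype.val hy)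
    exact ⟨i, Subtype.ext hi⟩
  · intro x hx y hy
    obtain ⟨i, hi⟩ := hfus x y x.2 y.2 (congrArg Subtype.val hy)
    exact Subtype.ext ((hCi x hx i).symm.trans hi.symm)
  have hCP : Nat.card {x : (P : Subgroup G) | (x : G) ∈ C} = Nat.card C :=
    Nat.card_congr ⟨fun x => ⟨x.1, x.2⟩, fun x => ⟨⟨x.1, ((hC _).1 x.2).1⟩, x.2⟩, fun _ => rfl, fun _ => rfl⟩
  have hmod : Nat.card P ≡ Nat.card C [MOD 3] := by
    haveI := Fintype.ofFinite (P : Subgroup G)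
    let φ : Function.End (P : Subgroup G) := fun x => ⟨n * x * n⁻¹, hnP x x.2⟩
    have h3 : φ ^ 3 ^ 1 = 1 := by
      funext x
      refine Subtype.ext ?_
      have := hn3 x x.2
      change n * (n * (n * x * n⁻¹) * n⁻¹) * n⁻¹ = x
      refine Eq.trans ?_ this
      simp only [pow_succ, pow_zero, one_mul]; group
    haveI : Fact (Nat.Prime 3) := ⟨Nat.prime_three⟩
    have := Equiv.Perm.card_fixedPoints_modEq h3
    rw [← Nat.card_eq_fintype_card, ← Nat.card_eq_fintype_card] at this
    refine this.trans (congrArg (· % 3) ?_ : _ % 3 = _ % 3)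
    rw [← hCP]
    refine Nat.card_congr (Equiv.setCongr ?_)
    ext x
    change φ x = x ↔ (x : G) ∈ C
    rw [hC, Subtype.ext_iff]
    exact ⟨fun h => ⟨x.2, h⟩, fun h => h.2⟩
  have hbig : p ^ 2 * Nat.card C ≤ Nat.card P := by
    obtain ⟨a, ha⟩ := IsPGroup.iff_card.1 P.2
    obtain ⟨b, hb⟩ := IsPGroup.iff_card.1 (P.2.to_le (inf_le_left : C ≤ P))
    have hlt : Nat.card C < Nat.card P := by
      refine lt_of_le_of_ne (Subgroup.card_le_of_le inf_le_left) fun h => ?_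
      obtain ⟨x, hx, hxn⟩ := hne
      have := Subgroup.eq_of_le_of_card_ge (inf_le_left : C ≤ P) h.ge
      exact hxn ((hC x).1 (this.ge hx)).2
    rw [ha, hb] at hmod hlt ⊢
    have hba : b < a := (Nat.pow_lt_pow_iff_right hp.out.one_lt).1 hlt
    rw [← pow_add]
    refine Nat.pow_le_pow_right hp.out.pos ?_
    rcases Nat.lt_or_ge a (2 + b) with h | h
    · exfalso
      obtain rfl : a = b + 1 := by omega
      have h4 : p ^ (b + 1) % 3 = p ^ b % 3 := hmod
      have h5 : ¬ 3 ∣ p ^ b := fun h => by have := Nat.Prime.dvd_of_dvd_pow Nat.prime_three h; omega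
      rw [pow_succ, Nat.mul_mod, hp3] at h4
      omega
    · exact h
  rw [hCP] at hcount
  change _ ≤ 3 * rcl p G at hcount
  calc (p ^ 2 + 2) * lin p G ≤ (p ^ 2 + 2) * Nat.card C := Nat.mul_le_mul_left _ hlin
    _ ≤ _ := by rw [add_mul]; exact (Nat.add_le_add_right hbig _).trans hcount
end
end Acd

/-! ### Characters of degree three and the lower bound for the average degree -/

namespace Acd
open Module

section
variable {G : Type} [Group G] [Fintype G] {p : ℕ} {χ : G → ℂ}

/-- The bound when `G` has a faithful `ℚ(ζ_p)`-valued irreducible character of degree three. Its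
Sylow `p`-subgroup is then elementary abelian; it is not central in its normalizer, since otherwise
all `ℚ(ζ_p)`-valued irreducible characters would be linear. -/
lemma faithful_case (hp : p.Prime) (hp5 : 5 ≤ p) (hp3 : p % 3 = 2) (hodd : Odd (Nat.card G))
    (hχ : χ ∈ IrrK G (Qzeta p)) (M : G →* Matrix (Fin 3) (Fin 3) ℂ) (hM : Function.Injective M)
    (hχM : ∀ g, χ g = (M g).trace) : (p ^ 2 + 2) * lin p G ≤ 3 * rcl p G := by
  classical
  haveI := Fact.mk hp
  have hp2 : p ≠ 2 := by omega
  obtain ⟨a, n', m, D⟩ := exists_dat hp hp2 hodd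
  have hpelt : ∀ (x : G) (k : ℕ), x ^ p ^ k = 1 → x ^ p = 1 := by
    intro x k hk
    have hm : x ^ m = x ^ (1 + p) := by
      rw [pow_eq_pow_iff_modEq]
      refine D.h1.of_dvd ?_
      have h1 : orderOf x ∣ p ^ a * n' := D.hN ▸ (orderOf_dvd_natCard x).trans (dvd_mul_left _ _)
      have h2 : orderOf x ∣ p ^ k := orderOf_dvd_of_pow_eq_one hk
      exact (Nat.Coprime.coprime_dvd_left h2 (D.hco.symm.pow_left k)).dvd_of_dvd_mul_right h1
    apply hM
    rw [map_pow, map_one]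
    refine exp_p hp hp5 (M x) (k := k) (by rw [← map_pow, hk, map_one]) fun j => ?_
    rw [← map_pow, ← map_pow, ← map_pow, ← hχM, ← hχM, ← irrK_fix D hχ, ← hm, ← pow_mul, ← pow_mul,
      mul_comm]
  let P : Sylow p G := default
  have hexp : ∀ x ∈ P, x ^ p = 1 := fun x hx => by
    obtain ⟨k, hk⟩ := pelt_of_mem P.2 hx
    exact hpelt x k hk
  have hab := p_sub_comm hp5 M hM P.2 hexp
  obtain ⟨n, hn, hn3, hN⟩ := norm_act hodd M hM hab
  by_cases hne : ∃ x ∈ P, n * x * n⁻¹ ≠ x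
  · exact noncentr_case hp3 P hab hexp hn hn3 hN hne
  · exfalso
    push Not at hne
    have hni : ∀ i : ℕ, ∀ x ∈ P, n ^ i * x * (n ^ i)⁻¹ = x := by
      intro i x hx
      have h : Commute n x := by
        have := hne x hx
        rwa [mul_inv_eq_iff_eq_mul] at this
      rw [(h.pow_left i).eq, mul_inv_cancel_right]
    have hle := centr_case P (fun l hl x hx => by
      obtain ⟨i, hi⟩ := hN l hl
      have := (hi x hx).trans (hni i x hx)
      rw [mul_inv_eq_iff_eq_mul] at this
      exact this.symm) hexp
    rw [← card_irrK hp hp2 hodd, ← card_lin hp hp2 hodd] at hle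
    have hall : ∀ ψ : IrrK G (Qzeta p), ψ.1 1 = 1 := by
      by_contra hcon
      push Not at hcon
      obtain ⟨ψ, hψ⟩ := hcon
      haveI : Finite (IrrK G (Qzeta p)) := (Set.toFinite (Irr G)).subset (fun _ h => h.1)
      haveI := Fintype.ofFinite (IrrK G (Qzeta p))
      rw [Nat.card_eq_fintype_card, Nat.card_eq_fintype_card] at hle
      exact absurd (Fintype.card_subtype_lt (p := fun ψ : IrrK G (Qzeta p) => ψ.1 1 = 1) hψ) (not_lt.2 hle)
    have h1 := hall ⟨χ, hχ⟩
    have h2 := hχM 1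
    simp only [map_one, Matrix.trace_one, Fintype.card_fin] at h2
    rw [show χ 1 = 1 from h1] at h2
    norm_num at h2

/-- The general case reduces to the faithful one modulo the kernel of `χ`, by `ratio`. -/
lemma deg_three_case (hp : p.Prime) (hp5 : 5 ≤ p) (hp3 : p % 3 = 2) (hodd : Odd (Nat.card G))
    (hχ : χ ∈ IrrK G (Qzeta p)) (h3 : χ 1 = 3) : (p ^ 2 + 2) * lin p G ≤ 3 * rcl p G := by
  classical
  haveI := Fact.mk hp
  have hp2 : p ≠ 2 := by omega
  obtain ⟨d, M, hM, hnorm⟩ := mem_Irr_iff.1 hχ.1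
  obtain rfl : d = 3 := by
    have := hM 1
    rw [h3, map_one, Matrix.trace_one, Fintype.card_fin] at this
    exact_mod_cast this.symm
  let Q := G ⧸ M.ker
  haveI : Fintype Q := Fintype.ofFinite Q
  let π : G →* Q := QuotientGroup.mk' M.ker
  have hπ : Function.Surjective π := QuotientGroup.mk'_surjective _
  let M' : Q →* Matrix (Fin 3) (Fin 3) ℂ := QuotientGroup.lift M.ker M fun x hx => hx
  have hM'π : ∀ g, M' (π g) = M g := fun g => rfl
  have hM' : Function.Injective M' := by
    rw [injective_iff_map_eq_one]
    intro q hq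
    obtain ⟨g, rfl⟩ := hπ q
    exact (QuotientGroup.eq_one_iff g).2 hq
  have hcard := M.ker.card_eq_card_quotient_mul_card_subgroup
  have hodd' : Odd (Nat.card Q) := Odd.of_dvd_nat hodd ⟨_, hcard⟩
  let χ' : Q → ℂ := fun q => (M' q).trace
  have hχπ : ∀ g, χ' (π g) = χ g := fun g => (hM g).symm
  have hχ' : χ' ∈ IrrK Q (Qzeta p) := by
    refine ⟨mem_Irr_iff.2 ⟨3, M', fun _ => rfl, ?_⟩, fun q => ?_⟩
    · have hfib : ∀ q : Q, (Finset.univ.filter fun g => π g = q).card = Nat.card M.ker := by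
        intro q
        obtain ⟨g₀, rfl⟩ := hπ q
        rw [Nat.card_eq_fintype_card, ← Fintype.card_subtype]
        refine Fintype.card_congr ⟨fun g => ⟨g₀⁻¹ * g.1, ?_⟩, fun k => ⟨g₀ * k.1, ?_⟩, ?_, ?_⟩
        · exact QuotientGroup.eq.1 g.2.symm
        · have : π k.1 = 1 := (QuotientGroup.eq_one_iff _).2 k.2
          rw [map_mul, this, mul_one]
        · intro g; simp
        · intro g; simp
      have h1 : ∑ g, χ g * χ g⁻¹ = Nat.card M.ker * ∑ q, χ' q * χ' q⁻¹ := by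
        rw [← Finset.sum_fiberwise (s := Finset.univ) (g := π), Finset.mul_sum]
        refine Finset.sum_congr rfl fun q _ => ?_
        rw [← hfib q, ← nsmul_eq_mul, ← Finset.sum_const]
        refine Finset.sum_congr rfl fun g hg => ?_
        rw [← (Finset.mem_filter.1 hg).2, ← map_inv, hχπ, hχπ]
      rw [hnorm, hcard] at h1
      have h0 : (Nat.card M.ker : ℂ) ≠ 0 := by exact_mod_cast Nat.card_pos.ne'
      apply mul_left_cancel₀ h0
      rw [← h1]; push_cast; ring
    · obtain ⟨g, rfl⟩ := hπ q
      rw [hχπ]; exact hχ.2 g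
  have h1 := faithful_case hp hp5 hp3 hodd' hχ' M' hM' fun _ => rfl
  have h2 := ratio hp hp2 Q π hπ hodd
  have h4 : 0 < lin p Q := lin_pos
  refine Nat.le_of_mul_le_mul_right ?_ h4
  calc (p ^ 2 + 2) * lin p G * lin p Q = lin p G * ((p ^ 2 + 2) * lin p Q) := by ring
    _ ≤ lin p G * (3 * rcl p Q) := Nat.mul_le_mul_left _ h1
    _ = 3 * (lin p G * rcl p Q) := by ring
    _ ≤ 3 * (rcl p G * lin p Q) := Nat.mul_le_mul_left _ h2
    _ = _ := by ring

/-- The average degree is at least `3p² / (p² + 2)` when `G` is not `p`-nilpotent: with a character of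
degree three in play, all nonlinear degrees are at least `3` and `deg_three_case` applies; otherwise
they are at least `5` and `claimC` applies. -/
lemma acd_bound (hp : p.Prime) (hp5 : 5 ≤ p) (hp3 : p % 3 = 2) (hodd : Odd (Nat.card G))
    (hG : ¬ HasNormalPComplement G p) : (3 * (p : ℝ) ^ 2) / ((p : ℝ) ^ 2 + 2) ≤ acdK G (Qzeta p) := by
  classical
  haveI := Fact.mk hp
  have hp2 : p ≠ 2 := by omega
  haveI : Finite (IrrK G (Qzeta p)) := (Set.toFinite (Irr G)).subset (fun _ h => h.1)
  haveI := Fintype.ofFinite (IrrK G (Qzeta p))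
  have hr := card_irrK (G := G) hp hp2 hodd
  have hl := card_lin (G := G) hp hp2 hodd
  have hlpos : 0 < lin p G := lin_pos
  have hle : lin p G ≤ rcl p G := by rw [← hl, ← hr]; exact Finite.card_subtype_le _
  have hsum : acdK G (Qzeta p) = (∑ χ : IrrK G (Qzeta p), (χ.1 1).re) / rcl p G := by
    rw [acdK, hr, finsum_mem_eq_toFinset_sum]
    congr 1
    exact Finset.sum_subtype _ (fun _ => Set.mem_toFinset) _
  rw [hsum, div_le_div_iff₀ (by positivity) (by exact_mod_cast hlpos.trans_le hle)]
  set q : ℝ := (p : ℝ) ^ 2 with hq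
  have hq25 : 25 ≤ q := by
    have : (5 : ℝ) ≤ p := by exact_mod_cast hp5
    nlinarith
  have key : ∀ c : ℝ, (∀ χ : IrrK G (Qzeta p), χ.1 1 ≠ 1 → c ≤ (χ.1 1).re) →
      lin p G + c * (rcl p G - lin p G) ≤ ∑ χ : IrrK G (Qzeta p), (χ.1 1).re := by
    intro c hc
    have h1 : ∑ χ : IrrK G (Qzeta p), (if χ.1 1 = 1 then (1 : ℝ) else c) ≤
        ∑ χ : IrrK G (Qzeta p), (χ.1 1).re := by
      refine Finset.sum_le_sum fun χ _ => ?_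
      split_ifs with h
      · rw [h]; simp
      · exact hc χ h
    refine le_trans (le_of_eq ?_) h1
    have h2 : ∀ χ : IrrK G (Qzeta p), (if χ.1 1 = 1 then (1 : ℝ) else c) =
        c + (if χ.1 1 = 1 then (1 - c) else 0) := fun χ => by split_ifs <;> ring
    simp_rw [h2]
    rw [Finset.sum_add_distrib, ← Finset.sum_filter, Finset.sum_const, Finset.sum_const,
      ← Fintype.card_subtype, Finset.card_univ, ← Nat.card_eq_fintype_card, ← Nat.card_eq_fintype_card,
      hr, hl, nsmul_eq_mul, nsmul_eq_mul]
    ring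
  have hlR : (0 : ℝ) < lin p G := by exact_mod_cast hlpos
  by_cases h3 : ∃ χ ∈ IrrK G (Qzeta p), χ 1 = 3
  · obtain ⟨χ, hχ, hχ3⟩ := h3
    have h4 := deg_three_case hp hp5 hp3 hodd hχ hχ3
    have h5 : (q + 2) * (lin p G : ℝ) ≤ 3 * rcl p G := by rw [hq]; exact_mod_cast h4
    have h6 := key 3 fun ψ hψ => by
      obtain ⟨d, hd, e⟩ := irr_deg hodd ψ.2.1
      rw [e] at hψ ⊢
      have : d ≠ 1 := by rintro rfl; simp at hψ
      have : 3 ≤ d := by obtain ⟨k, rfl⟩ := hd; omega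
      simpa using this
    nlinarith
  · have h4 := claimC hp2 (fun G Q _ _ _ _ f hf hG => by
      haveI := Fintype.ofFinite G
      haveI := Fintype.ofFinite Q
      exact ratio hp hp2 Q f hf hG) _ G rfl hodd hG
    have h5 : 2 * (lin p G : ℝ) ≤ rcl p G := by exact_mod_cast h4
    have h6 := key 5 fun ψ hψ => by
      obtain ⟨d, hd, e⟩ := irr_deg hodd ψ.2.1
      have h3' : d ≠ 3 := fun h => h3 ⟨ψ.1, ψ.2, by rw [e, h]; norm_num⟩
      rw [e] at hψ ⊢
      have : d ≠ 1 := by rintro rfl; simp at hψ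
      have : 5 ≤ d := by obtain ⟨k, rfl⟩ := hd; omega
      simpa using this
    nlinarith
end
end Acd

theorem average_degree_Qp_p_nilpotent_two_mod_three_odd
    (G : Type) [Group G] [Fintype G] (hG : Odd (Nat.card G))
    (p : ℕ) (hp : p.Prime) (hpodd : Odd p) (hmod : p % 3 = 2)
    (hodd2 : Odd ((p - 1) / 2))
    (h : acdK G (Qzeta p) < 3 * (p : ℝ) ^ 2 / ((p : ℝ) ^ 2 + 2)) :
    HasNormalPComplement G p := by
  by_contra hcon
  -- an odd prime congruent to `2` modulo `3` is at least `5`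
  have hp5 : 5 ≤ p := by obtain ⟨k, rfl⟩ := hpodd; omega
  exact absurd (Acd.acd_bound hp hp5 hmod hG hcon) (not_le.2 h)
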